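/- arXiv:1006.0673 — 8 statements merged into one kernel-verified Lean document; each statement's English description precedes it below -/
import Mathlib

section
/- Let G = (S, A₁, A₂, δ, obs₁, obs₂) be a concurrent game of partial observation, let φ ⊆ S^ω be a measurable objective, and let (Ḡ, φ̄) be the interaction-separation reduction of (G, φ). Then for every state s ∈ S: player 1 has an observation-based almost-sure winning strategy for φ from s in G if and only if player 1 has an observation-based almost-sure winning strategy for φ̄ from s in Ḡ; and player 1 has an observation-based positive winning strategy for φ from s in G if and only if player 1 has an observation-based positive winning strategy for φ̄ from s in Ḡ. -/
open MeasureTheory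
open scoped ENNReal

namespace Stmt0

variable {S A₁ A₂ O₁ O₂ : Type}

/-- The cylinder set of infinite plays extending the finite prefix `l`. -/
def Cyl (l : List S) : Set (ℕ → S) := {ρ | ∀ i : Fin l.length, ρ i.1 = l.get i}

/-- Probability of observing the successive states `rest` after the history `hist ++ [cur]`,
when the players draw their actions independently according to `σ` and `π`, and successor
states are drawn according to `δ`. -/
noncomputable def listProb [Fintype A₁] [Fintype A₂] (δ : S → A₁ → A₂ → PMF S)
    (σ : List S → PMF A₁) (π : List S → PMF A₂) :
    List S → S → List S → ℝ≥0∞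
  | _, _, [] => 1
  | hist, cur, s' :: rest =>
      (∑' a, ∑' b, σ (hist ++ [cur]) a * π (hist ++ [cur]) b * δ cur a b s') *
        listProb δ σ π (hist ++ [cur]) s' rest

/-- `Pr` is the family of Ionescu–Tulcea play measures of the concurrent game `δ`:
`Pr s σ π` is a probability measure on `S^ω` (product σ-algebra, `S` discrete) and the
probability of each cylinder is the product of one-step transition probabilities. -/
def IsPlayMeasure [Fintype A₁] [Fintype A₂] [MeasurableSpace S] (δ : S → A₁ → A₂ → PMF S)
    (Pr : S → (List S → PMF A₁) → (List S → PMF A₂) → Measure (ℕ → S)) : Prop :=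
  (∀ s σ π, IsProbabilityMeasure (Pr s σ π)) ∧
    ∀ s σ π (l : List S), Pr s σ π (Cyl (s :: l)) = listProb δ σ π [] s l

/-- An observation-based strategy only depends on the observation sequence. -/
def ObsBased {A O : Type} (obs : S → O) (σ : List S → PMF A) : Prop :=
  ∀ h h' : List S, h.map obs = h'.map obs → σ h = σ h'

/-- The state space of the interaction-separation reduction: `S ⊔ (S × A₁ × A₂)`. -/
abbrev BarS (S A₁ A₂ : Type) : Type := S ⊕ S × A₁ × A₂

/-- Transition function of the interaction-separation reduction: from `s ∈ S` the action
pair `(a₁, a₂)` leads deterministically to `(s, a₁, a₂)`, and from `(s, a₁, a₂)`, for every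
action pair, the successor is drawn in `S` according to `δ s a₁ a₂`. -/
noncomputable def barδ (δ : S → A₁ → A₂ → PMF S) :
    BarS S A₁ A₂ → A₁ → A₂ → PMF (BarS S A₁ A₂)
  | Sum.inl s, a₁, a₂ => PMF.pure (Sum.inr (s, a₁, a₂))
  | Sum.inr (s, a₁, a₂), _, _ => (δ s a₁ a₂).map Sum.inl

/-- Observations in the reduced game: `(s, a₁, a₂)` is observed like `s`. -/
def barObs {O : Type} (obs : S → O) : BarS S A₁ A₂ → O
  | Sum.inl s => obs s
  | Sum.inr (s, _, _) => obs s

/-- Projection of reduced states to original states. -/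
def unbar : BarS S A₁ A₂ → S
  | Sum.inl s => s
  | Sum.inr (s, _, _) => s

/-- The reduced objective `φ̄`: plays alternating between `S` (at even positions) and
`S × A₁ × A₂` (at odd positions) whose even subsequence belongs to `φ`. -/
def barφ (φ : Set (ℕ → S)) : Set (ℕ → BarS S A₁ A₂) :=
  {ρ | (∀ n, ∃ s, ρ (2 * n) = Sum.inl s) ∧ (∀ n, ∃ p, ρ (2 * n + 1) = Sum.inr p) ∧
    (fun n => unbar (ρ (2 * n))) ∈ φ}

/-! Along a play of the reduced game that alternates between `S` and `S × A₁ × A₂`, an even-length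
history is a list of triples `(s, a₁, a₂)`, and after such a history two steps of the reduced game
multiply the probability of a cylinder by `σ(a₁) π(a₂) δ(s, a₁, a₂)(t)`. Summing over the actions
gives one step of the original game, so the even subsequence of the reduced play is distributed as
the original play whenever the strategies of the two games agree along such histories. Almost every
reduced play alternates, hence `φ̄` and `φ` have equal probabilities. Observation-based strategies
transfer in both directions because the observations of a reduced history are those of the
original one with every letter repeated. -/

section Cylinders

theorem mem_Cyl {l : List S} {ρ : ℕ → S} : ρ ∈ Cyl l ↔ ∀ i x, l[i]? = some x → ρ i = x := by
  simp [Cyl, Fin.forall_iff, List.getElem?_eq_some_iff]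

theorem Cyl_nil : Cyl ([] : List S) = Set.univ := by
  ext; simp [mem_Cyl]

theorem mem_Cyl_cons {c : S} {l : List S} {ρ : ℕ → S} :
    ρ ∈ Cyl (c :: l) ↔ ρ 0 = c ∧ (fun n => ρ (n + 1)) ∈ Cyl l := by
  simp only [mem_Cyl]
  constructor
  · exact fun h => ⟨h 0 c rfl, fun i x hx => h (i + 1) x hx⟩
  · rintro ⟨h0, h⟩ (_ | i) x hx
    · simpa using h0.trans (by simpa using hx)
    · exact h i x hx

theorem mem_Cyl_append_singleton {l : List S} {x : S} {ρ : ℕ → S} :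
    ρ ∈ Cyl (l ++ [x]) ↔ ρ ∈ Cyl l ∧ ρ l.length = x := by
  induction l generalizing ρ with
  | nil => simp [mem_Cyl_cons, Cyl_nil]
  | cons c l ih => simp [mem_Cyl_cons, ih, and_assoc]

theorem mem_Cyl_map_range (ρ : ℕ → S) (n : ℕ) : ρ ∈ Cyl ((List.range n).map ρ) := by
  simp [mem_Cyl, List.getElem?_eq_some_iff]

theorem Cyl_subset_Cyl_of_length_le {l l' : List S} {ρ : ℕ → S} (hl : ρ ∈ Cyl l)
    (hl' : ρ ∈ Cyl l') (hlen : l.length ≤ l'.length) : Cyl l' ⊆ Cyl l := by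
  intro τ hτ
  rw [mem_Cyl] at *
  intro i x hx
  have hi : i < l'.length := (List.getElem?_eq_some_iff.1 hx).1.trans_le hlen
  have hx' : l'[i]? = some l'[i] := List.getElem?_eq_getElem hi
  rw [hτ i _ hx', ← hl' i _ hx', hl i x hx]

theorem isPiSystem_range_Cyl : IsPiSystem (Set.range (Cyl : List S → Set (ℕ → S))) := by
  rintro _ ⟨l, rfl⟩ _ ⟨l', rfl⟩ ⟨ρ, hl, hl'⟩
  rcases le_total l.length l'.length with hlen | hlen
  · exact ⟨l', (Set.inter_eq_right.2 (Cyl_subset_Cyl_of_length_le hl hl' hlen)).symm⟩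
  · exact ⟨l, (Set.inter_eq_left.2 (Cyl_subset_Cyl_of_length_le hl' hl hlen)).symm⟩

variable [MeasurableSpace S] [DiscreteMeasurableSpace S]

theorem measurableSet_Cyl (l : List S) : MeasurableSet (Cyl l) := by
  have hCyl : Cyl l = ⋂ i : Fin l.length, (fun ρ : ℕ → S => ρ i) ⁻¹' {l.get i} := by
    ext ρ; simp [Cyl]
  rw [hCyl]
  exact MeasurableSet.iInter fun i => measurable_pi_apply _ MeasurableSet.of_discrete

theorem generateFrom_range_Cyl [Countable S] :
    MeasurableSpace.generateFrom (Set.range Cyl) =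
      (MeasurableSpace.pi : MeasurableSpace (ℕ → S)) := by
  apply le_antisymm
  · apply MeasurableSpace.generateFrom_le
    rintro _ ⟨l, rfl⟩
    exact measurableSet_Cyl l
  · refine iSup_le fun n => ?_
    rintro _ ⟨B, -, rfl⟩
    have hB : (fun ρ : ℕ → S => ρ n) ⁻¹' B = ⋃ l ∈ {l | Cyl l ⊆ (fun ρ => ρ n) ⁻¹' B}, Cyl l := by
      refine subset_antisymm (fun ρ hρ => ?_) (Set.iUnion₂_subset fun l hl => hl)
      refine Set.mem_biUnion (x := (List.range (n + 1)).map ρ) (fun τ hτ => ?_)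
        (mem_Cyl_map_range ρ _)
      have hτn : τ n = ρ n := mem_Cyl.1 hτ n _ (by simp)
      rwa [Set.mem_preimage, hτn]
    rw [hB]
    exact MeasurableSet.biUnion (Set.to_countable _) fun l _ =>
      MeasurableSpace.measurableSet_generateFrom ⟨l, rfl⟩

theorem measure_ext_of_Cyl [Countable S] {μ ν : Measure (ℕ → S)} [IsFiniteMeasure μ]
    (h : ∀ l, μ (Cyl l) = ν (Cyl l)) : μ = ν := by
  refine ext_of_generate_finite _ generateFrom_range_Cyl.symm isPiSystem_range_Cyl ?_ ?_
  · rintro _ ⟨l, rfl⟩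
    exact h l
  · simpa only [Cyl_nil] using h []

theorem ae_mem_of_measure_Cyl_eq_one {μ : Measure (ℕ → S)} [IsProbabilityMeasure μ] {l : List S}
    (h : μ (Cyl l) = 1) : ∀ᵐ ρ ∂μ, ρ ∈ Cyl l :=
  (mem_ae_iff_prob_eq_one (measurableSet_Cyl l)).2 h

theorem measure_Cyl_cons_of_ne {μ : Measure (ℕ → S)} [IsProbabilityMeasure μ] {s c : S}
    (h : μ (Cyl [s]) = 1) (hc : c ≠ s) (l : List S) : μ (Cyl (c :: l)) = 0 := by
  rw [measure_eq_zero_iff_ae_notMem]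
  filter_upwards [ae_mem_of_measure_Cyl_eq_one h] with ρ hs hcl
  exact hc ((mem_Cyl_cons.1 hcl).1.symm.trans (mem_Cyl_cons.1 hs).1)

end Cylinders

section PlayMeasure

/-- The probability that the play moves from `c` to `t` when both players choose their actions
after the history `h`, whose last state is meant to be `c`. -/
noncomputable def stepProb (δ : S → A₁ → A₂ → PMF S) (σ : List S → PMF A₁) (π : List S → PMF A₂)
    (h : List S) (c t : S) : ℝ≥0∞ :=
  ∑' a, ∑' b, σ h a * π h b * δ c a b t

variable [Fintype A₁] [Fintype A₂]

theorem listProb_nil (δ : S → A₁ → A₂ → PMF S) (σ : List S → PMF A₁) (π : List S → PMF A₂)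
    (hist : List S) (c : S) : listProb δ σ π hist c [] = 1 :=
  rfl

theorem listProb_cons (δ : S → A₁ → A₂ → PMF S) (σ : List S → PMF A₁) (π : List S → PMF A₂)
    (hist : List S) (c t : S) (l : List S) :
    listProb δ σ π hist c (t :: l) =
      stepProb δ σ π (hist ++ [c]) c t * listProb δ σ π (hist ++ [c]) t l :=
  rfl

theorem listProb_append_pair (δ : S → A₁ → A₂ → PMF S) (σ : List S → PMF A₁)
    (π : List S → PMF A₂) (hist : List S) (c : S) (l : List S) (x t : S) :
    listProb δ σ π hist c (l ++ [x, t]) =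
      listProb δ σ π hist c (l ++ [x]) * stepProb δ σ π (hist ++ c :: (l ++ [x])) x t := by
  induction l generalizing hist c with
  | nil => simp [listProb_cons, listProb_nil]
  | cons d l ih => simp [listProb_cons, ih, mul_assoc]

namespace IsPlayMeasure

variable [MeasurableSpace S] {δ : S → A₁ → A₂ → PMF S}
  {Pr : S → (List S → PMF A₁) → (List S → PMF A₂) → Measure (ℕ → S)}

theorem measure_Cyl_singleton (hPr : IsPlayMeasure δ Pr) (s : S) (σ π) :
    Pr s σ π (Cyl [s]) = 1 :=
  hPr.2 s σ π []

variable [DiscreteMeasurableSpace S]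

theorem ae_start (hPr : IsPlayMeasure δ Pr) (s : S) (σ π) : ∀ᵐ ρ ∂Pr s σ π, ρ 0 = s := by
  have := hPr.1 s σ π
  filter_upwards [ae_mem_of_measure_Cyl_eq_one (hPr.measure_Cyl_singleton s σ π)] with ρ hρ
  exact (mem_Cyl_cons.1 hρ).1

theorem eq_of_measure_Cyl [Countable S] (hPr : IsPlayMeasure δ Pr) {s : S} {σ π}
    {ν : Measure (ℕ → S)} [IsProbabilityMeasure ν]
    (hν : ∀ l, ν (Cyl (s :: l)) = listProb δ σ π [] s l) : ν = Pr s σ π := by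
  have := hPr.1 s σ π
  refine measure_ext_of_Cyl fun l => ?_
  rcases l with _ | ⟨c, l⟩
  · simp [Cyl_nil]
  · by_cases hc : c = s
    · rw [hc, hν, hPr.2]
    · rw [measure_Cyl_cons_of_ne (hν []) hc,
        measure_Cyl_cons_of_ne (hPr.measure_Cyl_singleton s σ π) hc]

theorem measure_Cyl_append_pair (hPr : IsPlayMeasure δ Pr) (s : S) (σ π) (h : List S) (x t : S) :
    Pr s σ π (Cyl (h ++ [x, t])) =
      Pr s σ π (Cyl (h ++ [x])) * stepProb δ σ π (h ++ [x]) x t := by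
  have := hPr.1 s σ π
  have hzero {c : S} (hc : c ≠ s) (l : List S) : Pr s σ π (Cyl (c :: l)) = 0 :=
    measure_Cyl_cons_of_ne (hPr.measure_Cyl_singleton s σ π) hc l
  rcases h with _ | ⟨c, h⟩
  · by_cases hx : x = s
    · subst hx
      simp [hPr.2, listProb_cons, listProb_nil]
    · simp [hzero hx]
  · by_cases hc : c = s
    · subst hc
      simp [hPr.2, listProb_append_pair]
    · simp [hzero hc]

theorem ae_stepProb_ne_zero [Countable S] (hPr : IsPlayMeasure δ Pr) (s : S) (σ π) :
    ∀ᵐ ρ ∂Pr s σ π, ∀ n,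
      stepProb δ σ π ((List.range (n + 1)).map ρ) (ρ n) (ρ (n + 1)) ≠ 0 := by
  have hpos : ∀ᵐ ρ ∂Pr s σ π, ∀ l : List S, Pr s σ π (Cyl l) = 0 → ρ ∉ Cyl l :=
    ae_all_iff.2 fun l => Filter.eventually_imp_distrib_left.2 measure_eq_zero_iff_ae_notMem.1
  filter_upwards [hpos] with ρ hρ n hstep
  refine hρ ((List.range (n + 2)).map ρ) ?_ (mem_Cyl_map_range ρ _)
  have hsplit : (List.range (n + 2)).map ρ = (List.range n).map ρ ++ [ρ n, ρ (n + 1)] := by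
    simp [List.range_succ]
  rw [hsplit, hPr.measure_Cyl_append_pair]
  simpa [List.range_succ] using Or.inr hstep

end IsPlayMeasure

end PlayMeasure

section Histories

variable {α β : Type}

/-- The entries of a list at even positions; they carry the original history contained in an
alternating history of the reduced game. -/
def evens : List α → List α
  | [] => []
  | [x] => [x]
  | x :: _ :: l => x :: evens l

theorem getElem?_evens (l : List α) (i : ℕ) : (evens l)[i]? = l[2 * i]? := by
  induction l using evens.induct generalizing i with
  | case1 => rfl
  | case2 x => cases i <;> simp [evens, mul_add]
  | case3 x y l ih => cases i <;> simp [evens, mul_add, ih]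

theorem map_evens (f : α → β) (l : List α) : (evens l).map f = evens (l.map f) := by
  ext1 i
  simp [getElem?_evens]

/-- The list in which every entry is repeated once; observations of a reduced history arise in this
way from those of the original history. -/
def stutter (l : List α) : List α :=
  l.flatMap fun x => [x, x]

theorem map_stutter (f : α → β) (l : List α) : (stutter l).map f = stutter (l.map f) := by
  simp [stutter, List.map_flatMap, List.flatMap_map]

theorem dropLast_stutter_append_singleton (l : List α) (x : α) :
    (stutter (l ++ [x])).dropLast = stutter l ++ [x] := by
  simp [stutter, List.dropLast_append_of_ne_nil]

theorem evens_stutter_append (l r : List α) : evens (stutter l ++ r) = l ++ evens r := by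
  induction l with
  | nil => rfl
  | cons x l ih => simpa [stutter, evens] using ih

/-- The even-length history of the reduced game in which the states and actions listed in `w`
occur in turn. -/
def interleave (w : List (S × A₁ × A₂)) : List (BarS S A₁ A₂) :=
  w.flatMap fun p => [Sum.inl p.1, Sum.inr p]

theorem interleave_append_singleton (w : List (S × A₁ × A₂)) (p : S × A₁ × A₂) :
    interleave (w ++ [p]) = interleave w ++ [Sum.inl p.1] ++ [Sum.inr p] := by
  simp [interleave]

theorem length_interleave (w : List (S × A₁ × A₂)) : (interleave w).length = 2 * w.length := by
  simp [interleave, mul_comm]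

theorem map_unbar_interleave (w : List (S × A₁ × A₂)) :
    (interleave w).map unbar = stutter (w.map Prod.fst) := by
  simp [interleave, stutter, List.map_flatMap, List.flatMap_map, unbar]

theorem evens_map_unbar_interleave_append (w : List (S × A₁ × A₂)) (c : S) :
    evens ((interleave w ++ [Sum.inl c]).map unbar) = w.map Prod.fst ++ [c] := by
  rw [List.map_append, map_unbar_interleave, evens_stutter_append]
  rfl

end Histories

section Strategies

variable {A O : Type} {obs : S → O}

theorem barObs_eq_comp (obs : S → O) : barObs (A₁ := A₁) (A₂ := A₂) obs = obs ∘ unbar := by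
  funext x
  rcases x with _ | _ <;> rfl

/-- A strategy `σ'` of the reduced game simulates `σ` if it chooses like `σ` at every
odd-length alternating history, that is, whenever the choice of an action matters. -/
def Simulates (σ' : List (BarS S A₁ A₂) → PMF A) (σ : List S → PMF A) : Prop :=
  ∀ w c, σ' (interleave w ++ [Sum.inl c]) = σ (w.map Prod.fst ++ [c])

/-- The strategy of the reduced game that plays `σ` on the states at even positions. -/
noncomputable def liftStrategy (σ : List S → PMF A) (h : List (BarS S A₁ A₂)) : PMF A :=
  σ (evens (h.map unbar))

/-- The strategy of the original game induced by a strategy of the reduced game. The states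
`(s, a₁, a₂)` of the reduced history are replaced by `s`, which is observed in the same way. -/
noncomputable def restrictStrategy (σ' : List (BarS S A₁ A₂) → PMF A) (h : List S) : PMF A :=
  σ' ((stutter h).dropLast.map Sum.inl)

theorem simulates_liftStrategy (σ : List S → PMF A) :
    Simulates (A₁ := A₁) (A₂ := A₂) (liftStrategy σ) σ := fun w c => by
  rw [liftStrategy, evens_map_unbar_interleave_append]

namespace ObsBased

theorem liftStrategy {σ : List S → PMF A} (hσ : ObsBased obs σ) :
    ObsBased (barObs (A₁ := A₁) (A₂ := A₂) obs) (liftStrategy σ) := by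
  intro h h' hobs
  apply hσ
  rw [barObs_eq_comp, ← List.map_map, ← List.map_map] at hobs
  rw [map_evens, map_evens, hobs]

variable {σ' : List (BarS S A₁ A₂) → PMF A}

theorem simulates_restrictStrategy (hσ' : ObsBased (barObs obs) σ') :
    Simulates σ' (restrictStrategy σ') := by
  intro w c
  apply hσ'
  rw [dropLast_stutter_append_singleton, ← map_unbar_interleave, barObs_eq_comp]
  simp [unbar, Function.comp_def]

theorem restrictStrategy (hσ' : ObsBased (barObs obs) σ') :
    ObsBased obs (restrictStrategy σ') := by
  intro h h' hobs
  have hmap (l : List S) : ((stutter l).dropLast.map (Sum.inl : S → BarS S A₁ A₂)).map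
      (barObs obs) = (stutter (l.map obs)).dropLast := by
    rw [← map_stutter, ← List.map_dropLast, List.map_map]
    rfl
  exact hσ' _ _ (by rw [hmap, hmap, hobs])

end ObsBased

end Strategies

section Steps

variable (δ : S → A₁ → A₂ → PMF S) (σ : List (BarS S A₁ A₂) → PMF A₁)
  (π : List (BarS S A₁ A₂) → PMF A₂) (h : List (BarS S A₁ A₂))

theorem stepProb_barδ_inl_inr (c : S) (a : A₁) (b : A₂) :
    stepProb (barδ δ) σ π h (Sum.inl c) (Sum.inr (c, a, b)) = σ h a * π h b := by
  rw [stepProb, tsum_eq_single a, tsum_eq_single b]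
  · simp [barδ]
  · intro b' hb'
    simp [barδ, hb'.symm]
  · intro a' ha'
    simp [barδ, ha'.symm]

theorem stepProb_barδ_inr_inl (p : S × A₁ × A₂) (t : S) :
    stepProb (barδ δ) σ π h (Sum.inr p) (Sum.inl t) = δ p.1 p.2.1 p.2.2 t := by
  have hmap (q : PMF S) : q.map (Sum.inl : S → BarS S A₁ A₂) (Sum.inl t) = q t := by
    rw [PMF.map_apply, tsum_eq_single t fun t' ht' => by simp [ht'.symm]]
    simp
  simp only [stepProb, barδ, hmap, ENNReal.tsum_mul_right, ENNReal.tsum_mul_left, PMF.tsum_coe,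
    mul_one, one_mul]

variable {δ σ π h}

theorem exists_eq_inr_of_stepProb_barδ_ne_zero {c : S} {y : BarS S A₁ A₂}
    (hy : stepProb (barδ δ) σ π h (Sum.inl c) y ≠ 0) : ∃ p : A₁ × A₂, y = Sum.inr (c, p) := by
  by_contra! hne
  exact hy (by simp [stepProb, barδ, hne])

theorem exists_eq_inl_of_stepProb_barδ_ne_zero {p : S × A₁ × A₂} {y : BarS S A₁ A₂}
    (hy : stepProb (barδ δ) σ π h (Sum.inr p) y ≠ 0) : ∃ t, y = Sum.inl t := by
  rcases y with t | q
  · exact ⟨t, rfl⟩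
  · exact absurd (by simp [stepProb, barδ, PMF.map_apply]) hy

end Steps

section Alternation

/-- The play of the original game read off the even positions of a reduced play. -/
def evenProj (ρ : ℕ → BarS S A₁ A₂) (n : ℕ) : S :=
  unbar (ρ (2 * n))

/-- A reduced play alternates if every even position carries a state `c ∈ S` and the next one some
triple `(c, a₁, a₂)`. -/
def Alternating (ρ : ℕ → BarS S A₁ A₂) : Prop :=
  ∀ n, ρ (2 * n) = Sum.inl (evenProj ρ n) ∧
    ∃ p : A₁ × A₂, ρ (2 * n + 1) = Sum.inr (evenProj ρ n, p)

theorem evenProj_mem_Cyl {ρ : ℕ → BarS S A₁ A₂} {l : List (BarS S A₁ A₂)} (hρ : ρ ∈ Cyl l) :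
    evenProj ρ ∈ Cyl (evens (l.map unbar)) := by
  rw [mem_Cyl] at *
  intro i x hx
  rw [getElem?_evens, List.getElem?_map, Option.map_eq_some_iff] at hx
  obtain ⟨y, hy, rfl⟩ := hx
  rw [evenProj, hρ _ y hy]

theorem Alternating.mem_barφ_iff {ρ : ℕ → BarS S A₁ A₂} (hρ : Alternating ρ) (φ : Set (ℕ → S)) :
    ρ ∈ barφ φ ↔ evenProj ρ ∈ φ :=
  ⟨fun h => h.2.2, fun h => ⟨fun n => ⟨_, (hρ n).1⟩, fun n => (hρ n).2.imp' _ fun _ => id, h⟩⟩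

theorem Alternating.exists_mem_Cyl_iff {ρ : ℕ → BarS S A₁ A₂} (hρ : Alternating ρ)
    (w : List (S × A₁ × A₂)) (c t : S) :
    (∃ p, ρ ∈ Cyl (interleave (w ++ [(c, p)]) ++ [Sum.inl t])) ↔
      ρ ∈ Cyl (interleave w ++ [Sum.inl c]) ∧ evenProj ρ (w.length + 1) = t := by
  obtain ⟨heven, p, hodd⟩ := hρ w.length
  have hnext := (hρ (w.length + 1)).1
  simp only [interleave_append_singleton, mem_Cyl_append_singleton, List.length_append,
    List.length_singleton, length_interleave]
  rw [mul_add, mul_one] at hnext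
  simp only [heven, hodd, add_assoc, Nat.reduceAdd, hnext, Sum.inl.injEq, Sum.inr.injEq,
    Prod.mk.injEq]
  constructor
  · rintro ⟨_, ⟨⟨hw, hc⟩, -⟩, ht⟩
    exact ⟨⟨hw, hc⟩, ht⟩
  · rintro ⟨⟨hw, hc⟩, ht⟩
    exact ⟨p, ⟨⟨hw, hc⟩, hc, rfl⟩, ht⟩

theorem pairwise_disjoint_Cyl_interleave (w : List (S × A₁ × A₂)) (c t : S) :
    Pairwise (Function.onFun Disjoint fun p : A₁ × A₂ =>
      Cyl (interleave (w ++ [(c, p)]) ++ [Sum.inl t])) := by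
  intro p q hpq
  refine Set.disjoint_left.2 fun ρ hp hq => hpq ?_
  simp only [interleave_append_singleton, mem_Cyl_append_singleton] at hp hq
  simpa using hp.1.2.symm.trans hq.1.2

end Alternation

section Reduction

variable [MeasurableSpace (BarS S A₁ A₂)] [DiscreteMeasurableSpace (BarS S A₁ A₂)]

theorem measurable_evenProj [MeasurableSpace S] :
    Measurable (evenProj : (ℕ → BarS S A₁ A₂) → ℕ → S) :=
  measurable_pi_lambda _ fun n => Measurable.of_discrete.comp (measurable_pi_apply (2 * n))

variable [Fintype A₁] [Fintype A₂] {δ : S → A₁ → A₂ → PMF S}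
  {PrB : BarS S A₁ A₂ → (List (BarS S A₁ A₂) → PMF A₁) → (List (BarS S A₁ A₂) → PMF A₂) →
    Measure (ℕ → BarS S A₁ A₂)}
  {σ : List S → PMF A₁} {π : List S → PMF A₂}
  {σ' : List (BarS S A₁ A₂) → PMF A₁} {π' : List (BarS S A₁ A₂) → PMF A₂}

theorem IsPlayMeasure.measure_Cyl_interleave_append (hPrB : IsPlayMeasure (barδ δ) PrB)
    (hσ : Simulates σ' σ) (hπ : Simulates π' π) (x : BarS S A₁ A₂) (w : List (S × A₁ × A₂))
    (c : S) (p : A₁ × A₂) (t : S) :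
    PrB x σ' π' (Cyl (interleave (w ++ [(c, p)]) ++ [Sum.inl t])) =
      PrB x σ' π' (Cyl (interleave w ++ [Sum.inl c])) *
        (σ (w.map Prod.fst ++ [c]) p.1 * π (w.map Prod.fst ++ [c]) p.2 * δ c p.1 p.2 t) := by
  have htriple : interleave (w ++ [(c, p)]) ++ [Sum.inl t] =
      interleave w ++ [Sum.inl c] ++ [Sum.inr (c, p), Sum.inl t] := by
    simp [interleave_append_singleton]
  have hpair : interleave w ++ [Sum.inl c] ++ [Sum.inr (c, p)] =
      interleave w ++ [Sum.inl c, Sum.inr (c, p)] := by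
    simp
  rw [htriple, hPrB.measure_Cyl_append_pair, stepProb_barδ_inr_inl, hpair,
    hPrB.measure_Cyl_append_pair, stepProb_barδ_inl_inr, hσ, hπ, mul_assoc]

variable [Countable S]

theorem IsPlayMeasure.ae_alternating (hPrB : IsPlayMeasure (barδ δ) PrB) (s : S) (σ' π') :
    ∀ᵐ ρ ∂PrB (Sum.inl s) σ' π', Alternating ρ := by
  filter_upwards [hPrB.ae_start (Sum.inl s) σ' π', hPrB.ae_stepProb_ne_zero (Sum.inl s) σ' π']
    with ρ hstart hstep
  have hodd (n : ℕ) (c : S) (hc : ρ (2 * n) = Sum.inl c) :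
      ∃ p : A₁ × A₂, ρ (2 * n + 1) = Sum.inr (c, p) :=
    exists_eq_inr_of_stepProb_barδ_ne_zero (hc ▸ hstep (2 * n))
  have heven (n : ℕ) : ∃ c, ρ (2 * n) = Sum.inl c := by
    induction n with
    | zero => exact ⟨s, hstart⟩
    | succ n ih =>
      obtain ⟨c, hc⟩ := ih
      obtain ⟨p, hp⟩ := hodd n c hc
      exact exists_eq_inl_of_stepProb_barδ_ne_zero (hp ▸ hstep (2 * n + 1))
  intro n
  obtain ⟨c, hc⟩ := heven n
  have hproj : evenProj ρ n = c := by rw [evenProj, hc, unbar]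
  rw [hproj]
  exact ⟨hc, hodd n c hc⟩

theorem IsPlayMeasure.measure_Cyl_interleave_inter_eq_tsum (hPrB : IsPlayMeasure (barδ δ) PrB)
    (s : S) (w : List (S × A₁ × A₂)) (c t : S) {E : Set (ℕ → BarS S A₁ A₂)}
    (hE : MeasurableSet E) (hEt : ∀ ρ ∈ E, evenProj ρ (w.length + 1) = t) :
    PrB (Sum.inl s) σ' π' (Cyl (interleave w ++ [Sum.inl c]) ∩ E) =
      ∑' p, PrB (Sum.inl s) σ' π' (Cyl (interleave (w ++ [(c, p)]) ++ [Sum.inl t]) ∩ E) := by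
  rw [← measure_iUnion
    (fun p q hpq => (pairwise_disjoint_Cyl_interleave w c t hpq).mono Set.inter_subset_left
      Set.inter_subset_left)
    fun p => (measurableSet_Cyl _).inter hE, ← Set.iUnion_inter]
  apply measure_congr
  filter_upwards [hPrB.ae_alternating s σ' π'] with ρ hρ
  refine propext (and_congr_left fun hρE => ?_)
  refine Iff.trans ?_ Set.mem_iUnion.symm
  rw [hρ.exists_mem_Cyl_iff, and_iff_left (hEt ρ hρE)]

theorem IsPlayMeasure.measure_Cyl_interleave_inter_preimage [MeasurableSpace S]
    [DiscreteMeasurableSpace S] (hPrB : IsPlayMeasure (barδ δ) PrB)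
    (hσ : Simulates σ' σ) (hπ : Simulates π' π) (s : S) (w : List (S × A₁ × A₂)) (c : S)
    (l : List S) :
    PrB (Sum.inl s) σ' π' (Cyl (interleave w ++ [Sum.inl c]) ∩
        evenProj ⁻¹' Cyl (w.map Prod.fst ++ c :: l)) =
      PrB (Sum.inl s) σ' π' (Cyl (interleave w ++ [Sum.inl c])) *
        listProb δ σ π (w.map Prod.fst) c l := by
  induction l generalizing w c with
  | nil =>
    have hsub : Cyl (interleave w ++ [Sum.inl c]) ⊆ evenProj ⁻¹' Cyl (w.map Prod.fst ++ [c]) :=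
      fun ρ hρ => evens_map_unbar_interleave_append w c ▸ evenProj_mem_Cyl hρ
    rw [Set.inter_eq_left.2 hsub, listProb_nil, mul_one]
  | cons t l ih =>
    set h := w.map Prod.fst
    set μ := PrB (Sum.inl s) σ' π'
    have hE : MeasurableSet (evenProj ⁻¹' Cyl (h ++ c :: t :: l) : Set (ℕ → BarS S A₁ A₂)) :=
      measurable_evenProj (measurableSet_Cyl _)
    have hEt (ρ : ℕ → BarS S A₁ A₂) (hρ : evenProj ρ ∈ Cyl (h ++ c :: t :: l)) :
        evenProj ρ (w.length + 1) = t :=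
      mem_Cyl.1 hρ _ _ (by simp [h])
    have hterm (p : A₁ × A₂) :
        μ (Cyl (interleave (w ++ [(c, p)]) ++ [Sum.inl t]) ∩
          evenProj ⁻¹' Cyl (h ++ c :: t :: l)) =
        μ (Cyl (interleave w ++ [Sum.inl c])) *
          (σ (h ++ [c]) p.1 * π (h ++ [c]) p.2 * δ c p.1 p.2 t) *
          listProb δ σ π (h ++ [c]) t l := by
      rw [← hPrB.measure_Cyl_interleave_append hσ hπ]
      simpa [h] using ih (w ++ [(c, p)]) t
    rw [hPrB.measure_Cyl_interleave_inter_eq_tsum s w c t hE hEt, tsum_congr hterm,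
      ENNReal.tsum_mul_right, ENNReal.tsum_mul_left, mul_assoc, listProb_cons, stepProb,
      ENNReal.tsum_prod']

variable [MeasurableSpace S] [DiscreteMeasurableSpace S]
  {Pr : S → (List S → PMF A₁) → (List S → PMF A₂) → Measure (ℕ → S)}

theorem IsPlayMeasure.map_evenProj (hPrB : IsPlayMeasure (barδ δ) PrB)
    (hPr : IsPlayMeasure δ Pr) (hσ : Simulates σ' σ) (hπ : Simulates π' π) (s : S) :
    (PrB (Sum.inl s) σ' π').map evenProj = Pr s σ π := by
  have := hPrB.1 (Sum.inl s) σ' π'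
  have := Measure.isProbabilityMeasure_map (μ := PrB (Sum.inl s) σ' π')
    measurable_evenProj.aemeasurable
  refine hPr.eq_of_measure_Cyl fun l => ?_
  have hstart := hPrB.measure_Cyl_singleton (Sum.inl s) σ' π'
  have hinter := hPrB.measure_Cyl_interleave_inter_preimage hσ hπ s [] s l
  simp only [interleave, List.flatMap_nil, List.map_nil, List.nil_append, hstart, one_mul]
    at hinter
  rw [Measure.map_apply measurable_evenProj (measurableSet_Cyl _), ← hinter,
    Measure.measure_inter_eq_of_ae (ae_mem_of_measure_Cyl_eq_one hstart)]

theorem IsPlayMeasure.measure_barφ (hPrB : IsPlayMeasure (barδ δ) PrB)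
    (hPr : IsPlayMeasure δ Pr) (hσ : Simulates σ' σ) (hπ : Simulates π' π) (s : S)
    {φ : Set (ℕ → S)} (hφ : MeasurableSet φ) :
    PrB (Sum.inl s) σ' π' (barφ φ) = Pr s σ π φ := by
  rw [← hPrB.map_evenProj hPr hσ hπ, Measure.map_apply measurable_evenProj hφ]
  apply measure_congr
  filter_upwards [hPrB.ae_alternating s σ' π'] with ρ hρ
  exact propext (hρ.mem_barφ_iff φ)

end Reduction

theorem stmt_0_general {S A₁ A₂ O₁ O₂ : Type} [Countable S] [Fintype A₁] [Fintype A₂]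
    [MeasurableSpace S] [DiscreteMeasurableSpace S]
    [MeasurableSpace (BarS S A₁ A₂)] [DiscreteMeasurableSpace (BarS S A₁ A₂)]
    {δ : S → A₁ → A₂ → PMF S} (obs₁ : S → O₁) (obs₂ : S → O₂)
    {φ : Set (ℕ → S)} (hφ : MeasurableSet φ)
    {Pr : S → (List S → PMF A₁) → (List S → PMF A₂) → Measure (ℕ → S)}
    (hPr : IsPlayMeasure δ Pr)
    {PrB : BarS S A₁ A₂ → (List (BarS S A₁ A₂) → PMF A₁) → (List (BarS S A₁ A₂) → PMF A₂) →
      Measure (ℕ → BarS S A₁ A₂)}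
    (hPrB : IsPlayMeasure (barδ δ) PrB) (s : S) (P : ℝ≥0∞ → Prop) :
    (∃ σ, ObsBased obs₁ σ ∧ ∀ π, ObsBased obs₂ π → P (Pr s σ π φ)) ↔
      ∃ σ, ObsBased (barObs obs₁) σ ∧ ∀ π, ObsBased (barObs obs₂) π →
        P (PrB (Sum.inl s) σ π (barφ φ)) := by
  constructor
  · rintro ⟨σ, hσ, hwin⟩
    refine ⟨liftStrategy σ, hσ.liftStrategy, fun π' hπ' => ?_⟩
    rw [hPrB.measure_barφ hPr (simulates_liftStrategy σ) hπ'.simulates_restrictStrategy s hφ]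
    exact hwin _ hπ'.restrictStrategy
  · rintro ⟨σ', hσ', hwin⟩
    refine ⟨restrictStrategy σ', hσ'.restrictStrategy, fun π hπ => ?_⟩
    rw [← hPrB.measure_barφ hPr hσ'.simulates_restrictStrategy (simulates_liftStrategy π) s hφ]
    exact hwin _ hπ.liftStrategy

instance instDiscreteMeasurableSpaceSum {α β : Type*} [MeasurableSpace α]
    [DiscreteMeasurableSpace α] [MeasurableSpace β] [DiscreteMeasurableSpace β] :
    DiscreteMeasurableSpace (α ⊕ β) :=
  ⟨fun _ => measurableSet_sum_iff.2 ⟨.of_discrete, .of_discrete⟩⟩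

theorem stmt_0 {S A₁ A₂ O₁ O₂ : Type}
    [Fintype S] [Nonempty S] [Fintype A₁] [Nonempty A₁] [Fintype A₂] [Nonempty A₂]
    [Fintype O₁] [Fintype O₂]
    [MeasurableSpace S] [DiscreteMeasurableSpace S]
    [MeasurableSpace A₁] [DiscreteMeasurableSpace A₁]
    [MeasurableSpace A₂] [DiscreteMeasurableSpace A₂]
    (δ : S → A₁ → A₂ → PMF S) (obs₁ : S → O₁) (obs₂ : S → O₂)
    (φ : Set (ℕ → S)) (hφ : MeasurableSet φ)
    (Pr : S → (List S → PMF A₁) → (List S → PMF A₂) → Measure (ℕ → S))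
    (hPr : IsPlayMeasure δ Pr)
    (PrB : BarS S A₁ A₂ → (List (BarS S A₁ A₂) → PMF A₁) → (List (BarS S A₁ A₂) → PMF A₂) →
      Measure (ℕ → BarS S A₁ A₂))
    (hPrB : IsPlayMeasure (barδ δ) PrB)
    (s : S) :
    ((∃ σ, ObsBased obs₁ σ ∧ ∀ π, ObsBased obs₂ π → Pr s σ π φ = 1) ↔
      (∃ σ, ObsBased (barObs obs₁) σ ∧ ∀ π, ObsBased (barObs obs₂) π →
        PrB (Sum.inl s) σ π (barφ φ) = 1)) ∧
    ((∃ σ, ObsBased obs₁ σ ∧ ∀ π, ObsBased obs₂ π → 0 < Pr s σ π φ) ↔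
      (∃ σ, ObsBased (barObs obs₁) σ ∧ ∀ π, ObsBased (barObs obs₂) π →
        0 < PrB (Sum.inl s) σ π (barφ φ))) := by
  exact ⟨stmt_0_general obs₁ obs₂ hφ hPr hPrB s (· = 1),
    stmt_0_general obs₁ obs₂ hφ hPr hPrB s (0 < ·)⟩

end Stmt0
end

section
/- Let G = (S, A₁, A₂, δ, obs₁, obs₂) be a concurrent game of partial observation, let φ ⊆ S^ω be a measurable objective, and let (Ḡ, φ̄) be the interaction-separation reduction of (G, φ). Then for every state s ∈ S, val₁^G(φ)(s) = val₁^{Ḡ}(φ̄)(s); moreover player 1 has an observation-based optimal strategy for φ from s in G if and only if player 1 has an observation-based optimal strategy for φ̄ from s in Ḡ. -/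
open MeasureTheory
open scoped ENNReal

namespace Stmt1

variable {S A₁ A₂ O₁ O₂ : Type}

/-- The cylinder set of infinite plays extending the finite prefix `l`. -/
def Cyl (l : List S) : Set (ℕ → S) := {ρ | ∀ i : Fin l.length, ρ i.1 = l.get i}

/-- Probability of observing the successive states `rest` after the history `hist ++ [cur]`,
when the players draw their actions independently according to `σ` and `π`, and successor
states are drawn according to `δ`. -/
noncomputable def listProb [Fintype A₁] [Fintype A₂] (δ : S → A₁ → A₂ → PMF S)
    (σ : List S → PMF A₁) (π : List S → PMF A₂) :
    List S → S → List S → ℝ≥0∞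
  | _, _, [] => 1
  | hist, cur, s' :: rest =>
      (∑' a, ∑' b, σ (hist ++ [cur]) a * π (hist ++ [cur]) b * δ cur a b s') *
        listProb δ σ π (hist ++ [cur]) s' rest

/-- `Pr` is the family of Ionescu–Tulcea play measures of the concurrent game `δ`:
`Pr s σ π` is a probability measure on `S^ω` (product σ-algebra, `S` discrete) and the
probability of each cylinder is the product of one-step transition probabilities. -/
def IsPlayMeasure [Fintype A₁] [Fintype A₂] [MeasurableSpace S] (δ : S → A₁ → A₂ → PMF S)
    (Pr : S → (List S → PMF A₁) → (List S → PMF A₂) → Measure (ℕ → S)) : Prop :=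
  (∀ s σ π, IsProbabilityMeasure (Pr s σ π)) ∧
    ∀ s σ π (l : List S), Pr s σ π (Cyl (s :: l)) = listProb δ σ π [] s l

/-- An observation-based strategy only depends on the observation sequence. -/
def ObsBased {A O : Type} (obs : S → O) (σ : List S → PMF A) : Prop :=
  ∀ h h' : List S, h.map obs = h'.map obs → σ h = σ h'

/-- The state space of the interaction-separation reduction: `S ⊔ (S × A₁ × A₂)`. -/
abbrev BarS (S A₁ A₂ : Type) : Type := S ⊕ S × A₁ × A₂

/-- Transition function of the interaction-separation reduction: from `s ∈ S` the action
pair `(a₁, a₂)` leads deterministically to `(s, a₁, a₂)`, and from `(s, a₁, a₂)`, for every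
action pair, the successor is drawn in `S` according to `δ s a₁ a₂`. -/
noncomputable def barδ (δ : S → A₁ → A₂ → PMF S) :
    BarS S A₁ A₂ → A₁ → A₂ → PMF (BarS S A₁ A₂)
  | Sum.inl s, a₁, a₂ => PMF.pure (Sum.inr (s, a₁, a₂))
  | Sum.inr (s, a₁, a₂), _, _ => (δ s a₁ a₂).map Sum.inl

/-- Observations in the reduced game: `(s, a₁, a₂)` is observed like `s`. -/
def barObs {O : Type} (obs : S → O) : BarS S A₁ A₂ → O
  | Sum.inl s => obs s
  | Sum.inr (s, _, _) => obs s

/-- Projection of reduced states to original states. -/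
def unbar : BarS S A₁ A₂ → S
  | Sum.inl s => s
  | Sum.inr (s, _, _) => s

/-- The reduced objective `φ̄`: plays alternating between `S` (at even positions) and
`S × A₁ × A₂` (at odd positions) whose even subsequence belongs to `φ`. -/
def barφ (φ : Set (ℕ → S)) : Set (ℕ → BarS S A₁ A₂) :=
  {ρ | (∀ n, ∃ s, ρ (2 * n) = Sum.inl s) ∧ (∀ n, ∃ p, ρ (2 * n + 1) = Sum.inr p) ∧
    (fun n => unbar (ρ (2 * n))) ∈ φ}

/-- The value for player 1: sup over observation-based strategies of player 1 of the inf
over observation-based strategies of player 2 of the winning probability. -/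
noncomputable def val {O₁ O₂ : Type} [Fintype A₁] [Fintype A₂] [MeasurableSpace S]
    (Pr : S → (List S → PMF A₁) → (List S → PMF A₂) → Measure (ℕ → S))
    (obs₁ : S → O₁) (obs₂ : S → O₂) (φ : Set (ℕ → S)) (s : S) : ℝ≥0∞ :=
  ⨆ σ : {σ : List S → PMF A₁ // ObsBased obs₁ σ},
    ⨅ π : {π : List S → PMF A₂ // ObsBased obs₂ π}, Pr s σ.1 π.1 φ

/-! A reduced play alternates almost surely between `S` and `S × A₁ × A₂`, so a reduced history
ending in `S` is an original history interleaved with the actions played along it. Since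
`(s, a₁, a₂)` is observed like `s`, the observations of the reduced history are those of the
original one, each repeated: both carry the same information, and observation-based strategies
correspond in both directions. Summing over the unobserved actions shows that the even states of a
reduced play under corresponding strategies have the law of the original play. -/

section Cylinders

theorem mem_Cyl_iff {ρ : ℕ → S} {l : List S} : ρ ∈ Cyl l ↔ (List.range l.length).map ρ = l := by
  simp [Cyl, Fin.forall_iff, List.ext_get_iff]

theorem Cyl_nil : Cyl ([] : List S) = Set.univ :=
  Set.eq_univ_of_forall fun ρ => by simp [Cyl]

theorem mem_Cyl_map_range (ρ : ℕ → S) (n : ℕ) : ρ ∈ Cyl ((List.range n).map ρ) := by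
  simp [mem_Cyl_iff]

theorem mem_Cyl_cons {ρ : ℕ → S} {x : S} {l : List S} :
    ρ ∈ Cyl (x :: l) ↔ ρ 0 = x ∧ (fun n => ρ (n + 1)) ∈ Cyl l := by
  simp [mem_Cyl_iff, List.range_succ_eq_map, Function.comp_def]

theorem mem_Cyl_append_singleton {ρ : ℕ → S} {l : List S} {x : S} :
    ρ ∈ Cyl (l ++ [x]) ↔ ρ ∈ Cyl l ∧ ρ l.length = x := by
  simp [mem_Cyl_iff, List.range_succ]

theorem Cyl_subset_of_prefix {l l' : List S} (h : l <+: l') : Cyl l' ⊆ Cyl l := by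
  obtain ⟨t, rfl⟩ := h
  intro ρ hρ i
  simpa [i.2] using hρ ⟨i, by simp; omega⟩

theorem prefix_of_mem_Cyl {ρ : ℕ → S} {l l' : List S} (hρ : ρ ∈ Cyl l) (hρ' : ρ ∈ Cyl l')
    (h : l.length ≤ l'.length) : l <+: l' := by
  rw [List.prefix_iff_eq_take, ← mem_Cyl_iff.1 hρ, ← mem_Cyl_iff.1 hρ', ← List.map_take,
    List.take_range]
  simp [h]

theorem isPiSystem_range_Cyl : IsPiSystem (Set.range (Cyl (S := S))) := by
  rintro _ ⟨l, rfl⟩ _ ⟨l', rfl⟩ ⟨ρ, hρ, hρ'⟩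
  rcases le_total l.length l'.length with h | h
  · exact ⟨l', (Set.inter_eq_right.2 (Cyl_subset_of_prefix (prefix_of_mem_Cyl hρ hρ' h))).symm⟩
  · exact ⟨l, (Set.inter_eq_left.2 (Cyl_subset_of_prefix (prefix_of_mem_Cyl hρ' hρ h))).symm⟩

variable [MeasurableSpace S] [DiscreteMeasurableSpace S]

theorem measurableSet_Cyl (l : List S) : MeasurableSet (Cyl l) := by
  have : Cyl l = ⋂ i : Fin l.length, (fun ρ : ℕ → S => ρ i) ⁻¹' {l.get i} := by
    ext ρ
    simp [Cyl]
  rw [this]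
  exact .iInter fun i => measurable_pi_apply _ .of_discrete

variable [Countable S]

theorem generateFrom_range_Cyl :
    MeasurableSpace.generateFrom (Set.range (Cyl (S := S))) = MeasurableSpace.pi := by
  apply le_antisymm
  · apply MeasurableSpace.generateFrom_le
    rintro _ ⟨l, rfl⟩
    exact measurableSet_Cyl l
  refine iSup_le fun n => measurable_iff_comap_le.1 ?_
  refine @measurable_to_countable' _ _ _ _ (.generateFrom _) _ fun x => ?_
  have preimage_eq :
      (fun ρ : ℕ → S => ρ n) ⁻¹' {x} = ⋃ l ∈ {l : List S | l.length = n}, Cyl (l ++ [x]) := by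
    ext ρ
    simp only [Set.mem_preimage, Set.mem_singleton_iff, Set.mem_ofPred_eq, Set.mem_iUnion,
      mem_Cyl_append_singleton, exists_prop]
    constructor
    · exact fun hx => ⟨_, by simp, mem_Cyl_map_range ρ n, by simpa using hx⟩
    · rintro ⟨l, rfl, -, hx⟩
      exact hx
  rw [preimage_eq]
  exact .biUnion (Set.to_countable _)
    fun l _ => MeasurableSpace.measurableSet_generateFrom ⟨_, rfl⟩

theorem measure_ext_Cyl {μ ν : Measure (ℕ → S)} [IsFiniteMeasure μ]
    (h : ∀ l, μ (Cyl l) = ν (Cyl l)) : μ = ν := by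
  refine ext_of_generate_finite _ generateFrom_range_Cyl.symm isPiSystem_range_Cyl ?_ ?_
  · rintro _ ⟨l, rfl⟩
    exact h l
  · simpa only [Cyl_nil] using h []

theorem measure_Cyl_inter_eq_tsum (μ : Measure (ℕ → S)) (l : List S) (E : Set (ℕ → S)) :
    μ (Cyl l ∩ E) = ∑' x, μ (Cyl (l ++ [x]) ∩ E) := by
  have hm (x : S) : MeasurableSet ((fun ρ : ℕ → S => ρ l.length) ⁻¹' {x}) :=
    measurable_pi_apply _ .of_discrete
  have fibers := tsum_measure_preimage_singleton (μ := μ.restrict (Cyl l ∩ E)) Set.countable_univ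
    fun x _ => hm x
  rw [Set.preimage_univ, Measure.restrict_apply_univ, tsum_univ
    fun x => μ.restrict (Cyl l ∩ E) ((fun ρ : ℕ → S => ρ l.length) ⁻¹' {x})] at fibers
  rw [← fibers]
  refine tsum_congr fun x => ?_
  rw [Measure.restrict_apply (hm x)]
  congr 1
  ext ρ
  simp only [Set.mem_inter_iff, Set.mem_preimage, Set.mem_singleton_iff, mem_Cyl_append_singleton]
  tauto

end Cylinders

section PlayMeasures

/-- The law of the successor of state `c` when the players independently draw their actions from
the mixed actions `α` and `β`. -/
noncomputable def nextState (δ : S → A₁ → A₂ → PMF S) (α : PMF A₁) (β : PMF A₂) (c : S) : PMF S :=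
  α.bind fun a => β.bind fun b => δ c a b

theorem nextState_apply (δ : S → A₁ → A₂ → PMF S) (α : PMF A₁) (β : PMF A₂) (c d : S) :
    nextState δ α β c d = ∑' a, ∑' b, α a * β b * δ c a b d := by
  simp only [nextState, PMF.bind_apply, ← ENNReal.tsum_mul_left, mul_assoc]

variable [Fintype A₁] [Fintype A₂] {δ : S → A₁ → A₂ → PMF S}

theorem listProb_append_cons (σ : List S → PMF A₁) (π : List S → PMF A₂) (hist : List S) (c : S)
    (l : List S) (d : S) (m : List S) :
    listProb δ σ π hist c (l ++ d :: m) =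
      listProb δ σ π hist c (l ++ [d]) * listProb δ σ π (hist ++ c :: l) d m := by
  induction l generalizing hist c with
  | nil => simp [listProb]
  | cons x l ih => simp [listProb, ih (hist ++ [c]) x, mul_assoc]

variable [MeasurableSpace S]
  {Pr : S → (List S → PMF A₁) → (List S → PMF A₂) → Measure (ℕ → S)}

theorem IsPlayMeasure.measure_Cyl_singleton (hPr : IsPlayMeasure δ Pr) (s : S)
    (σ : List S → PMF A₁) (π : List S → PMF A₂) : Pr s σ π (Cyl [s]) = 1 := by
  simp [hPr.2, listProb]

variable [DiscreteMeasurableSpace S] {s : S}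

theorem ae_initial_of_measure_Cyl_singleton {μ : Measure (ℕ → S)} [IsProbabilityMeasure μ]
    (h : μ (Cyl [s]) = 1) : ∀ᵐ ρ ∂μ, ρ 0 = s := by
  have hCyl : ∀ᵐ ρ ∂μ, ρ ∈ Cyl [s] := (prob_compl_eq_zero_iff (measurableSet_Cyl _)).2 h
  exact hCyl.mono fun ρ hρ => (mem_Cyl_cons.1 hρ).1

theorem measure_Cyl_cons_of_ne {μ : Measure (ℕ → S)} [IsProbabilityMeasure μ]
    (h : μ (Cyl [s]) = 1) {x : S} (hx : x ≠ s) (l : List S) : μ (Cyl (x :: l)) = 0 := by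
  refine measure_eq_zero_iff_ae_notMem.2 ?_
  filter_upwards [ae_initial_of_measure_Cyl_singleton h] with ρ hs hρ
  exact hx ((mem_Cyl_cons.1 hρ).1.symm.trans hs)

theorem IsPlayMeasure.measure_Cyl_append_pair (hPr : IsPlayMeasure δ Pr) (s : S)
    (σ : List S → PMF A₁) (π : List S → PMF A₂) (h : List S) (c d : S) :
    Pr s σ π (Cyl (h ++ [c] ++ [d])) =
      Pr s σ π (Cyl (h ++ [c])) * nextState δ (σ (h ++ [c])) (π (h ++ [c])) c d := by
  obtain ⟨x, l, hl⟩ : ∃ x l, h ++ [c] = x :: l := List.exists_cons_of_ne_nil (by simp)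
  have := hPr.1 s σ π
  rcases eq_or_ne x s with rfl | hx
  · rcases h with _ | ⟨y, h⟩
    · obtain ⟨rfl, rfl⟩ : c = x ∧ l = [] := by simpa [eq_comm] using hl
      simp [hPr.2, listProb, nextState_apply]
    · obtain ⟨rfl, rfl⟩ : y = x ∧ h ++ [c] = l := by simpa using hl
      simp [hPr.2, listProb_append_cons _ _ _ _ h c [d], listProb, nextState_apply]
  · simp [hl, measure_Cyl_cons_of_ne (hPr.measure_Cyl_singleton s σ π) hx]

variable [Countable S]

theorem IsPlayMeasure.eq_of_measure_Cyl (hPr : IsPlayMeasure δ Pr) {σ : List S → PMF A₁}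
    {π : List S → PMF A₂} {μ : Measure (ℕ → S)} [IsProbabilityMeasure μ]
    (h : ∀ l, μ (Cyl (s :: l)) = listProb δ σ π [] s l) : μ = Pr s σ π := by
  have := hPr.1 s σ π
  refine measure_ext_Cyl fun l => ?_
  rcases l with _ | ⟨x, l⟩
  · simp [Cyl_nil]
  rcases eq_or_ne x s with rfl | hx
  · rw [h, hPr.2]
  · rw [measure_Cyl_cons_of_ne (by rw [h, listProb]) hx,
      measure_Cyl_cons_of_ne (hPr.measure_Cyl_singleton s σ π) hx]

theorem IsPlayMeasure.ae_mem_support (hPr : IsPlayMeasure δ Pr) (s : S) (σ : List S → PMF A₁)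
    (π : List S → PMF A₂) :
    ∀ᵐ ρ ∂Pr s σ π, ∀ n, ∃ α β, ρ (n + 1) ∈ (nextState δ α β (ρ n)).support := by
  have h : ∀ᵐ ρ ∂Pr s σ π, ∀ (h : List S) (c d : S),
      d ∉ (nextState δ (σ (h ++ [c])) (π (h ++ [c])) c).support → ρ ∉ Cyl (h ++ [c] ++ [d]) := by
    simp only [ae_all_iff]
    intro h c d hd
    rw [← measure_eq_zero_iff_ae_notMem, hPr.measure_Cyl_append_pair,
      (PMF.apply_eq_zero_iff _ _).2 hd, mul_zero]
  filter_upwards [h] with ρ h n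
  refine ⟨_, _, not_not.1 fun hn => h ((List.range n).map ρ) _ _ hn ?_⟩
  simp only [mem_Cyl_append_singleton, mem_Cyl_map_range, List.length_append, List.length_map,
    List.length_range, List.length_singleton, and_self]

theorem IsPlayMeasure.measure_Cyl_inter_eq_tsum {ι : Type*} {g : ι → S}
    (hPr : IsPlayMeasure δ Pr) (hg : g.Injective) (s : S) (σ : List S → PMF A₁)
    (π : List S → PMF A₂) (h : List S) {c : S} (E : Set (ℕ → S))
    (hc : ∀ α β, (nextState δ α β c).support ⊆ Set.range g) :
    Pr s σ π (Cyl (h ++ [c]) ∩ E) = ∑' i, Pr s σ π (Cyl (h ++ [c] ++ [g i]) ∩ E) := by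
  rw [Stmt1.measure_Cyl_inter_eq_tsum]
  refine (hg.tsum_eq (f := fun x => Pr s σ π (Cyl (h ++ [c] ++ [x]) ∩ E)) fun x hx => ?_).symm
  refine hc (σ (h ++ [c])) (π (h ++ [c])) fun h0 => hx ?_
  refine measure_mono_null Set.inter_subset_left ?_
  rw [hPr.measure_Cyl_append_pair, h0, mul_zero]

end PlayMeasures

section ReducedTransitions

variable (δ : S → A₁ → A₂ → PMF S) (α : PMF A₁) (β : PMF A₂)

theorem nextState_barδ_inl (c : S) :
    nextState (barδ δ) α β (.inl c) = α.bind fun a => β.map fun b => .inr (c, a, b) :=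
  rfl

theorem nextState_barδ_inr (c : S) (a : A₁) (b : A₂) :
    nextState (barδ δ) α β (.inr (c, a, b)) = (δ c a b).map .inl := by
  simp [nextState, barδ]

theorem support_nextState_barδ_inl_subset (c : S) :
    (nextState (barδ δ) α β (.inl c)).support ⊆ Set.range fun p : A₁ × A₂ => .inr (c, p) := by
  intro x hx
  obtain ⟨a, -, b, -, rfl⟩ : ∃ a ∈ α.support, ∃ b ∈ β.support, .inr (c, a, b) = x := by
    simpa [nextState_barδ_inl] using hx
  exact ⟨(a, b), rfl⟩

theorem support_nextState_barδ_inr_subset (p : S × A₁ × A₂) :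
    (nextState (barδ δ) α β (.inr p)).support ⊆ Set.range .inl := by
  rw [nextState_barδ_inr, PMF.support_map]
  exact Set.image_subset_range _ _

theorem pmf_map_apply_of_injective {X Y : Type*} {f : X → Y} (hf : f.Injective) (p : PMF X)
    (x : X) : p.map f (f x) = p x := by
  classical
  rw [PMF.map_apply, tsum_eq_single x fun y hy => if_neg (hf.ne hy.symm), if_pos rfl]

theorem nextState_barδ_inl_inr (c : S) (a : A₁) (b : A₂) :
    nextState (barδ δ) α β (.inl c) (.inr (c, a, b)) = α a * β b := by
  rw [nextState_apply, tsum_eq_single a, tsum_eq_single b]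
  · simp [barδ]
  · intro b' hb'
    simp [barδ, hb'.symm]
  · intro a' ha'
    simp [barδ, ha'.symm]

end ReducedTransitions

section Histories

/-- The reduced history of a play that visited the given states, each with the pair of actions
chosen there. -/
def interleave (L : List (S × A₁ × A₂)) : List (BarS S A₁ A₂) :=
  L.flatMap fun p => [.inl p.1, .inr p]

theorem interleave_append_singleton (L : List (S × A₁ × A₂)) (p : S × A₁ × A₂) :
    interleave (L ++ [p]) = interleave L ++ [.inl p.1] ++ [.inr p] := by
  simp [interleave]

/-- The original play underlying a reduced play: its states at even positions. -/
def evenStates (ρ : ℕ → BarS S A₁ A₂) : ℕ → S := fun n => unbar (ρ (2 * n))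

theorem evenStates_mem_Cyl {ρ : ℕ → BarS S A₁ A₂} {L : List (S × A₁ × A₂)} {c : S}
    (hρ : ρ ∈ Cyl (interleave L ++ [.inl c])) : evenStates ρ ∈ Cyl (L.map Prod.fst ++ [c]) := by
  induction L generalizing ρ with
  | nil => simp_all [interleave, mem_Cyl_iff, evenStates, unbar]
  | cons p L ih =>
    obtain ⟨h0, -, hρ⟩ :
        ρ 0 = .inl p.1 ∧ ρ 1 = .inr p ∧ (fun n => ρ (n + 2)) ∈ Cyl (interleave L ++ [.inl c]) := by
      simpa [interleave, mem_Cyl_cons] using hρ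
    exact mem_Cyl_cons.2 ⟨by simp [evenStates, h0, unbar], ih hρ⟩

end Histories

section Strategies

variable {A O : Type}

/-- The strategies `τ` of the original game and `τB` of the reduced game take the same decisions
along a play; what `τB` does on the intermediate states `(s, a₁, a₂)` is irrelevant. -/
def Compatible (τ : List S → PMF A) (τB : List (BarS S A₁ A₂) → PMF A) : Prop :=
  ∀ (L : List (S × A₁ × A₂)) (c : S), τB (interleave L ++ [.inl c]) = τ (L.map Prod.fst ++ [c])

/-- The entries of a list at even positions. -/
def evens {X : Type*} : List X → List X
  | [] => []
  | [x] => [x]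
  | x :: _ :: l => x :: evens l

theorem evens_map {X Y : Type*} (f : X → Y) : ∀ l : List X, evens (l.map f) = (evens l).map f
  | [] => rfl
  | [_] => rfl
  | _ :: _ :: l => by simp [evens, evens_map f l]

theorem comp_unbar (obs : S → O) : obs ∘ unbar (A₁ := A₁) (A₂ := A₂) = barObs obs := by
  ext (x | x) <;> rfl

/-- The strategy of the reduced game that plays `τ` on the states at even positions. -/
def barStrategy (τ : List S → PMF A) (H : List (BarS S A₁ A₂)) : PMF A :=
  τ ((evens H).map unbar)

theorem ObsBased.barStrategy {obs : S → O} {τ : List S → PMF A} (hτ : ObsBased obs τ) :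
    ObsBased (barObs obs) (Stmt1.barStrategy (A₁ := A₁) (A₂ := A₂) τ) := fun H H' h => by
  apply hτ
  rw [List.map_map, List.map_map, comp_unbar, ← evens_map, ← evens_map, h]

theorem compatible_barStrategy (τ : List S → PMF A) :
    Compatible τ (barStrategy (A₁ := A₁) (A₂ := A₂) τ) := fun L c => by
  have evens_interleave :
      (evens (interleave L ++ [.inl c])).map unbar = L.map Prod.fst ++ [c] := by
    induction L with
    | nil => rfl
    | cons p L ih => simpa [interleave, evens, unbar] using ih
  rw [barStrategy, evens_interleave]

/-- Each entry of a list repeated, except for the last one. This turns the observations of an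
original history into those of the reduced histories above it. -/
def stutter {X : Type*} (l : List X) : List X := (l.flatMap fun x => [x, x]).dropLast

theorem stutter_map {X Y : Type*} (f : X → Y) (l : List X) :
    stutter (l.map f) = (stutter l).map f := by
  simp [stutter, List.flatMap_map, List.map_flatMap, List.map_dropLast]

theorem stutter_append_singleton {X : Type*} (l : List X) (x : X) :
    stutter (l ++ [x]) = (l.flatMap fun x => [x, x]) ++ [x] := by
  simp [stutter, List.dropLast_append_of_ne_nil]

/-- The strategy of the original game that consults `τB` on the stuttered history. This sequence is
not a reduced history, but it has the observations of one, so that no actions have to be guessed. -/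
def unbarStrategy (τB : List (BarS S A₁ A₂) → PMF A) (h : List S) : PMF A :=
  τB (stutter (h.map .inl))

theorem map_barObs_stutter (obs : S → O) (h : List S) :
    (stutter (h.map (.inl : S → BarS S A₁ A₂))).map (barObs obs) = stutter (h.map obs) := by
  rw [← stutter_map, List.map_map]
  rfl

theorem ObsBased.unbarStrategy {obs : S → O} {τB : List (BarS S A₁ A₂) → PMF A}
    (hτB : ObsBased (barObs obs) τB) : ObsBased obs (Stmt1.unbarStrategy τB) := fun h h' e => by
  apply hτB
  rw [map_barObs_stutter, map_barObs_stutter, e]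

theorem ObsBased.compatible_unbarStrategy {obs : S → O} {τB : List (BarS S A₁ A₂) → PMF A}
    (hτB : ObsBased (barObs obs) τB) : Compatible (Stmt1.unbarStrategy τB) τB := fun L c => by
  apply hτB
  rw [map_barObs_stutter, List.map_append, List.map_singleton, List.map_append, List.map_singleton,
    stutter_append_singleton]
  simp [interleave, List.map_flatMap, List.flatMap_map, barObs]

theorem biTotal_compatible (obs : S → O) :
    Relator.BiTotal fun (τ : {τ : List S → PMF A // ObsBased obs τ})
      (τB : {τB : List (BarS S A₁ A₂) → PMF A // ObsBased (barObs obs) τB}) =>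
        Compatible τ.1 τB.1 :=
  ⟨fun τ => ⟨⟨_, τ.2.barStrategy⟩, compatible_barStrategy τ.1⟩,
    fun τB => ⟨⟨_, τB.2.unbarStrategy⟩, τB.2.compatible_unbarStrategy⟩⟩

end Strategies

section Law

instance {X Y : Type*} [MeasurableSpace X] [DiscreteMeasurableSpace X] [MeasurableSpace Y]
    [DiscreteMeasurableSpace Y] : DiscreteMeasurableSpace (X ⊕ Y) :=
  ⟨fun _ => measurableSet_sum_iff.2 ⟨.of_discrete, .of_discrete⟩⟩

theorem measurable_evenStates [MeasurableSpace S] [MeasurableSpace A₁] [MeasurableSpace A₂] :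
    Measurable (evenStates (S := S) (A₁ := A₁) (A₂ := A₂)) := by
  have unbar_eq : unbar = Sum.elim id (Prod.fst : S × A₁ × A₂ → S) := by
    ext (x | x) <;> rfl
  have measurable_unbar : Measurable (unbar (S := S) (A₁ := A₁) (A₂ := A₂)) :=
    unbar_eq ▸ measurable_id.sumElim measurable_fst
  exact measurable_pi_lambda _ fun n => measurable_unbar.comp (measurable_pi_apply (2 * n))

variable [Countable S] [Fintype A₁] [Fintype A₂] [MeasurableSpace S] [DiscreteMeasurableSpace S]
  [MeasurableSpace A₁] [DiscreteMeasurableSpace A₁] [MeasurableSpace A₂]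
  [DiscreteMeasurableSpace A₂] {δ : S → A₁ → A₂ → PMF S}
  {Pr : S → (List S → PMF A₁) → (List S → PMF A₂) → Measure (ℕ → S)}
  {PrB : BarS S A₁ A₂ → (List (BarS S A₁ A₂) → PMF A₁) → (List (BarS S A₁ A₂) → PMF A₂) →
    Measure (ℕ → BarS S A₁ A₂)}
  {σ : List S → PMF A₁} {σB : List (BarS S A₁ A₂) → PMF A₁}
  {π : List S → PMF A₂} {πB : List (BarS S A₁ A₂) → PMF A₂}

theorem measure_Cyl_interleave_round_inter (hPrB : IsPlayMeasure (barδ δ) PrB) (s : BarS S A₁ A₂)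
    (L : List (S × A₁ × A₂)) (c x : S) (m : List S) (p : A₁ × A₂) :
    PrB s σB πB (Cyl (interleave L ++ [.inl c] ++ [.inr (c, p)]) ∩
        evenStates ⁻¹' Cyl (L.map Prod.fst ++ c :: x :: m)) =
      PrB s σB πB (Cyl (interleave (L ++ [(c, p)]) ++ [.inl x]) ∩
        evenStates ⁻¹' Cyl ((L ++ [(c, p)]).map Prod.fst ++ x :: m)) := by
  rw [hPrB.measure_Cyl_inter_eq_tsum Sum.inl_injective _ _ _ _ _
    fun α β => support_nextState_barδ_inr_subset δ α β (c, p), tsum_eq_single x]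
  · simp [interleave_append_singleton]
  intro d hd
  convert measure_empty (μ := PrB s σB πB)
  rw [Set.eq_empty_iff_forall_notMem]
  rintro ρ ⟨hρd, hρx⟩
  rw [← interleave_append_singleton L (c, p)] at hρd
  have := prefix_of_mem_Cyl (evenStates_mem_Cyl hρd) hρx (by simp)
  simp [hd] at this

theorem measure_Cyl_interleave_inter (hPrB : IsPlayMeasure (barδ δ) PrB) (hσ : Compatible σ σB)
    (hπ : Compatible π πB) (s : BarS S A₁ A₂) (L : List (S × A₁ × A₂)) (c : S) (l : List S) :
    PrB s σB πB (Cyl (interleave L ++ [.inl c]) ∩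
        evenStates ⁻¹' Cyl (L.map Prod.fst ++ c :: l)) =
      PrB s σB πB (Cyl (interleave L ++ [.inl c])) * listProb δ σ π (L.map Prod.fst) c l := by
  induction l generalizing L c with
  | nil =>
    have hsub : Cyl (interleave L ++ [.inl c]) ⊆ evenStates ⁻¹' Cyl (L.map Prod.fst ++ [c]) :=
      fun _ => evenStates_mem_Cyl
    rw [Set.inter_eq_left.2 hsub, listProb, mul_one]
  | cons x l ih =>
    have hinj : Function.Injective fun p : A₁ × A₂ => (.inr (c, p) : BarS S A₁ A₂) :=
      Sum.inr_injective.comp (Prod.mk_right_injective c)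
    rw [hPrB.measure_Cyl_inter_eq_tsum hinj _ _ _ _ _
      fun α β => support_nextState_barδ_inl_subset δ α β c]
    have round (p : A₁ × A₂) :
        PrB s σB πB (Cyl (interleave L ++ [.inl c] ++ [.inr (c, p)]) ∩
            evenStates ⁻¹' Cyl (L.map Prod.fst ++ c :: x :: l)) =
          PrB s σB πB (Cyl (interleave L ++ [.inl c])) *
            (σ (L.map Prod.fst ++ [c]) p.1 * π (L.map Prod.fst ++ [c]) p.2 * δ c p.1 p.2 x *
              listProb δ σ π (L.map Prod.fst ++ [c]) x l) := by
      rw [measure_Cyl_interleave_round_inter hPrB, ih, interleave_append_singleton,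
        hPrB.measure_Cyl_append_pair, hPrB.measure_Cyl_append_pair, nextState_barδ_inl_inr,
        nextState_barδ_inr, pmf_map_apply_of_injective Sum.inl_injective, hσ, hπ, List.map_append,
        List.map_singleton]
      ring
    simp only [round, ENNReal.tsum_mul_left, ENNReal.tsum_mul_right, listProb,
      ENNReal.tsum_prod']

theorem map_evenStates_eq (hPr : IsPlayMeasure δ Pr) (hPrB : IsPlayMeasure (barδ δ) PrB)
    (hσ : Compatible σ σB) (hπ : Compatible π πB) (s : S) :
    (PrB (.inl s) σB πB).map evenStates = Pr s σ π := by
  have := hPrB.1 (.inl s) σB πB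
  have := Measure.isProbabilityMeasure_map (μ := PrB (.inl s) σB πB)
    measurable_evenStates.aemeasurable
  have hinit := hPrB.measure_Cyl_singleton (.inl s) σB πB
  refine hPr.eq_of_measure_Cyl fun l => ?_
  have hl := measure_Cyl_interleave_inter hPrB hσ hπ (.inl s) [] s l
  simp only [interleave, List.flatMap_nil, List.map_nil, List.nil_append, hinit, one_mul] at hl
  rw [Measure.map_apply measurable_evenStates (measurableSet_Cyl _), ← hl, Set.inter_comm,
    measure_inter_conull ((prob_compl_eq_zero_iff (measurableSet_Cyl _)).2 hinit)]

theorem ae_alternating (hPrB : IsPlayMeasure (barδ δ) PrB) (s : S) :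
    ∀ᵐ ρ ∂PrB (.inl s) σB πB,
      (∀ n, ∃ c, ρ (2 * n) = .inl c) ∧ ∀ n, ∃ p, ρ (2 * n + 1) = .inr p := by
  have := hPrB.1 (.inl s) σB πB
  filter_upwards [ae_initial_of_measure_Cyl_singleton (hPrB.measure_Cyl_singleton (.inl s) σB πB),
    hPrB.ae_mem_support (.inl s) σB πB] with ρ h0 hρ
  have odd_of_even (n : ℕ) : (∃ c, ρ (2 * n) = .inl c) → ∃ p, ρ (2 * n + 1) = .inr p := by
    rintro ⟨c, hc⟩
    obtain ⟨α, β, h⟩ := hρ (2 * n)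
    obtain ⟨p, hp⟩ := support_nextState_barδ_inl_subset δ α β c (hc ▸ h)
    exact ⟨(c, p), hp.symm⟩
  have even_of_odd (n : ℕ) : (∃ p, ρ (2 * n + 1) = .inr p) → ∃ c, ρ (2 * (n + 1)) = .inl c := by
    rintro ⟨p, hp⟩
    obtain ⟨α, β, h⟩ := hρ (2 * n + 1)
    obtain ⟨c, hc⟩ := support_nextState_barδ_inr_subset δ α β p (hp ▸ h)
    exact ⟨c, hc.symm⟩
  have even (n : ℕ) : ∃ c, ρ (2 * n) = .inl c := by
    induction n with
    | zero => exact ⟨s, h0⟩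
    | succ n ih => exact even_of_odd n (odd_of_even n ih)
  exact ⟨even, fun n => odd_of_even n (even n)⟩

theorem measure_barφ (hPr : IsPlayMeasure δ Pr) (hPrB : IsPlayMeasure (barδ δ) PrB)
    (hσ : Compatible σ σB) (hπ : Compatible π πB) (s : S) {φ : Set (ℕ → S)}
    (hφ : MeasurableSet φ) : PrB (.inl s) σB πB (barφ φ) = Pr s σ π φ := by
  rw [← map_evenStates_eq hPr hPrB hσ hπ, Measure.map_apply measurable_evenStates hφ]
  refine measure_congr ?_
  filter_upwards [ae_alternating hPrB s] with ρ hρ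
  exact propext ⟨fun h => h.2.2, fun h => ⟨hρ.1, hρ.2, h⟩⟩

end Law

theorem range_eq_range_of_biTotal {X Y Z : Type*} {R : X → Y → Prop} (hR : Relator.BiTotal R)
    {f : X → Z} {g : Y → Z} (h : ∀ x y, R x y → f x = g y) : Set.range f = Set.range g := by
  apply subset_antisymm
  · rintro _ ⟨x, rfl⟩
    obtain ⟨y, hxy⟩ := hR.1 x
    exact ⟨y, (h x y hxy).symm⟩
  · rintro _ ⟨y, rfl⟩
    obtain ⟨x, hxy⟩ := hR.2 y
    exact ⟨x, h x y hxy⟩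

/-- The winning probability that the strategy `σ` of player 1 secures against all observation-based
strategies of player 2. -/
noncomputable def guarantee [MeasurableSpace S]
    (Pr : S → (List S → PMF A₁) → (List S → PMF A₂) → Measure (ℕ → S)) (obs₂ : S → O₂)
    (φ : Set (ℕ → S)) (s : S) (σ : List S → PMF A₁) : ℝ≥0∞ :=
  ⨅ π : {π : List S → PMF A₂ // ObsBased obs₂ π}, Pr s σ π.1 φ

theorem stmt_1_general {S A₁ A₂ O₁ O₂ : Type} [Countable S] [Fintype A₁] [Fintype A₂]
    [MeasurableSpace S] [DiscreteMeasurableSpace S]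
    [MeasurableSpace A₁] [DiscreteMeasurableSpace A₁]
    [MeasurableSpace A₂] [DiscreteMeasurableSpace A₂]
    (δ : S → A₁ → A₂ → PMF S) (obs₁ : S → O₁) (obs₂ : S → O₂)
    (φ : Set (ℕ → S)) (hφ : MeasurableSet φ)
    (Pr : S → (List S → PMF A₁) → (List S → PMF A₂) → Measure (ℕ → S))
    (hPr : IsPlayMeasure δ Pr)
    (PrB : BarS S A₁ A₂ → (List (BarS S A₁ A₂) → PMF A₁) → (List (BarS S A₁ A₂) → PMF A₂) →
      Measure (ℕ → BarS S A₁ A₂))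
    (hPrB : IsPlayMeasure (barδ δ) PrB)
    (s : S) :
    val Pr obs₁ obs₂ φ s = val PrB (barObs obs₁) (barObs obs₂) (barφ φ) (Sum.inl s) ∧
    ((∃ σ, ObsBased obs₁ σ ∧
        (⨅ π : {π : List S → PMF A₂ // ObsBased obs₂ π}, Pr s σ π.1 φ) =
          val Pr obs₁ obs₂ φ s) ↔
      (∃ σ, ObsBased (barObs obs₁) σ ∧
        (⨅ π : {π : List (BarS S A₁ A₂) → PMF A₂ // ObsBased (barObs obs₂) π},
            PrB (Sum.inl s) σ π.1 (barφ φ)) =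
          val PrB (barObs obs₁) (barObs obs₂) (barφ φ) (Sum.inl s))) := by
  have guarantee_eq (σ σB) (hσ : Compatible σ σB) :
      guarantee Pr obs₂ φ s σ = guarantee PrB (barObs obs₂) (barφ φ) (.inl s) σB :=
    congrArg sInf <| range_eq_range_of_biTotal (biTotal_compatible obs₂) fun _ _ hπ =>
      (measure_barφ hPr hPrB hσ hπ s hφ).symm
  have range_eq := range_eq_range_of_biTotal (biTotal_compatible (A₁ := A₁) (A₂ := A₂) obs₁)
    fun σ σB hσ => guarantee_eq σ.1 σB.1 hσ
  have val_eq : val Pr obs₁ obs₂ φ s =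
      val PrB (barObs obs₁) (barObs obs₂) (barφ φ) (.inl s) := congrArg sSup range_eq
  refine ⟨val_eq, ?_⟩
  have optimal_iff := Set.ext_iff.1 range_eq (val Pr obs₁ obs₂ φ s)
  rw [← val_eq]
  simpa only [Set.mem_range, Subtype.exists, exists_prop, guarantee] using optimal_iff

theorem stmt_1 {S A₁ A₂ O₁ O₂ : Type}
    [Fintype S] [Nonempty S] [Fintype A₁] [Nonempty A₁] [Fintype A₂] [Nonempty A₂]
    [Fintype O₁] [Fintype O₂]
    [MeasurableSpace S] [DiscreteMeasurableSpace S]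
    [MeasurableSpace A₁] [DiscreteMeasurableSpace A₁]
    [MeasurableSpace A₂] [DiscreteMeasurableSpace A₂]
    (δ : S → A₁ → A₂ → PMF S) (obs₁ : S → O₁) (obs₂ : S → O₂)
    (φ : Set (ℕ → S)) (hφ : MeasurableSet φ)
    (Pr : S → (List S → PMF A₁) → (List S → PMF A₂) → Measure (ℕ → S))
    (hPr : IsPlayMeasure δ Pr)
    (PrB : BarS S A₁ A₂ → (List (BarS S A₁ A₂) → PMF A₁) → (List (BarS S A₁ A₂) → PMF A₂) →
      Measure (ℕ → BarS S A₁ A₂))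
    (hPrB : IsPlayMeasure (barδ δ) PrB)
    (s : S) :
    val Pr obs₁ obs₂ φ s = val PrB (barObs obs₁) (barObs obs₂) (barφ φ) (Sum.inl s) ∧
    ((∃ σ, ObsBased obs₁ σ ∧
        (⨅ π : {π : List S → PMF A₂ // ObsBased obs₂ π}, Pr s σ π.1 φ) =
          val Pr obs₁ obs₂ φ s) ↔
      (∃ σ, ObsBased (barObs obs₁) σ ∧
        (⨅ π : {π : List (BarS S A₁ A₂) → PMF A₂ // ObsBased (barObs obs₂) π},
            PrB (Sum.inl s) σ π.1 (barφ φ)) =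
          val PrB (barObs obs₁) (barObs obs₂) (barφ φ) (Sum.inl s))) :=
  stmt_1_general δ obs₁ obs₂ φ hφ Pr hPr PrB hPrB s

end Stmt1
end

section
/- Let G = (S, A₁, A₂, δ) be a complete-observation concurrent stochastic game with a distinguished state s* and a tuple (s₀, …, s_{n−1}) ∈ Sⁿ (n ≥ 1, indices in ZMod n) such that δ(s*, a, b)(t) = #{k : s_k = t}/n for all a ∈ A₁, b ∈ A₂ (s* is a uniform-n-ary probabilistic state). Let f : A₁ → ZMod n and g : A₂ → ZMod n be surjective, and let G' be the game identical to G except that δ'(s*, a, b) is the Dirac distribution at s_{f(a)+g(b)}. Then for every measurable objective φ ⊆ S^ω and every state s ∈ S, val_G(φ)(s) = val_{G'}(φ)(s); moreover player 1 has an optimal strategy for φ from s in G if and only if player 1 has an optimal strategy for φ from s in G'. -/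
open MeasureTheory
open scoped ENNReal

namespace Stmt3

variable {S A₁ A₂ : Type}

/-- The cylinder set of infinite plays extending the finite prefix `l`. -/
def Cyl (l : List S) : Set (ℕ → S) := {ρ | ∀ i : Fin l.length, ρ i.1 = l.get i}

/-- Probability of observing the successive states `rest` after the history `hist ++ [cur]`,
when the players draw their actions independently according to `σ` and `π`, and successor
states are drawn according to `δ`. -/
noncomputable def listProb [Fintype A₁] [Fintype A₂] (δ : S → A₁ → A₂ → PMF S)
    (σ : List S → PMF A₁) (π : List S → PMF A₂) :
    List S → S → List S → ℝ≥0∞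
  | _, _, [] => 1
  | hist, cur, s' :: rest =>
      (∑' a, ∑' b, σ (hist ++ [cur]) a * π (hist ++ [cur]) b * δ cur a b s') *
        listProb δ σ π (hist ++ [cur]) s' rest

/-- `Pr` is the family of Ionescu–Tulcea play measures of the concurrent game `δ`. -/
def IsPlayMeasure [Fintype A₁] [Fintype A₂] [MeasurableSpace S] (δ : S → A₁ → A₂ → PMF S)
    (Pr : S → (List S → PMF A₁) → (List S → PMF A₂) → Measure (ℕ → S)) : Prop :=
  (∀ s σ π, IsProbabilityMeasure (Pr s σ π)) ∧
    ∀ s σ π (l : List S), Pr s σ π (Cyl (s :: l)) = listProb δ σ π [] s l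

/-!
A probabilistic state with uniform successor distribution can be replaced by a matching-pennies-like
concurrent choice: in a finite group, adding an independent element to a uniform one gives a uniform
one, so at `sStar` *either* player can unilaterally enforce the uniform distribution by playing a
preimage of it. Hence every strategy of either player in `G` is replicated in `G'` by overriding it
at `sStar`, with the same play measure whatever the opponent does. Overriding player 1's strategy
shows that `G'` is at least as good as `G` for player 1, overriding player 2's shows the converse.
-/

section Order

variable {ι κ α : Type*} [CompleteLattice α] {v : ι → α} {w : κ → α}

theorem iSup_eq_iSup_of_forall_exists_le (hvw : ∀ i, ∃ k, v i ≤ w k) (hwv : ∀ k, ∃ i, w k ≤ v i) :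
    (⨆ i, v i) = ⨆ k, w k :=
  le_antisymm (iSup_mono' hvw) (iSup_mono' hwv)

theorem exists_eq_iSup_of_forall_exists_le (hvw : ∀ i, ∃ k, v i ≤ w k)
    (hwv : ∀ k, ∃ i, w k ≤ v i) (hv : ∃ i, v i = ⨆ i, v i) : ∃ k, w k = ⨆ k, w k := by
  obtain ⟨i, hi⟩ := hv
  obtain ⟨k, hk⟩ := hvw i
  refine ⟨k, le_antisymm (le_iSup w k) ?_⟩
  rwa [← iSup_eq_iSup_of_forall_exists_le hvw hwv, ← hi]

theorem exists_eq_iSup_iff_of_forall_exists_le (hvw : ∀ i, ∃ k, v i ≤ w k)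
    (hwv : ∀ k, ∃ i, w k ≤ v i) : (∃ i, v i = ⨆ i, v i) ↔ ∃ k, w k = ⨆ k, w k :=
  ⟨exists_eq_iSup_of_forall_exists_le hvw hwv, exists_eq_iSup_of_forall_exists_le hwv hvw⟩

end Order

section UniformDistribution

variable {α β K L : Type*}

theorem surjective_pmf_map {f : α → β} (hf : Function.Surjective f) :
    Function.Surjective (PMF.map f) := fun p ↦
  ⟨p.map (Function.surjInv hf), by
    rw [PMF.map_comp, (Function.rightInverse_surjInv hf).comp_eq_id, PMF.map_id]⟩

variable [Fintype K] [Nonempty K]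

theorem uniformOfFintype_map_equiv [Fintype L] [Nonempty L] (e : K ≃ L) :
    (PMF.uniformOfFintype K).map e = PMF.uniformOfFintype L := by
  classical
  ext k
  simp only [PMF.map_apply, PMF.uniformOfFintype_apply, ← e.symm_apply_eq,
    eq_comm (a := e.symm k), tsum_ite_eq, Fintype.card_congr e]

theorem uniformOfFintype_map_apply [DecidableEq β] (h : K → β) (t : β) :
    (PMF.uniformOfFintype K).map h t =
      ((Finset.univ.filter fun k ↦ h k = t).card : ℝ≥0∞) / Fintype.card K := by
  simp only [PMF.map_apply, PMF.uniformOfFintype_apply, tsum_fintype, eq_comm (a := t),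
    ← Finset.sum_filter, Finset.sum_const, nsmul_eq_mul, div_eq_mul_inv]

theorem bind_pure_comp_equiv_of_map_eq_uniformOfFintype {f : α → K} {u : PMF α}
    (hu : u.map f = PMF.uniformOfFintype K) [Fintype L] [Nonempty L] (e : K ≃ L) (h : L → β) :
    (u.bind fun a ↦ PMF.pure (h (e (f a)))) = (PMF.uniformOfFintype L).map h := by
  calc
    (u.bind fun a ↦ PMF.pure (h (e (f a)))) = ((u.map f).map e).map h := by
      rw [PMF.map_comp, PMF.map_comp]; rfl
    _ = (PMF.uniformOfFintype L).map h := by rw [hu, uniformOfFintype_map_equiv]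

end UniformDistribution

section Cylinders

theorem cyl_nil : Cyl ([] : List S) = Set.univ :=
  Set.eq_univ_of_forall fun _ i ↦ i.elim0

theorem cyl_eq_cylinder_of_mem {l : List S} {ρ : ℕ → S} (hρ : ρ ∈ Cyl l) :
    Cyl l = PiNat.cylinder ρ l.length := by
  ext ρ'
  exact ⟨fun hρ' i hi ↦ (hρ' ⟨i, hi⟩).trans (hρ ⟨i, hi⟩).symm,
    fun hρ' i ↦ (hρ' i i.2).trans (hρ i)⟩

theorem mem_cyl_ofFn (ρ : ℕ → S) (m : ℕ) : ρ ∈ Cyl (List.ofFn fun i : Fin m ↦ ρ i) := fun i ↦ by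
  simp only [List.get_ofFn, Fin.val_cast]

theorem disjoint_cyl_cons {s t : S} (hst : s ≠ t) (l m : List S) :
    Disjoint (Cyl (s :: l)) (Cyl (t :: m)) :=
  Set.disjoint_left.2 fun _ hs ht ↦
    hst ((hs ⟨0, Nat.succ_pos _⟩).symm.trans (ht ⟨0, Nat.succ_pos _⟩))

theorem isPiSystem_range_cyl : IsPiSystem (Set.range (Cyl (S := S))) := by
  rintro _ ⟨l, rfl⟩ _ ⟨m, rfl⟩ ⟨ρ, hl, hm⟩
  rw [cyl_eq_cylinder_of_mem hl, cyl_eq_cylinder_of_mem hm]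
  rcases le_total l.length m.length with hlm | hml
  · rw [Set.inter_eq_right.2 (PiNat.cylinder_anti ρ hlm)]
    exact ⟨m, cyl_eq_cylinder_of_mem hm⟩
  · rw [Set.inter_eq_left.2 (PiNat.cylinder_anti ρ hml)]
    exact ⟨l, cyl_eq_cylinder_of_mem hl⟩

theorem preimage_eval_eq_biUnion_cyl (i : ℕ) (A : Set S) :
    (fun ρ : ℕ → S ↦ ρ i) ⁻¹' A = ⋃ l ∈ {l | Cyl l ⊆ (fun ρ ↦ ρ i) ⁻¹' A}, Cyl l := by
  refine subset_antisymm (fun ρ hρ ↦ Set.mem_biUnion ?_ (mem_cyl_ofFn ρ (i + 1)))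
    (Set.iUnion₂_subset fun _ hl ↦ hl)
  intro ρ' hρ'
  rw [cyl_eq_cylinder_of_mem (mem_cyl_ofFn ρ (i + 1)), List.length_ofFn] at hρ'
  rwa [Set.mem_preimage, hρ' i i.lt_succ_self]

variable [MeasurableSpace S] [MeasurableSingletonClass S]

theorem measurableSet_cyl (l : List S) : MeasurableSet (Cyl l) := by
  rw [Cyl, Set.ofPred_forall]
  exact MeasurableSet.iInter fun i ↦
    (measurableSet_singleton (l.get i)).preimage (measurable_pi_apply i.1)

variable [Countable S]

theorem generateFrom_range_cyl :
    MeasurableSpace.generateFrom (Set.range (Cyl (S := S))) = MeasurableSpace.pi := by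
  refine le_antisymm ?_ (iSup_le fun i ↦ ?_)
  · exact MeasurableSpace.generateFrom_le (Set.forall_mem_range.2 measurableSet_cyl)
  · rintro _ ⟨A, -, rfl⟩
    rw [preimage_eval_eq_biUnion_cyl]
    exact MeasurableSet.biUnion (Set.to_countable _) fun l _ ↦
      MeasurableSpace.measurableSet_generateFrom ⟨l, rfl⟩

theorem ext_of_cyl {μ ν : Measure (ℕ → S)} [IsFiniteMeasure μ]
    (h : ∀ l, μ (Cyl l) = ν (Cyl l)) : μ = ν :=
  ext_of_generate_finite _ generateFrom_range_cyl.symm isPiSystem_range_cyl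
    (by rintro _ ⟨l, rfl⟩; exact h l) (by rw [← cyl_nil, h])

end Cylinders

section Step

/-- The distribution of the outcome of a one-shot game `d` in which the players draw their actions
independently from the mixed actions `p` and `q`. -/
noncomputable def step (d : A₁ → A₂ → PMF S) (p : PMF A₁) (q : PMF A₂) : PMF S :=
  p.bind fun a ↦ q.bind (d a)

variable {d : A₁ → A₂ → PMF S} {p : PMF A₁} {q : PMF A₂} {r : PMF S}

theorem step_apply (d : A₁ → A₂ → PMF S) (p : PMF A₁) (q : PMF A₂) (t : S) :
    step d p q t = ∑' a, ∑' b, p a * q b * d a b t := by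
  simp only [step, PMF.bind_apply, ← ENNReal.tsum_mul_left, mul_assoc]

theorem step_eq_of_forall_right (h : ∀ a, q.bind (d a) = r) : step d p q = r := by
  simp only [step, h, PMF.bind_const]

theorem step_eq_of_forall_left (h : ∀ b, (p.bind fun a ↦ d a b) = r) : step d p q = r := by
  rw [step, PMF.bind_comm]
  simp only [h, PMF.bind_const]

theorem step_eq_of_forall (h : ∀ a b, d a b = r) : step d p q = r :=
  step_eq_of_forall_right fun a ↦ by rw [funext (h a), PMF.bind_const]

end Step

section Override

variable {A : Type*} [DecidableEq S]

/-- The strategy that plays the mixed action `u` whenever the current state is `s`, and follows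
`σ` otherwise. -/
def overrideAt (s : S) (u : PMF A) (σ : List S → PMF A) : List S → PMF A :=
  fun hist ↦ if hist.getLast? = some s then u else σ hist

theorem overrideAt_concat_self (s : S) (u : PMF A) (σ : List S → PMF A) (hist : List S) :
    overrideAt s u σ (hist ++ [s]) = u := by
  simp only [overrideAt, List.getLast?_concat, if_true]

theorem overrideAt_concat_of_ne {s cur : S} (hcur : cur ≠ s) (u : PMF A) (σ : List S → PMF A)
    (hist : List S) : overrideAt s u σ (hist ++ [cur]) = σ (hist ++ [cur]) := by
  simp only [overrideAt, List.getLast?_concat, Option.some_inj, hcur, if_false]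

end Override

section PlayMeasure

variable [Fintype A₁] [Fintype A₂] {δ δ' : S → A₁ → A₂ → PMF S}
  {σ σ' : List S → PMF A₁} {π π' : List S → PMF A₂}

theorem listProb_congr
    (h : ∀ hist cur, step (δ cur) (σ (hist ++ [cur])) (π (hist ++ [cur])) =
      step (δ' cur) (σ' (hist ++ [cur])) (π' (hist ++ [cur])))
    (hist : List S) (cur : S) (l : List S) :
    listProb δ σ π hist cur l = listProb δ' σ' π' hist cur l := by
  induction l generalizing hist cur with
  | nil => rfl
  | cons t l ih => rw [listProb, listProb, ih, ← step_apply, ← step_apply, h]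

variable [MeasurableSpace S] [MeasurableSingletonClass S]
  {Pr Pr' : S → (List S → PMF A₁) → (List S → PMF A₂) → Measure (ℕ → S)}

theorem IsPlayMeasure.apply_cyl_cons_of_ne (hPr : IsPlayMeasure δ Pr) {s t : S} (hts : t ≠ s)
    (σ : List S → PMF A₁) (π : List S → PMF A₂) (l : List S) : Pr s σ π (Cyl (t :: l)) = 0 := by
  have := hPr.1 s σ π
  have hstart : Pr s σ π (Cyl [s]) = 1 := hPr.2 s σ π []
  exact measure_mono_null (disjoint_cyl_cons hts l []).subset_compl_right
    ((prob_compl_eq_zero_iff (measurableSet_cyl [s])).2 hstart)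

variable [Countable S]

theorem IsPlayMeasure.eq_of_step_eq (hPr : IsPlayMeasure δ Pr) (hPr' : IsPlayMeasure δ' Pr')
    (h : ∀ hist cur, step (δ cur) (σ (hist ++ [cur])) (π (hist ++ [cur])) =
      step (δ' cur) (σ' (hist ++ [cur])) (π' (hist ++ [cur])))
    (s : S) : Pr s σ π = Pr' s σ' π' := by
  have := hPr.1 s σ π
  have := hPr'.1 s σ' π'
  refine ext_of_cyl fun l ↦ ?_
  rcases l with _ | ⟨t, l⟩
  · simp only [cyl_nil, measure_univ]
  · rcases eq_or_ne t s with rfl | hts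
    · rw [hPr.2, hPr'.2, listProb_congr h]
    · rw [hPr.apply_cyl_cons_of_ne hts, hPr'.apply_cyl_cons_of_ne hts]

variable {sStar : S} {r : PMF S} {u₁ : PMF A₁} {u₂ : PMF A₂}

theorem IsPlayMeasure.eq_overrideAt_left [DecidableEq S]
    (hPr : IsPlayMeasure δ Pr) (hPr' : IsPlayMeasure δ' Pr')
    (hδ : ∀ a b, δ sStar a b = r) (hsame : ∀ s, s ≠ sStar → δ' s = δ s)
    (hu₁ : ∀ b, (u₁.bind fun a ↦ δ' sStar a b) = r)
    (s : S) (σ : List S → PMF A₁) (π : List S → PMF A₂) :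
    Pr s σ π = Pr' s (overrideAt sStar u₁ σ) π := by
  refine hPr.eq_of_step_eq hPr' (fun hist cur ↦ ?_) s
  rcases eq_or_ne cur sStar with rfl | hcur
  · rw [step_eq_of_forall hδ, overrideAt_concat_self, step_eq_of_forall_left hu₁]
  · rw [overrideAt_concat_of_ne hcur, hsame cur hcur]

theorem IsPlayMeasure.eq_overrideAt_right [DecidableEq S]
    (hPr : IsPlayMeasure δ Pr) (hPr' : IsPlayMeasure δ' Pr')
    (hδ : ∀ a b, δ sStar a b = r) (hsame : ∀ s, s ≠ sStar → δ' s = δ s)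
    (hu₂ : ∀ a, u₂.bind (δ' sStar a) = r)
    (s : S) (σ : List S → PMF A₁) (π : List S → PMF A₂) :
    Pr s σ π = Pr' s σ (overrideAt sStar u₂ π) := by
  refine hPr.eq_of_step_eq hPr' (fun hist cur ↦ ?_) s
  rcases eq_or_ne cur sStar with rfl | hcur
  · rw [step_eq_of_forall hδ, overrideAt_concat_self, step_eq_of_forall_right hu₂]
  · rw [overrideAt_concat_of_ne hcur, hsame cur hcur]

theorem IsPlayMeasure.value_eq_and_optimal_iff_of_equalizers
    (hPr : IsPlayMeasure δ Pr) (hPr' : IsPlayMeasure δ' Pr')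
    (hδ : ∀ a b, δ sStar a b = r) (hsame : ∀ s, s ≠ sStar → δ' s = δ s)
    (hu₁ : ∀ b, (u₁.bind fun a ↦ δ' sStar a b) = r) (hu₂ : ∀ a, u₂.bind (δ' sStar a) = r)
    (φ : Set (ℕ → S)) (s : S) :
    (⨆ σ, ⨅ π, Pr s σ π φ) = (⨆ σ, ⨅ π, Pr' s σ π φ) ∧
      ((∃ σ, (⨅ π, Pr s σ π φ) = ⨆ σ', ⨅ π, Pr s σ' π φ) ↔
        ∃ σ, (⨅ π, Pr' s σ π φ) = ⨆ σ', ⨅ π, Pr' s σ' π φ) := by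
  classical
  have hle : ∀ σ, ∃ σ', (⨅ π, Pr s σ π φ) ≤ ⨅ π, Pr' s σ' π φ := fun σ ↦
    ⟨overrideAt sStar u₁ σ, iInf_mono fun π ↦
      (congrArg (· φ) (hPr.eq_overrideAt_left hPr' hδ hsame hu₁ s σ π)).le⟩
  have hge : ∀ σ, ∃ σ', (⨅ π, Pr' s σ π φ) ≤ ⨅ π, Pr s σ' π φ := fun σ ↦
    ⟨σ, iInf_mono' fun π ↦ ⟨overrideAt sStar u₂ π,
      (congrArg (· φ) (hPr.eq_overrideAt_right hPr' hδ hsame hu₂ s σ π)).ge⟩⟩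
  exact ⟨iSup_eq_iSup_of_forall_exists_le hle hge, exists_eq_iSup_iff_of_forall_exists_le hle hge⟩

end PlayMeasure

theorem stmt_3_general {K : Type*} [AddGroup K] [Fintype K] [Countable S]
    [Fintype A₁] [Fintype A₂] [MeasurableSpace S] [MeasurableSingletonClass S]
    (δ δ' : S → A₁ → A₂ → PMF S) (sStar : S) (succ : K → S)
    (hδ : ∀ a b, δ sStar a b = (PMF.uniformOfFintype K).map succ)
    (f : A₁ → K) (g : A₂ → K) (hf : Function.Surjective f) (hg : Function.Surjective g)
    (hδ' : ∀ a b, δ' sStar a b = PMF.pure (succ (f a + g b)))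
    (hsame : ∀ s, s ≠ sStar → δ' s = δ s) (φ : Set (ℕ → S))
    (Pr Pr' : S → (List S → PMF A₁) → (List S → PMF A₂) → Measure (ℕ → S))
    (hPr : IsPlayMeasure δ Pr) (hPr' : IsPlayMeasure δ' Pr') (s : S) :
    (⨆ σ, ⨅ π, Pr s σ π φ) = (⨆ σ, ⨅ π, Pr' s σ π φ) ∧
      ((∃ σ, (⨅ π, Pr s σ π φ) = ⨆ σ', ⨅ π, Pr s σ' π φ) ↔
        ∃ σ, (⨅ π, Pr' s σ π φ) = ⨆ σ', ⨅ π, Pr' s σ' π φ) := by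
  obtain ⟨u₁, hu₁⟩ := surjective_pmf_map hf (PMF.uniformOfFintype K)
  obtain ⟨u₂, hu₂⟩ := surjective_pmf_map hg (PMF.uniformOfFintype K)
  refine hPr.value_eq_and_optimal_iff_of_equalizers (u₁ := u₁) (u₂ := u₂) hPr' hδ hsame
    (fun b ↦ ?_) (fun a ↦ ?_) φ s
  · simp only [hδ']
    exact bind_pure_comp_equiv_of_map_eq_uniformOfFintype hu₁ (Equiv.addRight (g b)) succ
  · rw [funext (hδ' a)]
    exact bind_pure_comp_equiv_of_map_eq_uniformOfFintype hu₂ (Equiv.addLeft (f a)) succ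

theorem stmt_3 {S A₁ A₂ : Type} [Fintype S] [Nonempty S] [DecidableEq S]
    [Fintype A₁] [Nonempty A₁] [Fintype A₂] [Nonempty A₂]
    [MeasurableSpace S] [DiscreteMeasurableSpace S]
    (n : ℕ) [NeZero n]
    (δ δ' : S → A₁ → A₂ → PMF S) (sStar : S) (sTup : ZMod n → S)
    -- `sStar` is a uniform-`n`-ary probabilistic state of `G` with successor tuple `sTup`:
    (hδ : ∀ (a : A₁) (b : A₂) (t : S), δ sStar a b t =
      ((Finset.univ.filter fun k : ZMod n => sTup k = t).card : ℝ≥0∞) / (n : ℝ≥0∞))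
    (f : A₁ → ZMod n) (g : A₂ → ZMod n)
    (hf : Function.Surjective f) (hg : Function.Surjective g)
    -- `G'` is identical to `G` except that `δ'(s*, a, b)` is Dirac at `sTup (f a + g b)`:
    (hδ' : ∀ (a : A₁) (b : A₂), δ' sStar a b = PMF.pure (sTup (f a + g b)))
    (hsame : ∀ s, s ≠ sStar → δ' s = δ s)
    (φ : Set (ℕ → S)) (hφ : MeasurableSet φ)
    (Pr Pr' : S → (List S → PMF A₁) → (List S → PMF A₂) → Measure (ℕ → S))
    (hPr : IsPlayMeasure δ Pr) (hPr' : IsPlayMeasure δ' Pr')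
    (s : S) :
    (⨆ σ : List S → PMF A₁, ⨅ π : List S → PMF A₂, Pr s σ π φ) =
      (⨆ σ : List S → PMF A₁, ⨅ π : List S → PMF A₂, Pr' s σ π φ) ∧
    ((∃ σ : List S → PMF A₁, (⨅ π : List S → PMF A₂, Pr s σ π φ) =
        ⨆ σ' : List S → PMF A₁, ⨅ π : List S → PMF A₂, Pr s σ' π φ) ↔
      (∃ σ : List S → PMF A₁, (⨅ π : List S → PMF A₂, Pr' s σ π φ) =
        ⨆ σ' : List S → PMF A₁, ⨅ π : List S → PMF A₂, Pr' s σ' π φ)) :=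
  stmt_3_general δ δ' sStar sTup
    (fun a b ↦ PMF.ext fun t ↦ by rw [hδ, uniformOfFintype_map_apply, ZMod.card])
    f g hf hg hδ' hsame φ Pr Pr' hPr hPr' s

end Stmt3
end

section
/- Let G = (S, A₁, A₂, δ) be a complete-observation concurrent stochastic game with a distinguished state s* and a tuple (s₀, …, s_{n−1}) ∈ Sⁿ (n ≥ 1, indices in ZMod n) such that δ(s*, a, b)(t) = #{k : s_k = t}/n for all a ∈ A₁, b ∈ A₂ (s* is a uniform-n-ary probabilistic state). Let f : A₁ → ZMod n and g : A₂ → ZMod n be surjective, and let G' be the game identical to G except that δ'(s*, a, b) is the Dirac distribution at s_{f(a)+g(b)}. Then for every measurable objective φ ⊆ S^ω and every state s ∈ S: player 1 has an almost-sure winning strategy for φ from s in G if and only if player 1 has an almost-sure winning strategy for φ from s in G'; and player 1 has a positive winning strategy for φ from s in G if and only if player 1 has a positive winning strategy for φ from s in G'. -/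
/-!
In `G`, the successor law of `s*` is the uniform mixture `D` of the tuple, whatever the players do.
In `G'`, either player can force that same law at `s*` unilaterally: mixing her actions so that
`f a` is uniform makes `f a + g b` uniform for every `b`, and symmetrically for the opponent.
Hence a strategy of player 1 in `G` transfers to `G'` by mixing in this way at `s*`, against every
opponent. Conversely a winning strategy of player 1 in `G'` is winning in `G` unchanged, since an
opponent in `G` is imitated in `G'` by one who mixes at `s*`. In both directions the two play
measures coincide, so the transfer applies to any winning condition on the law of the play.
-/

open MeasureTheory
open scoped ENNReal

namespace Stmt4

variable {S A₁ A₂ : Type}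

/-- The cylinder set of infinite plays extending the finite prefix `l`. -/
def Cyl (l : List S) : Set (ℕ → S) := {ρ | ∀ i : Fin l.length, ρ i.1 = l.get i}

/-- Probability of observing the successive states `rest` after the history `hist ++ [cur]`,
when the players draw their actions independently according to `σ` and `π`, and successor
states are drawn according to `δ`. -/
noncomputable def listProb [Fintype A₁] [Fintype A₂] (δ : S → A₁ → A₂ → PMF S)
    (σ : List S → PMF A₁) (π : List S → PMF A₂) :
    List S → S → List S → ℝ≥0∞
  | _, _, [] => 1
  | hist, cur, s' :: rest =>
      (∑' a, ∑' b, σ (hist ++ [cur]) a * π (hist ++ [cur]) b * δ cur a b s') *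
        listProb δ σ π (hist ++ [cur]) s' rest

/-- `Pr` is the family of Ionescu–Tulcea play measures of the concurrent game `δ`. -/
def IsPlayMeasure [Fintype A₁] [Fintype A₂] [MeasurableSpace S] (δ : S → A₁ → A₂ → PMF S)
    (Pr : S → (List S → PMF A₁) → (List S → PMF A₂) → Measure (ℕ → S)) : Prop :=
  (∀ s σ π, IsProbabilityMeasure (Pr s σ π)) ∧
    ∀ s σ π (l : List S), Pr s σ π (Cyl (s :: l)) = listProb δ σ π [] s l

section Cylinders

theorem cyl_ofFn {k : ℕ} (x : Fin k → S) :
    Cyl (List.ofFn x) = (fun (ρ : ℕ → S) (i : Fin k) ↦ ρ i) ⁻¹' {x} := by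
  ext ρ
  simp only [Cyl, Set.mem_ofPred_eq, Set.mem_preimage, Set.mem_singleton_iff, funext_iff]
  constructor
  · intro h i
    simpa using h (Fin.cast List.length_ofFn.symm i)
  · intro h i
    simpa [Fin.cast] using h (Fin.cast List.length_ofFn i)

theorem disjoint_cyl_cons {s t : S} (hst : s ≠ t) (l m : List S) :
    Disjoint (Cyl (s :: l)) (Cyl (t :: m)) :=
  Set.disjoint_left.2 fun _ hs ht ↦ hst ((hs ⟨0, by simp⟩).symm.trans (ht ⟨0, by simp⟩))

variable [MeasurableSpace S] [MeasurableSingletonClass S]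

theorem measurableSet_cyl (l : List S) : MeasurableSet (Cyl l) := by
  rw [← List.ofFn_get l, cyl_ofFn]
  exact measurableSet_preimage (by fun_prop) (measurableSet_singleton _)

theorem measure_ext_of_cyl [Countable S] {μ ν : Measure (ℕ → S)} [IsFiniteMeasure ν]
    (h : ∀ l, μ (Cyl l) = ν (Cyl l)) : μ = ν := by
  let statePrefix (k : ℕ) (ρ : ℕ → S) (i : Fin k) : S := ρ i
  have measurable_statePrefix (k : ℕ) : Measurable (statePrefix k) := by fun_prop
  have prefix_law_eq (k : ℕ) : μ.map (statePrefix k) = ν.map (statePrefix k) := by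
    refine Measure.ext_of_singleton fun x ↦ ?_
    have hx : MeasurableSet {x} := measurableSet_singleton x
    rw [Measure.map_apply (measurable_statePrefix k) hx,
      Measure.map_apply (measurable_statePrefix k) hx, ← cyl_ofFn, h]
  have hμ : IsProjectiveLimit μ fun I ↦ ν.map I.restrict := by
    intro I
    obtain ⟨k, hk⟩ := I.exists_nat_subset_range
    let restrictPrefix (x : Fin k → S) (i : I) : S := x ⟨i, Finset.mem_range.1 (hk i.2)⟩
    have measurable_restrictPrefix : Measurable restrictPrefix := by fun_prop
    have map_restrict (κ : Measure (ℕ → S)) :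
        κ.map I.restrict = (κ.map (statePrefix k)).map restrictPrefix := by
      rw [Measure.map_map measurable_restrictPrefix (measurable_statePrefix k)]
      rfl
    calc μ.map I.restrict = (μ.map (statePrefix k)).map restrictPrefix := map_restrict μ
      _ = (ν.map (statePrefix k)).map restrictPrefix := by rw [prefix_law_eq]
      _ = ν.map I.restrict := (map_restrict ν).symm
  exact hμ.unique fun _ ↦ rfl

end Cylinders

section StepLaw

/-- The law of the successor state in the matrix `d` of transition laws when the two players draw
their actions independently from `p` and `q`. -/
noncomputable def stepLaw (d : A₁ → A₂ → PMF S) (p : PMF A₁) (q : PMF A₂) : PMF S :=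
  p.bind fun a ↦ q.bind (d a)

variable {d : A₁ → A₂ → PMF S} {p : PMF A₁} {q : PMF A₂} {D : PMF S}

theorem stepLaw_eq_of_forall_left (h : ∀ b, (p.bind fun a ↦ d a b) = D) : stepLaw d p q = D := by
  rw [stepLaw, PMF.bind_comm]
  simp only [h, PMF.bind_const]

theorem stepLaw_eq_of_forall_right (h : ∀ a, q.bind (d a) = D) : stepLaw d p q = D := by
  simp only [stepLaw, h, PMF.bind_const]

theorem stepLaw_eq_of_forall (h : ∀ a b, d a b = D) : stepLaw d p q = D :=
  stepLaw_eq_of_forall_right fun a ↦ by rw [funext (h a), PMF.bind_const]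

end StepLaw

section PlayMeasure

variable [Fintype A₁] [Fintype A₂] {δ δ' : S → A₁ → A₂ → PMF S}
  {σ σ' : List S → PMF A₁} {π π' : List S → PMF A₂}

theorem listProb_cons (hist : List S) (cur t : S) (l : List S) :
    listProb δ σ π hist cur (t :: l) =
      stepLaw (δ cur) (σ (hist ++ [cur])) (π (hist ++ [cur])) t *
        listProb δ σ π (hist ++ [cur]) t l := by
  simp only [listProb, stepLaw, PMF.bind_apply, mul_assoc, ENNReal.tsum_mul_left]

theorem listProb_eq_of_stepLaw_eq
    (h : ∀ hist cur, stepLaw (δ cur) (σ (hist ++ [cur])) (π (hist ++ [cur])) =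
      stepLaw (δ' cur) (σ' (hist ++ [cur])) (π' (hist ++ [cur])))
    (hist : List S) (cur : S) (l : List S) :
    listProb δ σ π hist cur l = listProb δ' σ' π' hist cur l := by
  induction l generalizing hist cur with
  | nil => rfl
  | cons t l ih => rw [listProb_cons, listProb_cons, h, ih]

variable [MeasurableSpace S] [MeasurableSingletonClass S]
  {Pr Pr' : S → (List S → PMF A₁) → (List S → PMF A₂) → Measure (ℕ → S)}

theorem IsPlayMeasure.measure_cyl_cons_of_ne (hPr : IsPlayMeasure δ Pr) {s t : S} (hts : t ≠ s)
    (l : List S) : Pr s σ π (Cyl (t :: l)) = 0 := by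
  have := hPr.1 s σ π
  have starts_at_s : Pr s σ π (Cyl [s]) = 1 := hPr.2 s σ π []
  exact measure_mono_null (disjoint_cyl_cons hts l []).subset_compl_right
    ((prob_compl_eq_zero_iff (measurableSet_cyl [s])).2 starts_at_s)

theorem IsPlayMeasure.eq_of_stepLaw_eq [Countable S] (hPr : IsPlayMeasure δ Pr)
    (hPr' : IsPlayMeasure δ' Pr')
    (h : ∀ hist cur, stepLaw (δ cur) (σ (hist ++ [cur])) (π (hist ++ [cur])) =
      stepLaw (δ' cur) (σ' (hist ++ [cur])) (π' (hist ++ [cur]))) (s : S) :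
    Pr s σ π = Pr' s σ' π' := by
  have := hPr.1 s σ π
  have := hPr'.1 s σ' π'
  refine measure_ext_of_cyl fun l ↦ ?_
  cases l with
  | nil => simp [Cyl]
  | cons t l =>
    obtain rfl | hts := eq_or_ne t s
    · rw [hPr.2, hPr'.2, listProb_eq_of_stepLaw_eq h]
    · rw [hPr.measure_cyl_cons_of_ne hts, hPr'.measure_cyl_cons_of_ne hts]

end PlayMeasure

section Override

/-- The strategy that draws its action from `p` whenever the current state, the last one of the
history, is `s`, and follows `σ` otherwise. -/
def playAt [DecidableEq S] {A : Type} (s : S) (p : PMF A) (σ : List S → PMF A) : List S → PMF A :=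
  fun hist ↦ if hist.getLast? = some s then p else σ hist

theorem playAt_concat_self [DecidableEq S] {A : Type} (s : S) (p : PMF A) (σ : List S → PMF A)
    (hist : List S) : playAt s p σ (hist ++ [s]) = p := by
  simp [playAt]

theorem playAt_concat_of_ne [DecidableEq S] {A : Type} {s t : S} (hts : t ≠ s) (p : PMF A)
    (σ : List S → PMF A) (hist : List S) : playAt s p σ (hist ++ [t]) = σ (hist ++ [t]) := by
  simp [playAt, hts]

variable [Fintype A₁] [Fintype A₂] [Countable S] [MeasurableSpace S] [MeasurableSingletonClass S]
  {δ δ' : S → A₁ → A₂ → PMF S}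
  {Pr Pr' : S → (List S → PMF A₁) → (List S → PMF A₂) → Measure (ℕ → S)}
  {s₀ : S} {D : PMF S} {p : PMF A₁} {q : PMF A₂}

theorem IsPlayMeasure.eq_playAt_left [DecidableEq S] (hPr : IsPlayMeasure δ Pr)
    (hPr' : IsPlayMeasure δ' Pr') (hδ : ∀ a b, δ s₀ a b = D) (hsame : ∀ s, s ≠ s₀ → δ' s = δ s)
    (hp : ∀ b, (p.bind fun a ↦ δ' s₀ a b) = D)
    (σ : List S → PMF A₁) (π : List S → PMF A₂) (s : S) :
    Pr s σ π = Pr' s (playAt s₀ p σ) π := by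
  refine hPr.eq_of_stepLaw_eq hPr' (fun hist cur ↦ ?_) s
  obtain rfl | hcur := eq_or_ne cur s₀
  · rw [playAt_concat_self, stepLaw_eq_of_forall hδ, stepLaw_eq_of_forall_left hp]
  · rw [playAt_concat_of_ne hcur, hsame cur hcur]

theorem IsPlayMeasure.eq_playAt_right [DecidableEq S] (hPr : IsPlayMeasure δ Pr)
    (hPr' : IsPlayMeasure δ' Pr') (hδ : ∀ a b, δ s₀ a b = D) (hsame : ∀ s, s ≠ s₀ → δ' s = δ s)
    (hq : ∀ a, q.bind (δ' s₀ a) = D)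
    (σ : List S → PMF A₁) (π : List S → PMF A₂) (s : S) :
    Pr s σ π = Pr' s σ (playAt s₀ q π) := by
  refine hPr.eq_of_stepLaw_eq hPr' (fun hist cur ↦ ?_) s
  obtain rfl | hcur := eq_or_ne cur s₀
  · rw [playAt_concat_self, stepLaw_eq_of_forall hδ, stepLaw_eq_of_forall_right hq]
  · rw [playAt_concat_of_ne hcur, hsame cur hcur]

theorem exists_strategy_iff_of_forall_bind_eq (hPr : IsPlayMeasure δ Pr)
    (hPr' : IsPlayMeasure δ' Pr') (hδ : ∀ a b, δ s₀ a b = D) (hsame : ∀ s, s ≠ s₀ → δ' s = δ s)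
    (hp : ∀ b, (p.bind fun a ↦ δ' s₀ a b) = D) (hq : ∀ a, q.bind (δ' s₀ a) = D)
    (s : S) (win : Measure (ℕ → S) → Prop) :
    (∃ σ, ∀ π, win (Pr s σ π)) ↔ ∃ σ, ∀ π, win (Pr' s σ π) := by
  classical
  constructor
  · rintro ⟨σ, hσ⟩
    exact ⟨playAt s₀ p σ, fun π ↦ hPr.eq_playAt_left hPr' hδ hsame hp σ π s ▸ hσ π⟩
  · rintro ⟨σ, hσ⟩
    exact ⟨σ, fun π ↦ hPr.eq_playAt_right hPr' hδ hsame hq σ π s ▸ hσ (playAt s₀ q π)⟩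

end Override

section Uniform

variable {α β γ : Type*}

theorem exists_pmf_map_eq_of_surjective {f : α → β} (hf : Function.Surjective f) (q : PMF β) :
    ∃ p : PMF α, p.map f = q := by
  obtain ⟨g, hg⟩ := hf.hasRightInverse
  exact ⟨q.map g, by rw [PMF.map_comp, hg.comp_eq_id, PMF.map_id]⟩

theorem map_uniformOfFintype_apply [Fintype α] [Nonempty α] [DecidableEq β] (f : α → β) (b : β) :
    (PMF.uniformOfFintype α).map f b =
      ((Finset.univ.filter fun a ↦ f a = b).card : ℝ≥0∞) / Fintype.card α := by
  simp only [PMF.map_apply, PMF.uniformOfFintype_apply, tsum_fintype, eq_comm (a := b)]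
  rw [← Finset.sum_filter, Finset.sum_const, nsmul_eq_mul, div_eq_mul_inv]

theorem map_uniformOfFintype_equiv [Fintype α] [Nonempty α] [Fintype β] [Nonempty β]
    (e : α ≃ β) : (PMF.uniformOfFintype α).map e = PMF.uniformOfFintype β := by
  classical
  ext b
  simp [← e.symm_apply_eq, Fintype.card_congr e]

theorem bind_pure_equiv_eq_map_uniformOfFintype [Fintype β] [Nonempty β] {p : PMF α} {f : α → β}
    (hp : p.map f = PMF.uniformOfFintype β) (e : β ≃ β) (h : β → γ) :
    (p.bind fun a ↦ PMF.pure (h (e (f a)))) = (PMF.uniformOfFintype β).map h := by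
  calc (p.bind fun a ↦ PMF.pure (h (e (f a)))) = ((p.map f).map e).map h := by
        rw [PMF.map_comp, PMF.map_comp]; rfl
    _ = (PMF.uniformOfFintype β).map h := by rw [hp, map_uniformOfFintype_equiv]

end Uniform

theorem stmt_4_general {S A₁ A₂ : Type} {K : Type*} [Countable S] [Fintype A₁] [Fintype A₂]
    [MeasurableSpace S] [MeasurableSingletonClass S] [AddGroup K] [Fintype K]
    {δ δ' : S → A₁ → A₂ → PMF S} {sStar : S} {sTup : K → S}
    (hδ : ∀ a b, δ sStar a b = (PMF.uniformOfFintype K).map sTup)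
    {f : A₁ → K} {g : A₂ → K} (hf : Function.Surjective f) (hg : Function.Surjective g)
    (hδ' : ∀ a b, δ' sStar a b = PMF.pure (sTup (f a + g b)))
    (hsame : ∀ s, s ≠ sStar → δ' s = δ s)
    {Pr Pr' : S → (List S → PMF A₁) → (List S → PMF A₂) → Measure (ℕ → S)}
    (hPr : IsPlayMeasure δ Pr) (hPr' : IsPlayMeasure δ' Pr')
    (s : S) (win : Measure (ℕ → S) → Prop) :
    (∃ σ, ∀ π, win (Pr s σ π)) ↔ ∃ σ, ∀ π, win (Pr' s σ π) := by
  obtain ⟨p, hp⟩ := exists_pmf_map_eq_of_surjective hf (PMF.uniformOfFintype K)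
  obtain ⟨q, hq⟩ := exists_pmf_map_eq_of_surjective hg (PMF.uniformOfFintype K)
  refine exists_strategy_iff_of_forall_bind_eq hPr hPr' hδ hsame (p := p) (q := q)
    (fun b ↦ ?_) (fun a ↦ ?_) s win
  · simp only [hδ']
    exact bind_pure_equiv_eq_map_uniformOfFintype hp (Equiv.addRight (g b)) sTup
  · simp only [funext (hδ' a)]
    exact bind_pure_equiv_eq_map_uniformOfFintype hq (Equiv.addLeft (f a)) sTup

theorem stmt_4 {S A₁ A₂ : Type} [Fintype S] [Nonempty S] [DecidableEq S]
    [Fintype A₁] [Nonempty A₁] [Fintype A₂] [Nonempty A₂]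
    [MeasurableSpace S] [DiscreteMeasurableSpace S]
    (n : ℕ) [NeZero n]
    (δ δ' : S → A₁ → A₂ → PMF S) (sStar : S) (sTup : ZMod n → S)
    -- `sStar` is a uniform-`n`-ary probabilistic state of `G` with successor tuple `sTup`:
    (hδ : ∀ (a : A₁) (b : A₂) (t : S), δ sStar a b t =
      ((Finset.univ.filter fun k : ZMod n => sTup k = t).card : ℝ≥0∞) / (n : ℝ≥0∞))
    (f : A₁ → ZMod n) (g : A₂ → ZMod n)
    (hf : Function.Surjective f) (hg : Function.Surjective g)
    -- `G'` is identical to `G` except that `δ'(s*, a, b)` is Dirac at `sTup (f a + g b)`: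
    (hδ' : ∀ (a : A₁) (b : A₂), δ' sStar a b = PMF.pure (sTup (f a + g b)))
    (hsame : ∀ s, s ≠ sStar → δ' s = δ s)
    (φ : Set (ℕ → S)) (hφ : MeasurableSet φ)
    (Pr Pr' : S → (List S → PMF A₁) → (List S → PMF A₂) → Measure (ℕ → S))
    (hPr : IsPlayMeasure δ Pr) (hPr' : IsPlayMeasure δ' Pr')
    (s : S) :
    ((∃ σ : List S → PMF A₁, ∀ π : List S → PMF A₂, Pr s σ π φ = 1) ↔
      (∃ σ : List S → PMF A₁, ∀ π : List S → PMF A₂, Pr' s σ π φ = 1)) ∧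
    ((∃ σ : List S → PMF A₁, ∀ π : List S → PMF A₂, 0 < Pr s σ π φ) ↔
      (∃ σ : List S → PMF A₁, ∀ π : List S → PMF A₂, 0 < Pr' s σ π φ)) := by
  have hδ_uniform : ∀ a b, δ sStar a b = (PMF.uniformOfFintype (ZMod n)).map sTup := fun a b ↦
    PMF.ext fun t ↦ by rw [hδ, map_uniformOfFintype_apply, ZMod.card]
  have transfer := stmt_4_general hδ_uniform hf hg hδ' hsame hPr hPr' s
  exact ⟨transfer (· φ = 1), transfer (0 < · φ)⟩

end Stmt4
end

section
/- Let (S, A, δ, obs) be a POMDP, let s* be an initial state, and let φ ⊆ S^ω be a measurable objective. Then for every randomized observation-based strategy σ there exists a pure observation-based strategy σ_P such that Pr_{s*}^σ(φ) ≤ Pr_{s*}^{σ_P}(φ). -/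
/-!
STATEMENT 7: In a POMDP, for every randomized observation-based strategy σ there is a
pure observation-based strategy σ_P with Pr_{s*}^σ(φ) ≤ Pr_{s*}^{σ_P}(φ).

The Ionescu–Tulcea play measure `Pr s σ` is axiomatized by its characteristic property:
it is the (unique) probability measure on plays whose cylinder probabilities are given by
the recursive product formula `listProb`.
-/

open MeasureTheory
open scoped ENNReal

namespace Stmt7

variable {S A O : Type}

/-- The cylinder set of infinite plays extending the finite prefix `l`. -/
def Cyl (l : List S) : Set (ℕ → S) := {ρ | ∀ i : Fin l.length, ρ i.1 = l.get i}

/-- Probability of observing the successive states `rest` after the history `hist ++ [cur]`,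
when actions are drawn according to the strategy `σ` and states according to `δ`. -/
noncomputable def listProb [Fintype A] (δ : S → A → PMF S) (σ : List S → PMF A) :
    List S → S → List S → ℝ≥0∞
  | _, _, [] => 1
  | hist, cur, s' :: rest =>
      (∑' a, σ (hist ++ [cur]) a * δ cur a s') * listProb δ σ (hist ++ [cur]) s' rest

/-- `Pr` is the family of Ionescu–Tulcea play measures of the POMDP with transitions `δ`:
`Pr s σ` is a probability measure on `S^ω` (product σ-algebra, `S` discrete), and the
probability of the cylinder of plays starting with `s :: l` is the product of the
one-step transition probabilities under the strategy `σ`. -/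
def IsPlayMeasure [Fintype A] [MeasurableSpace S] (δ : S → A → PMF S)
    (Pr : S → (List S → PMF A) → Measure (ℕ → S)) : Prop :=
  (∀ s σ, IsProbabilityMeasure (Pr s σ)) ∧
    ∀ s σ (l : List S), Pr s σ (Cyl (s :: l)) = listProb δ σ [] s l

/-- A strategy is observation-based if it only depends on the observation sequence. -/
def ObsBased (obs : S → O) (σ : List S → PMF A) : Prop :=
  ∀ h h' : List S, h.map obs = h'.map obs → σ h = σ h'

/-- A strategy is pure if it always plays a Dirac distribution. -/
def IsPure (σ : List S → PMF A) : Prop := ∀ h, ∃ a, σ h = PMF.pure a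

/-!
A randomized observation-based strategy draws an action for each observation word; drawing all of
them in advance and independently yields a random pure strategy. Along a finite play the words have
pairwise distinct lengths, so the choices consulted are independent, and the expected probability
of a cylinder under the random pure strategy is its probability under the randomized one. Hence the
randomized play measure is a mixture of pure play measures, and some member of the mixture gives `φ`
at least the average probability.
-/

open ProbabilityTheory

section Cylinder

theorem mem_cyl {l : List S} {ρ : ℕ → S} :
    ρ ∈ Cyl l ↔ ∀ i (h : i < l.length), ρ i = l[i] :=
  Fin.forall_iff

theorem cyl_nil : Cyl ([] : List S) = Set.univ := by
  simp [Set.eq_univ_iff_forall, mem_cyl]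

theorem disjoint_cyl_cons {s t : S} (hst : s ≠ t) (l m : List S) :
    Disjoint (Cyl (s :: l)) (Cyl (t :: m)) := by
  refine Set.disjoint_left.2 fun ρ hs ht => hst ?_
  exact (mem_cyl.1 hs 0 (by simp)).symm.trans (mem_cyl.1 ht 0 (by simp))

theorem cyl_inter_eq_right {l m : List S} (hlm : l.length ≤ m.length)
    (hne : (Cyl l ∩ Cyl m).Nonempty) : Cyl l ∩ Cyl m = Cyl m := by
  obtain ⟨ρ, hρl, hρm⟩ := hne
  rw [mem_cyl] at hρl hρm
  refine Set.inter_eq_right.2 fun π hπ => mem_cyl.2 fun i hi => ?_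
  rw [mem_cyl.1 hπ i (hi.trans_le hlm), ← hρm i (hi.trans_le hlm), hρl i hi]

theorem isPiSystem_range_cyl : IsPiSystem (Set.range (Cyl (S := S))) := by
  rintro _ ⟨l, rfl⟩ _ ⟨m, rfl⟩ hne
  rcases le_total l.length m.length with hlm | hml
  · exact ⟨m, (cyl_inter_eq_right hlm hne).symm⟩
  · rw [Set.inter_comm] at hne ⊢
    exact ⟨l, (cyl_inter_eq_right hml hne).symm⟩

theorem preimage_eval_eq_biUnion_cyl (n : ℕ) (t : Set S) :
    (fun ρ : ℕ → S => ρ n) ⁻¹' t = ⋃ l ∈ {l : List S | ∃ h : n < l.length, l[n] ∈ t}, Cyl l := by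
  ext ρ
  simp only [Set.mem_preimage, Set.mem_iUnion, Set.mem_ofPred_eq, exists_prop]
  constructor
  · intro hρ
    exact ⟨(List.range (n + 1)).map ρ, ⟨by simp, by simpa using hρ⟩, mem_cyl.2 (by simp)⟩
  · rintro ⟨l, ⟨hn, hl⟩, hρ⟩
    rwa [mem_cyl.1 hρ n hn]

variable [MeasurableSpace S] [MeasurableSingletonClass S]

theorem measurableSet_cyl (l : List S) : MeasurableSet (Cyl l) := by
  have hcyl : Cyl l = ⋂ i : Fin l.length, (fun ρ : ℕ → S => ρ i) ⁻¹' {l.get i} := by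
    ext ρ
    simp [Cyl]
  rw [hcyl]
  exact .iInter fun i => measurable_pi_apply _ (measurableSet_singleton _)

theorem generateFrom_range_cyl [Countable S] :
    MeasurableSpace.pi = MeasurableSpace.generateFrom (Set.range (Cyl (S := S))) := by
  apply le_antisymm
  · refine iSup_le fun n => ?_
    rintro _ ⟨t, -, rfl⟩
    rw [preimage_eval_eq_biUnion_cyl]
    exact .biUnion (Set.to_countable _) fun l _ =>
      MeasurableSpace.measurableSet_generateFrom ⟨l, rfl⟩
  · refine MeasurableSpace.generateFrom_le ?_
    rintro _ ⟨l, rfl⟩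
    exact measurableSet_cyl l

end Cylinder

section IndependentChoices

theorem lintegral_prod_comp_infinitePi {ι κ : Type*} [Fintype κ] {X : ι → Type*}
    [∀ i, MeasurableSpace (X i)] (μ : ∀ i, Measure (X i)) [∀ i, IsProbabilityMeasure (μ i)]
    {w : κ → ι} (hw : w.Injective) {g : ∀ k, X (w k) → ℝ≥0∞} (hg : ∀ k, Measurable (g k)) :
    ∫⁻ f, ∏ k, g k (f (w k)) ∂Measure.infinitePi μ = ∏ k, ∫⁻ x, g k x ∂μ (w k) := by
  have hindep : iIndepFun (fun k (f : ∀ i, X i) => g k (f (w k))) (Measure.infinitePi μ) :=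
    ((iIndepFun_infinitePi fun _ => measurable_id).precomp hw).comp g hg
  rw [lintegral_prod_eq_prod_lintegral_of_indepFun _ _ hindep
    fun k => (hg k).comp (measurable_pi_apply _)]
  refine Finset.prod_congr rfl fun k _ => ?_
  exact (measurePreserving_eval_infinitePi μ (w k)).lintegral_comp (hg k)

variable [Countable A] [MeasurableSpace A] [MeasurableSingletonClass A]

theorem lintegral_toMeasure (p : PMF A) (g : A → ℝ≥0∞) :
    ∫⁻ a, g a ∂p.toMeasure = ∑' a, p a * g a := by
  simp [lintegral_countable', PMF.toMeasure_apply_singleton, mul_comm]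

/-- The law of a random choice function `f : ι → A` whose values `f i` are drawn independently
according to `τ i`. With observation words for `ι`, it turns an observation-based randomized
strategy into a random pure one. -/
noncomputable abbrev choiceMeasure {ι : Type*} (τ : ι → PMF A) : Measure (ι → A) :=
  Measure.infinitePi fun i => (τ i).toMeasure

end IndependentChoices

/-- The pure strategy that plays the action `f w` after a history with observation word `w`. -/
noncomputable def pureStrat (obs : S → O) (f : List O → A) : List S → PMF A :=
  fun h => PMF.pure (f (h.map obs))

theorem isPure_pureStrat (obs : S → O) (f : List O → A) : IsPure (pureStrat obs f) :=
  fun _ => ⟨_, rfl⟩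

theorem obsBased_pureStrat (obs : S → O) (f : List O → A) : ObsBased obs (pureStrat obs f) :=
  fun _ _ hobs => congrArg (PMF.pure ∘ f) hobs

theorem ObsBased.exists_eq_comp_map {obs : S → O} {σ : List S → PMF A} (hσ : ObsBased obs σ) :
    ∃ τ : List O → PMF A, σ = τ ∘ List.map obs :=
  have : Nonempty (PMF A) := ⟨σ []⟩
  (Function.factorsThrough_iff σ).1 hσ

section PlayMeasure

variable [Fintype A]

theorem listProb_eq_prod (δ : S → A → PMF S) (σ : List S → PMF A) (hist : List S) (cur : S)
    (rest : List S) :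
    listProb δ σ hist cur rest = ∏ i : Fin rest.length,
      (σ (hist ++ (cur :: rest).take (i + 1))).bind (δ (cur :: rest)[i]) rest[i] := by
  induction rest generalizing hist cur with
  | nil => simp [listProb]
  | cons s' rest ih =>
    simp [listProb, ih, Fin.prod_univ_succ, PMF.bind_apply]

theorem listProb_pureStrat (δ : S → A → PMF S) (obs : S → O) (f : List O → A) (hist : List S)
    (cur : S) (rest : List S) :
    listProb δ (pureStrat obs f) hist cur rest = ∏ i : Fin rest.length,
      δ (cur :: rest)[i] (f ((hist ++ (cur :: rest).take (i + 1)).map obs)) rest[i] := by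
  simp only [listProb_eq_prod, pureStrat, PMF.pure_bind]

theorem injective_map_append_take (obs : S → O) (hist : List S) (cur : S) (rest : List S) :
    Function.Injective fun i : Fin rest.length =>
      (hist ++ (cur :: rest).take (i + 1)).map obs := by
  intro i j hij
  have hlen := congrArg List.length hij
  simp only [List.length_map, List.length_append, List.length_take, List.length_cons] at hlen
  omega

open scoped Classical in
theorem IsPlayMeasure.apply_cyl [MeasurableSpace S] [MeasurableSingletonClass S]
    {δ : S → A → PMF S} {Pr : S → (List S → PMF A) → Measure (ℕ → S)} (hPr : IsPlayMeasure δ Pr)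
    (s : S) (σ : List S → PMF A) (l : List S) :
    Pr s σ (Cyl l) = if l.headD s = s then listProb δ σ [] s l.tail else 0 := by
  have := hPr.1 s σ
  cases l with
  | nil => simp [cyl_nil, listProb]
  | cons t l =>
    by_cases hts : t = s
    · simp [hts, hPr.2]
    · have hs : Pr s σ (Cyl [s])ᶜ = 0 := by
        simp [prob_compl_eq_zero_iff (measurableSet_cyl _), hPr.2, listProb]
      simpa [hts] using measure_mono_null (disjoint_cyl_cons hts l []).subset_compl_right hs

variable [MeasurableSpace A] [MeasurableSingletonClass A]

theorem measurable_listProb_pureStrat (δ : S → A → PMF S) (obs : S → O) (hist : List S) (cur : S)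
    (rest : List S) :
    Measurable fun f : List O → A => listProb δ (pureStrat obs f) hist cur rest := by
  simp only [listProb_pureStrat]
  exact Finset.measurable_fun_prod _ fun i _ =>
    (Measurable.of_discrete (f := fun a => δ (cur :: rest)[i] a rest[i])).comp
      (measurable_pi_apply _)

theorem lintegral_listProb_pureStrat (δ : S → A → PMF S) (obs : S → O) (τ : List O → PMF A)
    (hist : List S) (cur : S) (rest : List S) :
    ∫⁻ f, listProb δ (pureStrat obs f) hist cur rest ∂choiceMeasure τ =
      listProb δ (τ ∘ List.map obs) hist cur rest := by
  simp only [listProb_pureStrat, listProb_eq_prod δ (τ ∘ _), PMF.bind_apply, Function.comp_apply,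
    ← lintegral_toMeasure]
  exact lintegral_prod_comp_infinitePi (fun w => (τ w).toMeasure)
    (injective_map_append_take obs hist cur rest)
    (g := fun i a => δ (cur :: rest)[i] a rest[i]) fun _ => .of_discrete

variable [Countable S] [MeasurableSpace S] [MeasurableSingletonClass S]
  {δ : S → A → PMF S} {Pr : S → (List S → PMF A) → Measure (ℕ → S)}

theorem IsPlayMeasure.measurable_pureStrat (hPr : IsPlayMeasure δ Pr) (obs : S → O) (s : S) :
    Measurable fun f : List O → A => Pr s (pureStrat obs f) := by
  have := hPr.1
  refine .measure_of_isPiSystem_of_isProbabilityMeasure generateFrom_range_cyl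
    isPiSystem_range_cyl ?_
  rintro _ ⟨l, rfl⟩
  simp only [hPr.apply_cyl]
  split_ifs
  · exact measurable_listProb_pureStrat δ obs [] s l.tail
  · exact measurable_const

theorem IsPlayMeasure.bind_choiceMeasure_pureStrat (hPr : IsPlayMeasure δ Pr) (obs : S → O)
    (s : S) (τ : List O → PMF A) :
    (choiceMeasure τ).bind (fun f => Pr s (pureStrat obs f)) = Pr s (τ ∘ List.map obs) := by
  have := hPr.1
  have hmeas := (hPr.measurable_pureStrat obs s).aemeasurable (μ := choiceMeasure τ)
  have := isProbabilityMeasure_bind hmeas (.of_forall fun f => hPr.1 s (pureStrat obs f))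
  refine ext_of_generate_finite _ generateFrom_range_cyl isPiSystem_range_cyl ?_ (by simp)
  rintro _ ⟨l, rfl⟩
  rw [Measure.bind_apply (measurableSet_cyl l) hmeas]
  simp only [hPr.apply_cyl]
  split_ifs
  · exact lintegral_listProb_pureStrat δ obs τ [] s l.tail
  · exact lintegral_zero

end PlayMeasure

theorem stmt_7_general [Countable S] [Fintype A] [MeasurableSpace S] [MeasurableSingletonClass S]
    {δ : S → A → PMF S} (obs : S → O) {Pr : S → (List S → PMF A) → Measure (ℕ → S)}
    (hPr : IsPlayMeasure δ Pr) (sStar : S) {φ : Set (ℕ → S)} (hφ : MeasurableSet φ)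
    {σ : List S → PMF A} (hσ : ObsBased obs σ) :
    ∃ σP : List S → PMF A, IsPure σP ∧ ObsBased obs σP ∧ Pr sStar σ φ ≤ Pr sStar σP φ := by
  have := hPr.1
  let : MeasurableSpace A := ⊤
  obtain ⟨τ, rfl⟩ := hσ.exists_eq_comp_map
  have hmix : ∫⁻ f, Pr sStar (pureStrat obs f) φ ∂choiceMeasure τ =
      Pr sStar (τ ∘ List.map obs) φ := by
    rw [← hPr.bind_choiceMeasure_pureStrat obs sStar τ,
      Measure.bind_apply hφ (hPr.measurable_pureStrat obs sStar).aemeasurable]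
  obtain ⟨f, hf⟩ := exists_lintegral_le (hmix.trans_ne (measure_ne_top _ _))
  exact ⟨pureStrat obs f, isPure_pureStrat obs f, obsBased_pureStrat obs f, hmix.symm.trans_le hf⟩

theorem stmt_7 {S A O : Type} [Fintype S] [Nonempty S] [Fintype A] [Nonempty A] [Fintype O]
    [MeasurableSpace S] [DiscreteMeasurableSpace S]
    (δ : S → A → PMF S) (obs : S → O)
    (Pr : S → (List S → PMF A) → Measure (ℕ → S)) (hPr : IsPlayMeasure δ Pr)
    (sStar : S) (φ : Set (ℕ → S)) (hφ : MeasurableSet φ)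
    (σ : List S → PMF A) (hσ : ObsBased obs σ) :
    ∃ σP : List S → PMF A, IsPure σP ∧ ObsBased obs σP ∧
      Pr sStar σ φ ≤ Pr sStar σP φ :=
  stmt_7_general obs hPr sStar hφ hσ

end Stmt7
end

section
/- Let (S, A, δ, obs) be a POMDP with action set A = {0,1}, let s* be an initial state, let φ ⊆ S^ω be measurable, and let σ be any randomized strategy. For x ∈ [0,1]^ℕ define the pure strategy σ_x by σ_x(s₀⋯s_n) = 0 if x_n ≤ σ(s₀⋯s_n)(0) and σ_x(s₀⋯s_n) = 1 otherwise. Then the map x ↦ Pr_{s*}^{σ_x}(φ) is ν-measurable and Pr_{s*}^σ(φ) = ∫_{[0,1]^ℕ} Pr_{s*}^{σ_x}(φ) dν(x). In particular, if σ is observation-based then each σ_x is a pure observation-based strategy, and there exists x ∈ [0,1]^ℕ with Pr_{s*}^σ(φ) ≤ Pr_{s*}^{σ_x}(φ). -/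
/-!
STATEMENT 8: derandomization by integrating over coin sequences. For a POMDP with
action set `{0,1}` (here `Fin 2`), the winning probability of a randomized strategy `σ`
is the `ν`-integral over `x ∈ [0,1]^ℕ` of the winning probabilities of the derandomized
pure strategies `σ_x`, where `ν` is the countable product of Lebesgue measure on `[0,1]`
(axiomatized by its values on boxes).
-/

open MeasureTheory
open scoped ENNReal

namespace Stmt8

variable {S O : Type}

/-- The cylinder set of infinite plays extending the finite prefix `l`. -/
def Cyl (l : List S) : Set (ℕ → S) := {ρ | ∀ i : Fin l.length, ρ i.1 = l.get i}

/-- Probability of observing the successive states `rest` after the history `hist ++ [cur]`. -/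
noncomputable def listProb (δ : S → Fin 2 → PMF S) (σ : List S → PMF (Fin 2)) :
    List S → S → List S → ℝ≥0∞
  | _, _, [] => 1
  | hist, cur, s' :: rest =>
      (∑' a, σ (hist ++ [cur]) a * δ cur a s') * listProb δ σ (hist ++ [cur]) s' rest

/-- `Pr` is the family of Ionescu–Tulcea play measures of the POMDP with transitions `δ`. -/
def IsPlayMeasure [MeasurableSpace S] (δ : S → Fin 2 → PMF S)
    (Pr : S → (List S → PMF (Fin 2)) → Measure (ℕ → S)) : Prop :=
  (∀ s σ, IsProbabilityMeasure (Pr s σ)) ∧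
    ∀ s σ (l : List S), Pr s σ (Cyl (s :: l)) = listProb δ σ [] s l

/-- An observation-based strategy only depends on the observation sequence. -/
def ObsBased (obs : S → O) (σ : List S → PMF (Fin 2)) : Prop :=
  ∀ h h' : List S, h.map obs = h'.map obs → σ h = σ h'

/-- A strategy is pure if it always plays a Dirac distribution. -/
def IsPure (σ : List S → PMF (Fin 2)) : Prop := ∀ h, ∃ a, σ h = PMF.pure a

/-- `ν` is the countable product of Lebesgue measure on `[0,1]`, viewed as a probability
measure on `ℕ → ℝ`: it is characterized by its values on the boxes `∀ i < m, x i ∈ [0, t i]`. -/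
def IsCubeMeasure (ν : Measure (ℕ → ℝ)) : Prop :=
  IsProbabilityMeasure ν ∧
    ∀ (m : ℕ) (t : ℕ → ℝ), (∀ i, t i ∈ Set.Icc (0 : ℝ) 1) →
      ν {x | ∀ i < m, x i ∈ Set.Icc (0 : ℝ) (t i)} =
        ∏ i ∈ Finset.range m, ENNReal.ofReal (t i)

/-- The derandomized pure strategy `σ_x`: on the history `s₀ ⋯ s_n` (of length `n + 1`) it
plays `0` if `x n ≤ σ(s₀ ⋯ s_n)(0)` and `1` otherwise. -/
noncomputable def sigmaX (σ : List S → PMF (Fin 2)) (x : ℕ → ℝ) : List S → PMF (Fin 2) :=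
  fun h => PMF.pure (if ENNReal.ofReal (x (h.length - 1)) ≤ σ h 0 then 0 else 1)

/-!
Comparing `x n` with the probability of action `0` turns a uniform `x n` into a random action with
the prescribed law. Along a finite prefix `s₀ ⋯ s_n` the coins used are the distinct coordinates
`x 0, …, x (n - 1)`, which are independent under `ν`, so the probability of the cylinder factors
and its `ν`-average is the cylinder probability under `σ`. Cylinders form a π-system generating
the σ-algebra of plays, hence `Pr s σ` is the `ν`-mixture of the measures `Pr s σ_x`.
Since `ν` is a probability measure, some `x` does at least as well as the average.
-/

open ProbabilityTheory

section Independence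

variable {ι Ω E : Type*} [MeasurableSpace Ω] {μ : Measure Ω} [Nonempty E] [LinearOrder E]
  [TopologicalSpace E] [OrderTopology E] [SecondCountableTopology E]
  [MeasurableSpace E] [BorelSpace E]

theorem iIndepFun_of_measure_biInter_preimage_Iic {X : ι → Ω → E} (hX : ∀ i, Measurable (X i))
    (h : ∀ (s : Finset ι) (t : ι → E),
      μ (⋂ i ∈ s, X i ⁻¹' Set.Iic (t i)) = ∏ i ∈ s, μ (X i ⁻¹' Set.Iic (t i))) :
    iIndepFun X μ := by
  refine iIndepSets.iIndep (fun i => (hX i).comap_le)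
    (fun i => Set.preimage (X i) '' Set.range Set.Iic)
    (fun i => isPiSystem_Iic.comap (X i)) (fun i => ?_) ?_
  · rw [BorelSpace.measurable_eq (α := E), borel_eq_generateFrom_Iic,
      MeasurableSpace.comap_generateFrom]
  · rw [iIndepSets_iff]
    intro s f hf
    simp only [← Set.range_comp] at hf
    choose! t ht using hf
    have hft : ∀ i ∈ s, f i = X i ⁻¹' Set.Iic (t i) := fun i hi => (ht i hi).symm
    rw [Set.iInter₂_congr hft, h, Finset.prod_congr rfl fun i hi => congrArg μ (hft i hi)]

end Independence

/-- Lebesgue measure on `[0,1]`, the law of a single coin `x n`, as a measure on `ℝ`. -/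
noncomputable def unitLebesgue : Measure ℝ := volume.restrict (Set.Icc 0 1)

theorem unitLebesgue_Iic (t : ℝ) : unitLebesgue (Set.Iic t) = ENNReal.ofReal (min t 1) := by
  have : Set.Iic t ∩ Set.Icc (0 : ℝ) 1 = Set.Icc 0 (min t 1) := by
    ext x
    simp only [Set.mem_inter_iff, Set.mem_Iic, Set.mem_Icc, le_min_iff]
    tauto
  rw [unitLebesgue, Measure.restrict_apply measurableSet_Iic, this, Real.volume_Icc, sub_zero]

instance isProbabilityMeasure_unitLebesgue : IsProbabilityMeasure unitLebesgue :=
  ⟨by simp [unitLebesgue]⟩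

section CubeMeasure

variable {ν : Measure (ℕ → ℝ)}

theorem IsCubeMeasure.ae_mem_Icc (hν : IsCubeMeasure ν) :
    ∀ᵐ x ∂ν, ∀ i, x i ∈ Set.Icc (0 : ℝ) 1 := by
  have := hν.1
  refine ae_all_iff.2 fun i => ?_
  have hbox : ∀ᵐ x ∂ν, ∀ j < i + 1, x j ∈ Set.Icc (0 : ℝ) 1 := by
    rw [ae_iff_prob_eq_one (by measurability)]
    simpa using hν.2 (i + 1) (fun _ => 1) (by simp)
  exact hbox.mono fun x hx => hx i i.lt_succ_self

theorem IsCubeMeasure.ae_ne_zero (hν : IsCubeMeasure ν) : ∀ᵐ x ∂ν, ∀ i, x i ≠ 0 := by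
  refine ae_all_iff.2 fun i => ?_
  have hbox := hν.2 (i + 1) (fun j => if j = i then 0 else 1) (by grind)
  rw [Finset.prod_eq_zero (Finset.self_mem_range_succ i) (by simp)] at hbox
  filter_upwards [hν.ae_mem_Icc, measure_eq_zero_iff_ae_notMem.1 hbox] with x hx hx' h0
  exact hx' fun j _ => by grind

theorem IsCubeMeasure.measure_biInter_Iic (hν : IsCubeMeasure ν) (s : Finset ℕ) (t : ℕ → ℝ) :
    ν (⋂ i ∈ s, (fun x => x i) ⁻¹' Set.Iic (t i)) = ∏ i ∈ s, unitLebesgue (Set.Iic (t i)) := by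
  obtain ⟨m, hsm⟩ := s.exists_nat_subset_range
  let side (i : ℕ) : ℝ := if i ∈ s then max 0 (min (t i) 1) else 1
  have hside (i : ℕ) : side i ∈ Set.Icc (0 : ℝ) 1 := by grind
  -- Almost every `x i` lies in `(0, 1]`, where `x i ≤ t i` amounts to
  -- `0 ≤ x i ≤ max 0 (min (t i) 1)`, even for `t i < 0`.
  have hbox : (⋂ i ∈ s, (fun x : ℕ → ℝ => x i) ⁻¹' Set.Iic (t i))
      =ᵐ[ν] {x | ∀ i < m, x i ∈ Set.Icc 0 (side i)} := by
    filter_upwards [hν.ae_mem_Icc, hν.ae_ne_zero] with x hx hx0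
    have hiff (i : ℕ) (hi : i ∈ s) : x i ≤ t i ↔ x i ∈ Set.Icc 0 (side i) := by grind
    have htriv (i : ℕ) (hi : i ∉ s) : x i ∈ Set.Icc 0 (side i) := by grind
    refine propext ⟨fun h i _ => ?_, fun h => Set.mem_iInter₂.2 fun i hi => ?_⟩
    · by_cases hi : i ∈ s
      · exact (hiff i hi).1 (Set.mem_iInter₂.1 h i hi)
      · exact htriv i hi
    · exact (hiff i hi).2 (h i (Finset.mem_range.1 (hsm hi)))
  rw [measure_congr hbox, hν.2 m side hside, ← Finset.prod_subset hsm]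
  · refine Finset.prod_congr rfl fun i hi => ?_
    simp [side, hi, unitLebesgue_Iic]
  · intro i _ hi
    simp [side, hi]

theorem IsCubeMeasure.map_eval (hν : IsCubeMeasure ν) (i : ℕ) :
    ν.map (fun x => x i) = unitLebesgue := by
  have := hν.1
  refine Measure.ext_of_Iic _ _ fun t => ?_
  rw [Measure.map_apply (measurable_pi_apply i) measurableSet_Iic]
  simpa using hν.measure_biInter_Iic {i} fun _ => t

theorem IsCubeMeasure.iIndepFun_eval (hν : IsCubeMeasure ν) :
    iIndepFun (fun (i : ℕ) (x : ℕ → ℝ) => x i) ν := by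
  refine iIndepFun_of_measure_biInter_preimage_Iic measurable_pi_apply fun s t => ?_
  rw [hν.measure_biInter_Iic]
  refine Finset.prod_congr rfl fun i _ => ?_
  rw [← hν.map_eval i, Measure.map_apply (measurable_pi_apply i) measurableSet_Iic]

theorem IsCubeMeasure.lintegral_prod_eval (hν : IsCubeMeasure ν) {n : ℕ} {g : Fin n → ℝ → ℝ≥0∞}
    (hg : ∀ i, Measurable (g i)) :
    ∫⁻ x, ∏ i, g i (x i) ∂ν = ∏ i, ∫⁻ t, g i t ∂unitLebesgue := by
  have hindep : iIndepFun (fun (i : Fin n) (x : ℕ → ℝ) => g i (x i)) ν :=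
    (hν.iIndepFun_eval.precomp Fin.val_injective).comp g hg
  rw [lintegral_prod_eq_prod_lintegral_of_indepFun _ _ hindep fun i => by fun_prop]
  refine Finset.prod_congr rfl fun i _ => ?_
  rw [← hν.map_eval i, lintegral_map (hg i) (measurable_pi_apply _)]

end CubeMeasure

section CoinAction

/-- The action selected from the law `p` by the coin value `t`: the single-step version of
`sigmaX`. -/
noncomputable def coinAction (p : PMF (Fin 2)) (t : ℝ) : Fin 2 :=
  if ENNReal.ofReal t ≤ p 0 then 0 else 1

theorem sigmaX_apply (σ : List S → PMF (Fin 2)) (x : ℕ → ℝ) (h : List S) :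
    sigmaX σ x h = PMF.pure (coinAction (σ h) (x (h.length - 1))) := rfl

theorem measurable_coinAction (p : PMF (Fin 2)) : Measurable (coinAction p) :=
  Measurable.ite (measurableSet_le ENNReal.measurable_ofReal measurable_const)
    measurable_const measurable_const

theorem map_coinAction (p : PMF (Fin 2)) : unitLebesgue.map (coinAction p) = p.toMeasure := by
  have hmeas := measurable_coinAction p
  have := Measure.isProbabilityMeasure_map (μ := unitLebesgue) hmeas.aemeasurable
  have hzero : unitLebesgue.map (coinAction p) {0} = p.toMeasure {0} := by
    have hpre : coinAction p ⁻¹' {0} = Set.Iic (p 0).toReal := by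
      ext t
      simp [coinAction, ENNReal.ofReal_le_iff_le_toReal (p.apply_ne_top 0)]
    have hle : (p 0).toReal ≤ 1 :=
      ENNReal.toReal_le_of_le_ofReal zero_le_one (by simp [p.coe_le_one])
    rw [Measure.map_apply hmeas (measurableSet_singleton 0), hpre, unitLebesgue_Iic,
      min_eq_left hle, ENNReal.ofReal_toReal (p.apply_ne_top 0),
      p.toMeasure_apply_singleton _ (measurableSet_singleton 0)]
  have hone : ({1} : Set (Fin 2)) = {0}ᶜ := by ext a; fin_cases a <;> simp
  refine Measure.ext_of_singleton fun a => ?_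
  fin_cases a
  · exact hzero
  · simp only [Fin.mk_one, hone, prob_compl_eq_one_sub (measurableSet_singleton (0 : Fin 2)), hzero]

theorem lintegral_coinAction (p : PMF (Fin 2)) (f : Fin 2 → ℝ≥0∞) :
    ∫⁻ t, f (coinAction p t) ∂unitLebesgue = ∑' a, p a * f a := by
  rw [← lintegral_map (measurable_of_countable f) (measurable_coinAction p), map_coinAction,
    lintegral_countable']
  refine tsum_congr fun a => ?_
  rw [p.toMeasure_apply_singleton a (measurableSet_singleton a), mul_comm]

end CoinAction

section ListProb

theorem listProb_eq_prod (δ : S → Fin 2 → PMF S) (σ : List S → PMF (Fin 2)) (hist : List S)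
    (cur : S) (rest : List S) :
    listProb δ σ hist cur rest = ∏ i : Fin rest.length,
      ∑' a, σ (hist ++ (cur :: rest).take (i + 1)) a * δ (cur :: rest)[i] a rest[i] := by
  induction rest generalizing hist cur with
  | nil => rfl
  | cons s' rest ih => simp [listProb, ih, Fin.prod_univ_succ]

theorem tsum_pure_mul {α : Type*} (a : α) (f : α → ℝ≥0∞) :
    ∑' b, PMF.pure a b * f b = f a := by
  simp [PMF.pure_apply]

theorem listProb_sigmaX (δ : S → Fin 2 → PMF S) (σ : List S → PMF (Fin 2)) (x : ℕ → ℝ)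
    (s : S) (l : List S) :
    listProb δ (sigmaX σ x) [] s l = ∏ i : Fin l.length,
      δ (s :: l)[i] (coinAction (σ ((s :: l).take (i + 1))) (x i)) l[i] := by
  rw [listProb_eq_prod]
  refine Finset.prod_congr rfl fun i _ => ?_
  have hlen : ((s :: l).take (i.val + 1)).length - 1 = i.val := by simp
  rw [List.nil_append, sigmaX_apply, hlen]
  exact tsum_pure_mul _ fun a => δ _ a _

theorem measurable_listProb_sigmaX (δ : S → Fin 2 → PMF S) (σ : List S → PMF (Fin 2)) (s : S)
    (l : List S) : Measurable fun x => listProb δ (sigmaX σ x) [] s l := by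
  simp only [listProb_sigmaX]
  refine Finset.measurable_fun_prod _ fun i _ => ?_
  exact (measurable_of_countable fun a => δ _ a _).comp
    ((measurable_coinAction _).comp (measurable_pi_apply _))

theorem lintegral_listProb_sigmaX {ν : Measure (ℕ → ℝ)} (hν : IsCubeMeasure ν)
    (δ : S → Fin 2 → PMF S) (σ : List S → PMF (Fin 2)) (s : S) (l : List S) :
    ∫⁻ x, listProb δ (sigmaX σ x) [] s l ∂ν = listProb δ σ [] s l := by
  simp only [listProb_sigmaX]
  rw [hν.lintegral_prod_eval (g := fun i t =>
      δ (s :: l)[i] (coinAction (σ ((s :: l).take (i + 1))) t) l[i])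
    fun i => (measurable_of_countable fun a => δ _ a _).comp (measurable_coinAction _),
    listProb_eq_prod]
  exact Finset.prod_congr rfl fun i _ => lintegral_coinAction _ fun a => δ _ a _

end ListProb

section Cylinders

theorem Cyl_nil : Cyl ([] : List S) = Set.univ :=
  Set.eq_univ_of_forall fun _ i => i.elim0

theorem mem_Cyl_map_range (ρ : ℕ → S) (n : ℕ) : ρ ∈ Cyl ((List.range n).map ρ) :=
  fun i => by simp

theorem Cyl_subset_Cyl {l l' : List S} (hlen : l.length ≤ l'.length)
    (hne : (Cyl l ∩ Cyl l').Nonempty) : Cyl l' ⊆ Cyl l := by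
  obtain ⟨ρ, hl, hl'⟩ := hne
  intro η hη i
  have hi := i.2.trans_le hlen
  exact (hη ⟨i, hi⟩).trans ((hl' ⟨i, hi⟩).symm.trans (hl i))

theorem isPiSystem_range_Cyl : IsPiSystem (Set.range (Cyl : List S → Set (ℕ → S))) := by
  rintro _ ⟨l, rfl⟩ _ ⟨l', rfl⟩ hne
  rcases le_total l.length l'.length with h | h
  · exact ⟨l', (Set.inter_eq_right.2 (Cyl_subset_Cyl h hne)).symm⟩
  · exact ⟨l, (Set.inter_eq_left.2 (Cyl_subset_Cyl h (Set.inter_comm _ _ ▸ hne))).symm⟩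

variable [MeasurableSpace S]

theorem measurableSet_Cyl [MeasurableSingletonClass S] (l : List S) : MeasurableSet (Cyl l) := by
  simp only [Cyl, Set.ofPred_forall]
  exact MeasurableSet.iInter fun i => measurable_pi_apply _ (measurableSet_singleton _)

theorem generateFrom_range_Cyl [Countable S] [MeasurableSingletonClass S] :
    (MeasurableSpace.pi : MeasurableSpace (ℕ → S)) =
      MeasurableSpace.generateFrom (Set.range Cyl) := by
  refine le_antisymm (iSup_le fun n => ?_) (MeasurableSpace.generateFrom_le ?_)
  · rintro _ ⟨A, -, rfl⟩
    have hpre : (fun ρ : ℕ → S => ρ n) ⁻¹' A =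
        ⋃ l : {l : List S // ∃ h : n < l.length, l[n] ∈ A}, Cyl l.1 := by
      ext ρ
      simp only [Set.mem_preimage, Set.mem_iUnion]
      refine ⟨fun h => ⟨⟨_, by simpa using h⟩, mem_Cyl_map_range ρ (n + 1)⟩, ?_⟩
      rintro ⟨⟨l, hn, hl⟩, hρ⟩
      exact (hρ ⟨n, hn⟩).symm ▸ hl
    rw [hpre]
    exact MeasurableSet.iUnion fun l => MeasurableSpace.measurableSet_generateFrom ⟨l, rfl⟩
  · rintro _ ⟨l, rfl⟩
    exact measurableSet_Cyl l

end Cylinders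

theorem eq_bind_of_isPiSystem {α β : Type*} [MeasurableSpace α] [mβ : MeasurableSpace β]
    {ν : Measure α} [IsProbabilityMeasure ν] {μ : Measure β} [IsProbabilityMeasure μ]
    {κ : α → Measure β} [∀ a, IsProbabilityMeasure (κ a)] (hκ : Measurable κ)
    {C : Set (Set β)} (hgen : mβ = MeasurableSpace.generateFrom C) (hpi : IsPiSystem C)
    (h : ∀ A ∈ C, μ A = ∫⁻ a, κ a A ∂ν) : μ = ν.bind κ := by
  refine ext_of_generate_finite C hgen hpi (fun A hA => ?_) ?_
  · have hAmeas : MeasurableSet A := hgen ▸ MeasurableSpace.measurableSet_generateFrom hA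
    rw [Measure.bind_apply hAmeas hκ.aemeasurable, h A hA]
  · simp [Measure.bind_apply MeasurableSet.univ hκ.aemeasurable]

section PlayMeasure

variable [MeasurableSpace S] [MeasurableSingletonClass S] {δ : S → Fin 2 → PMF S}
  {Pr : S → (List S → PMF (Fin 2)) → Measure (ℕ → S)}

theorem IsPlayMeasure.ae_zero_eq (hPr : IsPlayMeasure δ Pr) (s : S) (σ : List S → PMF (Fin 2)) :
    ∀ᵐ ρ ∂Pr s σ, ρ 0 = s := by
  have := hPr.1 s σ
  have hs : ∀ᵐ ρ ∂Pr s σ, ρ ∈ Cyl [s] :=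
    (mem_ae_iff_prob_eq_one (measurableSet_Cyl _)).2 (hPr.2 s σ [])
  exact hs.mono fun ρ hρ => hρ ⟨0, by simp⟩

theorem IsPlayMeasure.measure_Cyl_cons_of_ne (hPr : IsPlayMeasure δ Pr) {s a : S} (h : a ≠ s)
    (σ : List S → PMF (Fin 2)) (l : List S) : Pr s σ (Cyl (a :: l)) = 0 := by
  rw [measure_eq_zero_iff_ae_notMem]
  filter_upwards [hPr.ae_zero_eq s σ] with ρ hρ hmem
  exact h ((hmem ⟨0, by simp⟩).symm.trans hρ)

theorem IsPlayMeasure.measurable_measure_Cyl_sigmaX (hPr : IsPlayMeasure δ Pr) (s : S)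
    (σ : List S → PMF (Fin 2)) (l : List S) :
    Measurable fun x => Pr s (sigmaX σ x) (Cyl l) := by
  have := hPr.1
  rcases l with _ | ⟨a, l⟩
  · simp [Cyl_nil]
  rcases eq_or_ne a s with rfl | ha
  · simpa only [hPr.2] using measurable_listProb_sigmaX δ σ a l
  · simp [hPr.measure_Cyl_cons_of_ne ha]

theorem IsPlayMeasure.lintegral_measure_Cyl_sigmaX (hPr : IsPlayMeasure δ Pr)
    {ν : Measure (ℕ → ℝ)} (hν : IsCubeMeasure ν) (s : S) (σ : List S → PMF (Fin 2))
    (l : List S) : ∫⁻ x, Pr s (sigmaX σ x) (Cyl l) ∂ν = Pr s σ (Cyl l) := by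
  have := hPr.1
  have := hν.1
  rcases l with _ | ⟨a, l⟩
  · simp [Cyl_nil]
  rcases eq_or_ne a s with rfl | ha
  · simpa only [hPr.2] using lintegral_listProb_sigmaX hν δ σ a l
  · simp [hPr.measure_Cyl_cons_of_ne ha]

variable [Countable S]

theorem IsPlayMeasure.measurable_sigmaX (hPr : IsPlayMeasure δ Pr) (s : S)
    (σ : List S → PMF (Fin 2)) : Measurable fun x => Pr s (sigmaX σ x) := by
  have := hPr.1
  refine Measurable.measure_of_isPiSystem_of_isProbabilityMeasure generateFrom_range_Cyl
    isPiSystem_range_Cyl ?_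
  rintro _ ⟨l, rfl⟩
  exact hPr.measurable_measure_Cyl_sigmaX s σ l

theorem IsPlayMeasure.eq_bind_sigmaX (hPr : IsPlayMeasure δ Pr) {ν : Measure (ℕ → ℝ)}
    (hν : IsCubeMeasure ν) (s : S) (σ : List S → PMF (Fin 2)) :
    Pr s σ = ν.bind fun x => Pr s (sigmaX σ x) := by
  have := hPr.1
  have := hν.1
  refine eq_bind_of_isPiSystem (hPr.measurable_sigmaX s σ) generateFrom_range_Cyl
    isPiSystem_range_Cyl ?_
  rintro _ ⟨l, rfl⟩
  exact (hPr.lintegral_measure_Cyl_sigmaX hν s σ l).symm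

end PlayMeasure

theorem isPure_sigmaX (σ : List S → PMF (Fin 2)) (x : ℕ → ℝ) : IsPure (sigmaX σ x) :=
  fun _ => ⟨_, rfl⟩

theorem ObsBased.sigmaX {obs : S → O} {σ : List S → PMF (Fin 2)} (hσ : ObsBased obs σ)
    (x : ℕ → ℝ) : ObsBased obs (sigmaX σ x) := by
  intro h h' hobs
  have hlen : h.length = h'.length := by simpa using congrArg List.length hobs
  simp only [Stmt8.sigmaX, hlen, hσ h h' hobs]

theorem stmt_8_general [Countable S] [MeasurableSpace S] [MeasurableSingletonClass S]
    (δ : S → Fin 2 → PMF S) (obs : S → O)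
    (Pr : S → (List S → PMF (Fin 2)) → Measure (ℕ → S)) (hPr : IsPlayMeasure δ Pr)
    (ν : Measure (ℕ → ℝ)) (hν : IsCubeMeasure ν)
    (sStar : S) (φ : Set (ℕ → S)) (hφ : MeasurableSet φ) (σ : List S → PMF (Fin 2)) :
    Measurable (fun x : ℕ → ℝ => Pr sStar (sigmaX σ x) φ) ∧
    Pr sStar σ φ = ∫⁻ x, Pr sStar (sigmaX σ x) φ ∂ν ∧
    (∀ x, IsPure (sigmaX σ x) ∧ (ObsBased obs σ → ObsBased obs (sigmaX σ x))) ∧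
    ∃ x : ℕ → ℝ, (∀ i, x i ∈ Set.Icc (0 : ℝ) 1) ∧
      Pr sStar σ φ ≤ Pr sStar (sigmaX σ x) φ := by
  have := hPr.1
  have := hν.1
  have hmeas := hPr.measurable_sigmaX sStar σ
  have hmix : Pr sStar σ φ = ∫⁻ x, Pr sStar (sigmaX σ x) φ ∂ν := by
    rw [← Measure.bind_apply hφ hmeas.aemeasurable, ← hPr.eq_bind_sigmaX hν]
  obtain ⟨x, hx, hle⟩ := exists_notMem_null_lintegral_le
    (hmix ▸ measure_ne_top (Pr sStar σ) φ) (ae_iff.1 hν.ae_mem_Icc)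
  exact ⟨(Measure.measurable_coe hφ).comp hmeas, hmix,
    fun x => ⟨isPure_sigmaX σ x, fun hσ => hσ.sigmaX x⟩, x, not_not.1 hx, hmix.trans_le hle⟩

theorem stmt_8 {S O : Type} [Fintype S] [Nonempty S] [Fintype O]
    [MeasurableSpace S] [DiscreteMeasurableSpace S]
    (δ : S → Fin 2 → PMF S) (obs : S → O)
    (Pr : S → (List S → PMF (Fin 2)) → Measure (ℕ → S)) (hPr : IsPlayMeasure δ Pr)
    (ν : Measure (ℕ → ℝ)) (hν : IsCubeMeasure ν)
    (sStar : S) (φ : Set (ℕ → S)) (hφ : MeasurableSet φ)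
    (σ : List S → PMF (Fin 2)) :
    Measurable (fun x : ℕ → ℝ => Pr sStar (sigmaX σ x) φ) ∧
    Pr sStar σ φ = ∫⁻ x, Pr sStar (sigmaX σ x) φ ∂ν ∧
    (ObsBased obs σ →
      (∀ x : ℕ → ℝ, IsPure (sigmaX σ x) ∧ ObsBased obs (sigmaX σ x)) ∧
      ∃ x : ℕ → ℝ, (∀ i, x i ∈ Set.Icc (0 : ℝ) 1) ∧
        Pr sStar σ φ ≤ Pr sStar (sigmaX σ x) φ) :=
  let ⟨hmeas, hmix, hstrat, hex⟩ := stmt_8_general δ obs Pr hPr ν hν sStar φ hφ σ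
  ⟨hmeas, hmix, fun hσ => ⟨fun x => ⟨(hstrat x).1, (hstrat x).2 hσ⟩, hex⟩⟩

end Stmt8
end

section
/- Let (S, A, δ, obs) be a POMDP with A = {0,1} whose transitions have binary branching: there are maps L, R : S × A → S and p : S × A → [0,1] with δ(s,a) = p(s,a)·Dirac(L(s,a)) + (1 − p(s,a))·Dirac(R(s,a)) for all s, a. Fix an initial state s* and a randomized strategy σ, and define f_{s*,σ} : [0,1]^ℕ × [0,1]^ℕ → (S × A)^ℕ by f_{s*,σ}(x,y) = ((s_n, a_{n+1}))_{n≥0}, where recursively s₀ = s*, a_{n+1} = 0 if x_n ≤ σ(s₀⋯s_n)(0) and a_{n+1} = 1 otherwise, and s_{n+1} = L(s_n, a_{n+1}) if y_n ≤ p(s_n, a_{n+1}) and s_{n+1} = R(s_n, a_{n+1}) otherwise. Then f_{s*,σ} is measurable, and the pushforward of the product measure ν ⊗ ν under f_{s*,σ} equals μ, the law of the state–action play of the POMDP from s* under σ. -/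
/-!
STATEMENT 9: the simulation map `f_{s*,σ}` of a binary-branching POMDP is measurable, and
the pushforward of `ν ⊗ ν` under it is the law `μ` of the state–action play from `s*`
under `σ`. Here `ν` is the countable product of Lebesgue measure on `[0,1]` and `μ` is
axiomatized by its (Ionescu–Tulcea) cylinder probabilities.
-/

open MeasureTheory
open scoped ENNReal

namespace Stmt9

variable {S O : Type}

/-- The cylinder set of infinite sequences extending the finite prefix `l`. -/
def Cyl {α : Type} (l : List α) : Set (ℕ → α) := {ρ | ∀ i : Fin l.length, ρ i.1 = l.get i}

/-- `ν` is the countable product of Lebesgue measure on `[0,1]`, viewed as a probability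
measure on `ℕ → ℝ`: it is characterized by its values on the boxes `∀ i < m, x i ∈ [0, t i]`. -/
def IsCubeMeasure (ν : Measure (ℕ → ℝ)) : Prop :=
  IsProbabilityMeasure ν ∧
    ∀ (m : ℕ) (t : ℕ → ℝ), (∀ i, t i ∈ Set.Icc (0 : ℝ) 1) →
      ν {x | ∀ i < m, x i ∈ Set.Icc (0 : ℝ) (t i)} =
        ∏ i ∈ Finset.range m, ENNReal.ofReal (t i)

/-- Probability of the state–action continuation `rest` after the history `hist ++ [cur]`
when the last action played was `a`: each pair `(t, b)` contributes the probability that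
the next state is `t` (under `δ cur a`) times the probability that the next action is `b`. -/
noncomputable def saProb (δ : S → Fin 2 → PMF S) (σ : List S → PMF (Fin 2)) :
    List S → S → Fin 2 → List (S × Fin 2) → ℝ≥0∞
  | _, _, _, [] => 1
  | hist, cur, a, (t, b) :: rest =>
      δ cur a t * σ (hist ++ [cur, t]) b * saProb δ σ (hist ++ [cur]) t b rest

/-- `μ` is the law of the state–action play `((s_n, a_{n+1}))_{n ≥ 0}` of the POMDP `δ`
from `sStar` under the strategy `σ`: a probability measure on `(S × A)^ℕ` with the
Ionescu–Tulcea cylinder probabilities. -/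
def IsSALaw [MeasurableSpace S] [DecidableEq S] (δ : S → Fin 2 → PMF S)
    (σ : List S → PMF (Fin 2)) (sStar : S) (μ : Measure (ℕ → S × Fin 2)) : Prop :=
  IsProbabilityMeasure μ ∧
    ∀ l : List (S × Fin 2),
      μ (Cyl l) =
        match l with
        | [] => 1
        | (s₀, a₁) :: rest =>
            (if s₀ = sStar then 1 else 0) * σ [s₀] a₁ * saProb δ σ [] s₀ a₁ rest

/-- The histories `[s₀, …, s_n]` of the play simulated from the coin sequences `x` (for the
strategy) and `y` (for the transitions). -/
noncomputable def hseq (σ : List S → PMF (Fin 2)) (L R : S → Fin 2 → S) (p : S → Fin 2 → ℝ)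
    (sStar : S) (x y : ℕ → ℝ) : ℕ → List S
  | 0 => [sStar]
  | n + 1 =>
      let h := hseq σ L R p sStar x y n
      let cur := h.getLastD sStar
      let a : Fin 2 := if ENNReal.ofReal (x n) ≤ σ h 0 then 0 else 1
      h ++ [if y n ≤ p cur a then L cur a else R cur a]

/-- The simulation map `f_{s*,σ}`: from the coin sequences `(x, y)` it produces the
state–action play `((s_n, a_{n+1}))_{n ≥ 0}`, where `a_{n+1} = 0` iff
`x n ≤ σ(s₀ ⋯ s_n)(0)`, and `s_{n+1}` is `L s_n a_{n+1}` if `y n ≤ p s_n a_{n+1}` and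
`R s_n a_{n+1}` otherwise. -/
noncomputable def playMap (σ : List S → PMF (Fin 2)) (L R : S → Fin 2 → S)
    (p : S → Fin 2 → ℝ) (sStar : S) (x y : ℕ → ℝ) : ℕ → S × Fin 2 :=
  fun n =>
    let h := hseq σ L R p sStar x y n
    (h.getLastD sStar, if ENNReal.ofReal (x n) ≤ σ h 0 then 0 else 1)

/-!
Each coordinate of `x` and `y` is an independent uniform variable, and comparing a uniform variable
with a threshold `c` selects between two outcomes with probabilities `c` and `1 - c`. The play
follows a prescribed prefix exactly when its first state is `s*` and each used coordinate of `x`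
and `y` falls in a set depending on the prefix alone: the preimage of a cylinder is a product of
two boxes, whose measure is the Ionescu–Tulcea product. Cylinders are a π-system generating the
product σ-algebra, so this determines the pushforward.
-/

section UniformMeasure

/-- The uniform distribution on `[0,1]`, as a measure on `ℝ`. -/
noncomputable def uniformUnit : Measure ℝ := volume.restrict (Set.Icc 0 1)

instance : IsProbabilityMeasure uniformUnit := ⟨by simp [uniformUnit]⟩

lemma uniformUnit_Iic (t : ℝ) : uniformUnit (Set.Iic t) = ENNReal.ofReal (min t 1) := by
  have inter_eq : Set.Iic t ∩ Set.Icc 0 1 = Set.Icc 0 (min t 1) := by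
    ext
    simp only [Set.mem_inter_iff, Set.mem_Iic, Set.mem_Icc, le_min_iff]
    tauto
  rw [uniformUnit, Measure.restrict_apply measurableSet_Iic, inter_eq, Real.volume_Icc, sub_zero]

lemma eq_infinitePi_of_Iic {ι : Type*} {μ : ι → Measure ℝ} [∀ i, IsProbabilityMeasure (μ i)]
    {ν : Measure (ι → ℝ)}
    (h : ∀ (s : Finset ι) (t : ι → ℝ),
      ν (Set.pi s fun i ↦ Set.Iic (t i)) = ∏ i ∈ s, μ i (Set.Iic (t i))) :
    ν = Measure.infinitePi μ := by
  refine (Measure.isProjectiveLimit_infinitePi μ).unique (fun s ↦ ?_) |>.symm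
  refine (Measure.pi_eq_generateFrom (C := fun _ ↦ Set.range Set.Iic) (fun _ ↦ ?_)
    (fun _ ↦ isPiSystem_Iic) (fun i ↦ ?_) fun A hA ↦ ?_).symm
  · rw [BorelSpace.measurable_eq (α := ℝ), borel_eq_generateFrom_Iic]
  · exact
      { set := fun n ↦ Set.Iic (n : ℝ)
        set_mem := fun n ↦ ⟨n, rfl⟩
        finite := fun n ↦ measure_lt_top _ _
        spanning := by simpa [Set.eq_univ_iff_forall] using exists_nat_ge }
  · choose t ht using hA
    obtain rfl : (fun i ↦ Set.Iic (t i)) = A := funext ht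
    set t' : ι → ℝ := Function.extend Subtype.val t 0
    have t'_coe (i : s) : t' i = t i := Subtype.val_injective.extend_apply t 0 i
    have preimage_box : s.restrict ⁻¹' (Set.univ.pi fun i ↦ Set.Iic (t i)) =
        Set.pi s fun i ↦ Set.Iic (t' i) := by
      ext x
      simp only [Set.mem_preimage, Set.mem_pi, Finset.restrict, ← t'_coe, Subtype.forall,
        Finset.mem_coe, Set.mem_univ, forall_const]
    rw [Measure.map_apply (Finset.measurable_restrict s)
      (MeasurableSet.univ_pi fun _ ↦ measurableSet_Iic), preimage_box, h s t',
      ← Finset.prod_coe_sort]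
    simp only [t'_coe]

lemma IsCubeMeasure.ae_mem_Icc {ν : Measure (ℕ → ℝ)} (hν : IsCubeMeasure ν) :
    ∀ᵐ x ∂ν, ∀ i, x i ∈ Set.Icc (0 : ℝ) 1 := by
  have := hν.1
  refine ae_all_iff.2 fun i ↦ ?_
  have full : ∀ᵐ x ∂ν, ∀ j < i + 1, x j ∈ Set.Icc (0 : ℝ) 1 := by
    refine (mem_ae_iff_prob_eq_one (by measurability)).2 ?_
    simpa using hν.2 (i + 1) (fun _ ↦ 1) (by simp)
  filter_upwards [full] with x hx using hx i i.lt_succ_self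

lemma IsCubeMeasure.measure_pi_Iic {ν : Measure (ℕ → ℝ)} (hν : IsCubeMeasure ν) (s : Finset ℕ)
    (t : ℕ → ℝ) :
    ν (Set.pi s fun i ↦ Set.Iic (t i)) = ∏ i ∈ s, uniformUnit (Set.Iic (t i)) := by
  simp only [uniformUnit_Iic]
  by_cases ht : ∀ i ∈ s, 0 ≤ t i
  · obtain ⟨m, hm⟩ := s.exists_nat_subset_range
    set T : ℕ → ℝ := fun i ↦ if i ∈ s then min (t i) 1 else 1
    have hT (i : ℕ) : T i ∈ Set.Icc (0 : ℝ) 1 := by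
      by_cases hi : i ∈ s <;> simp [T, hi, ht]
    have box_ae_eq : (Set.pi s fun i ↦ Set.Iic (t i) : Set (ℕ → ℝ)) =ᵐ[ν]
        {x | ∀ i < m, x i ∈ Set.Icc 0 (T i)} := by
      filter_upwards [hν.ae_mem_Icc] with x hx
      refine propext ⟨fun h i _ ↦ ?_, fun h i hi ↦ ?_⟩
      · by_cases hi : i ∈ s
        · simpa [T, hi, (hx i).1, (hx i).2] using h i hi
        · simpa [T, hi] using hx i
      · have := (h i (Finset.mem_range.1 (hm hi))).2
        simp only [T, if_pos (Finset.mem_coe.1 hi)] at this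
        exact this.trans (min_le_left _ _)
    rw [measure_congr box_ae_eq, hν.2 m T hT, ← Finset.prod_subset hm fun i _ hi ↦ by simp [T, hi]]
    exact Finset.prod_congr rfl fun i hi ↦ by simp [T, hi]
  · push Not at ht
    obtain ⟨i, hi, hti⟩ := ht
    rw [Finset.prod_eq_zero hi (ENNReal.ofReal_of_nonpos (min_le_of_left_le hti.le))]
    refine measure_eq_zero_iff_ae_notMem.2 ?_
    filter_upwards [hν.ae_mem_Icc] with x hx h
    exact hti.not_ge ((hx i).1.trans (h i hi))

theorem IsCubeMeasure.eq_infinitePi {ν : Measure (ℕ → ℝ)} (hν : IsCubeMeasure ν) :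
    ν = Measure.infinitePi fun _ ↦ uniformUnit :=
  eq_infinitePi_of_Iic hν.measure_pi_Iic

end UniformMeasure

section Threshold

variable {α : Type*}

/-- The choice between two outcomes made by comparing a random number `u` with a threshold `c`:
if `u` is uniform on `[0,1]`, the outcome is `l` with probability `c` and `r` otherwise. -/
noncomputable def threshold (c : ℝ) (l r : α) (u : ℝ) : α := if u ≤ c then l else r

lemma measurableSet_threshold_eq (c : ℝ) (l r t : α) :
    MeasurableSet {u | threshold c l r u = t} := by
  let _ : MeasurableSpace α := ⊤
  exact (Measurable.ite measurableSet_Iic measurable_const measurable_const :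
    Measurable (threshold c l r)) (MeasurableSpace.measurableSet_top (s := {t}))

lemma uniformUnit_threshold_eq [DecidableEq α] {c : ℝ} (hc : c ∈ Set.Icc (0 : ℝ) 1) (l r t : α) :
    uniformUnit {u | threshold c l r u = t} =
      (if t = l then ENNReal.ofReal c else 0) + (if t = r then ENNReal.ofReal (1 - c) else 0) := by
  have below : uniformUnit (Set.Iic c) = ENNReal.ofReal c := by
    rw [uniformUnit_Iic, min_eq_left hc.2]
  have above : uniformUnit (Set.Iic c)ᶜ = ENNReal.ofReal (1 - c) := by
    rw [prob_compl_eq_one_sub measurableSet_Iic, below, ENNReal.ofReal_sub _ hc.1,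
      ENNReal.ofReal_one]
  have inter_below : {u | threshold c l r u = t} ∩ Set.Iic c = if t = l then Set.Iic c else ∅ := by
    ext u
    split_ifs with ht <;> by_cases hu : u ≤ c <;> simp [threshold, hu, ht, eq_comm (b := t)]
  have diff_below : {u | threshold c l r u = t} \ Set.Iic c =
      if t = r then (Set.Iic c)ᶜ else ∅ := by
    ext u
    split_ifs with ht <;> by_cases hu : u ≤ c <;>
      simp [threshold, hu, ht, eq_comm (b := t), -Set.compl_Iic]
  rw [← measure_inter_add_sdiff _ measurableSet_Iic, inter_below, diff_below]
  simp only [apply_ite uniformUnit, below, above, measure_empty]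

lemma uniformUnit_threshold_pmf (q : PMF (Fin 2)) (b : Fin 2) :
    uniformUnit {u | threshold (q 0).toReal 0 1 u = b} = q b := by
  have q_zero_le : (q 0).toReal ≤ 1 :=
    ENNReal.toReal_le_of_le_ofReal zero_le_one (by simpa using q.coe_le_one 0)
  have q_sum : q 0 + q 1 = 1 := by
    simpa only [tsum_fintype, Fin.sum_univ_two] using q.tsum_coe
  have q_one : q 1 = ENNReal.ofReal (1 - (q 0).toReal) := by
    rw [ENNReal.ofReal_sub _ ENNReal.toReal_nonneg, ENNReal.ofReal_one,
      ENNReal.ofReal_toReal (q.apply_ne_top 0), ← q_sum,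
      ENNReal.add_sub_cancel_left (q.apply_ne_top 0)]
  rw [uniformUnit_threshold_eq ⟨ENNReal.toReal_nonneg, q_zero_le⟩,
    ENNReal.ofReal_toReal (q.apply_ne_top 0), ← q_one]
  fin_cases b <;> simp

end Threshold

section Cylinder

lemma Cyl_ofFn {α : Type} (ρ : ℕ → α) (n : ℕ) :
    Cyl (List.ofFn fun i : Fin n ↦ ρ i) = PiNat.cylinder ρ n := by
  ext τ
  refine ⟨fun h i hi ↦ ?_, fun h i ↦ ?_⟩
  · simpa using h ⟨i, by simpa using hi⟩
  · simpa using h i (by simpa using i.2)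

lemma isPiSystem_cylinder {α : ℕ → Type*} :
    IsPiSystem {A | ∃ (ρ : ∀ n, α n) (n : ℕ), A = PiNat.cylinder ρ n} := by
  rintro _ ⟨ρ, m, rfl⟩ _ ⟨ρ', n, rfl⟩ ⟨τ, hm, hn⟩
  rw [← PiNat.mem_cylinder_iff_eq.1 hm, ← PiNat.mem_cylinder_iff_eq.1 hn]
  rcases le_total m n with h | h
  · exact ⟨τ, n, Set.inter_eq_right.2 (PiNat.cylinder_anti τ h)⟩
  · exact ⟨τ, m, Set.inter_eq_left.2 (PiNat.cylinder_anti τ h)⟩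

lemma measurableSet_cylinder {α : ℕ → Type*} [∀ n, MeasurableSpace (α n)]
    [∀ n, MeasurableSingletonClass (α n)] (ρ : ∀ n, α n) (n : ℕ) :
    MeasurableSet (PiNat.cylinder ρ n) := by
  rw [PiNat.cylinder_eq_pi]
  exact MeasurableSet.pi (Finset.countable_toSet _) fun i _ ↦ measurableSet_singleton (ρ i)

variable {α : ℕ → Type*} [∀ n, Countable (α n)] [∀ n, MeasurableSpace (α n)]
  [∀ n, DiscreteMeasurableSpace (α n)]

lemma pi_eq_generateFrom_cylinder :
    MeasurableSpace.pi =
      MeasurableSpace.generateFrom {A | ∃ (ρ : ∀ n, α n) (n : ℕ), A = PiNat.cylinder ρ n} := by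
  let _ (n : ℕ) : TopologicalSpace (α n) := ⊥
  have _ (n : ℕ) : DiscreteTopology (α n) := ⟨rfl⟩
  rw [BorelSpace.measurable_eq (α := ∀ n, α n)]
  exact (PiNat.isTopologicalBasis_cylinders α).borel_eq_generateFrom

lemma ext_of_cylinder {μ ν : Measure (∀ n, α n)} [IsFiniteMeasure μ]
    (h : ∀ ρ n, μ (PiNat.cylinder ρ n) = ν (PiNat.cylinder ρ n)) : μ = ν := by
  refine ext_of_generate_finite _ pi_eq_generateFrom_cylinder isPiSystem_cylinder
    (by rintro _ ⟨ρ, n, rfl⟩; exact h ρ n) ?_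
  rcases isEmpty_or_nonempty (∀ n, α n) with _ | ⟨⟨ρ⟩⟩
  · simp [Set.univ_eq_empty_iff.2 ‹_›]
  · simpa using h ρ 0

end Cylinder

section History

/-- The states `[s₀, …, s_n]` visited by the play `ρ`; the list has length `n + 1`. -/
def history (ρ : ℕ → S × Fin 2) (n : ℕ) : List S := List.ofFn fun i : Fin (n + 1) ↦ (ρ i).1

lemma history_zero (ρ : ℕ → S × Fin 2) : history ρ 0 = [(ρ 0).1] := by
  simp [history]

lemma history_succ (ρ : ℕ → S × Fin 2) (n : ℕ) :
    history ρ (n + 1) = history ρ n ++ [(ρ (n + 1)).1] := by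
  rw [history, List.ofFn_succ_last]
  rfl

lemma history_succ_eq_cons (ρ : ℕ → S × Fin 2) (n : ℕ) :
    history ρ (n + 1) = (ρ 0).1 :: history (fun i ↦ ρ (i + 1)) n := by
  rw [history, List.ofFn_succ]
  rfl

lemma history_congr {ρ τ : ℕ → S × Fin 2} {n : ℕ} (h : τ ∈ PiNat.cylinder ρ (n + 1)) :
    history τ n = history ρ n :=
  congrArg List.ofFn (funext fun i ↦ congrArg Prod.fst (h i i.2))

end History

section Law

variable (δ : S → Fin 2 → PMF S) (σ : List S → PMF (Fin 2))

lemma saProb_ofFn (hist : List S) (ρ : ℕ → S × Fin 2) (n : ℕ) :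
    saProb δ σ hist (ρ 0).1 (ρ 0).2 (List.ofFn fun i : Fin n ↦ ρ (i + 1)) =
      ∏ i ∈ Finset.range n, δ (ρ i).1 (ρ i).2 (ρ (i + 1)).1 *
        σ (hist ++ history ρ (i + 1)) (ρ (i + 1)).2 := by
  induction n generalizing hist ρ with
  | zero => simp [saProb]
  | succ n ih =>
    have first_step : List.ofFn (fun i : Fin (n + 1) ↦ ρ (i + 1)) =
        ((ρ 1).1, (ρ 1).2) :: List.ofFn fun i : Fin n ↦ ρ (i + 1 + 1) := by
      simp [List.ofFn_succ]
    rw [first_step, saProb, ih (hist ++ [(ρ 0).1]) (fun i ↦ ρ (i + 1)), Finset.prod_range_succ',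
      mul_comm]
    simp only [history_succ_eq_cons ρ, history_zero, List.append_assoc, List.singleton_append]

variable {δ σ}

lemma IsSALaw.measure_cylinder [MeasurableSpace S] [DecidableEq S] {sStar : S}
    {μ : Measure (ℕ → S × Fin 2)} (hμ : IsSALaw δ σ sStar μ) (ρ : ℕ → S × Fin 2) (n : ℕ) :
    μ (PiNat.cylinder ρ (n + 1)) =
      if (ρ 0).1 = sStar then
        (∏ i ∈ Finset.range (n + 1), σ (history ρ i) (ρ i).2) *
          ∏ i ∈ Finset.range n, δ (ρ i).1 (ρ i).2 (ρ (i + 1)).1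
      else 0 := by
  have prefix_cons : List.ofFn (fun i : Fin (n + 1) ↦ ρ i) =
      ((ρ 0).1, (ρ 0).2) :: List.ofFn fun i : Fin n ↦ ρ (i + 1) := by
    simp [List.ofFn_succ]
  rw [← Cyl_ofFn, hμ.2, prefix_cons]
  simp only [saProb_ofFn, List.nil_append, Finset.prod_mul_distrib, Finset.prod_range_succ' _ n,
    history_zero]
  split_ifs
  · ring
  · simp only [zero_mul]

end Law

section Simulation

variable (σ : List S → PMF (Fin 2)) (L R : S → Fin 2 → S) (p : S → Fin 2 → ℝ)

/-- The action that the simulation selects after the history `h`, given the random number `u`. -/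
noncomputable def drawAction (h : List S) (u : ℝ) : Fin 2 := threshold (σ h 0).toReal 0 1 u

/-- The successor that the simulation selects for the state–action pair `v`, given the random
number `u`. -/
noncomputable def drawState (v : S × Fin 2) (u : ℝ) : S :=
  threshold (p v.1 v.2) (L v.1 v.2) (R v.1 v.2) u

lemma measurableSet_drawAction_eq (h : List S) (b : Fin 2) :
    MeasurableSet {u | drawAction σ h u = b} :=
  measurableSet_threshold_eq _ _ _ _

lemma measurableSet_drawState_eq (v : S × Fin 2) (t : S) :
    MeasurableSet {u | drawState L R p v u = t} :=
  measurableSet_threshold_eq _ _ _ _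

lemma uniformUnit_drawAction_eq (h : List S) (b : Fin 2) :
    uniformUnit {u | drawAction σ h u = b} = σ h b :=
  uniformUnit_threshold_pmf _ _

variable {L R p} in
lemma uniformUnit_drawState_eq [DecidableEq S] {δ : S → Fin 2 → PMF S}
    (hp : ∀ s a, p s a ∈ Set.Icc (0 : ℝ) 1)
    (hbr : ∀ s a t, δ s a t =
      (if t = L s a then ENNReal.ofReal (p s a) else 0) +
        (if t = R s a then ENNReal.ofReal (1 - p s a) else 0))
    (v : S × Fin 2) (t : S) :
    uniformUnit {u | drawState L R p v u = t} = δ v.1 v.2 t := by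
  rw [hbr]
  exact uniformUnit_threshold_eq (hp _ _) _ _ _

variable (sStar : S)

lemma playMap_zero_fst (x y : ℕ → ℝ) : (playMap σ L R p sStar x y 0).1 = sStar := rfl

lemma playMap_succ_fst (x y : ℕ → ℝ) (n : ℕ) :
    (playMap σ L R p sStar x y (n + 1)).1 =
      drawState L R p (playMap σ L R p sStar x y n) (y n) := by
  simp [playMap, hseq, drawState, threshold]

lemma hseq_eq_history (x y : ℕ → ℝ) (n : ℕ) :
    hseq σ L R p sStar x y n = history (playMap σ L R p sStar x y) n := by
  induction n with
  | zero => rfl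
  | succ n ih =>
    rw [history_succ, ← ih, playMap_succ_fst]
    rfl

lemma playMap_snd (x y : ℕ → ℝ) (n : ℕ) :
    (playMap σ L R p sStar x y n).2 =
      drawAction σ (history (playMap σ L R p sStar x y) n) (x n) := by
  simp only [playMap, drawAction, threshold, hseq_eq_history,
    ENNReal.ofReal_le_iff_le_toReal (PMF.apply_ne_top _ _)]

lemma playMap_mem_cylinder_iff (ρ : ℕ → S × Fin 2) (n : ℕ) (x y : ℕ → ℝ) :
    playMap σ L R p sStar x y ∈ PiNat.cylinder ρ (n + 1) ↔
      (ρ 0).1 = sStar ∧ (∀ i < n + 1, drawAction σ (history ρ i) (x i) = (ρ i).2) ∧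
        ∀ i < n, drawState L R p (ρ i) (y i) = (ρ (i + 1)).1 := by
  induction n with
  | zero =>
    simp only [PiNat.mem_cylinder_iff, Nat.forall_lt_succ_right, Nat.not_lt_zero,
      IsEmpty.forall_iff, forall_const, true_and, and_true, Prod.ext_iff, playMap_zero_fst,
      playMap_snd, history_zero, eq_comm (a := sStar)]
    exact and_congr_right fun h ↦ by rw [h]
  | succ n ih =>
    have next_eq_iff (h : playMap σ L R p sStar x y ∈ PiNat.cylinder ρ (n + 1)) :
        playMap σ L R p sStar x y (n + 1) = ρ (n + 1) ↔
          drawAction σ (history ρ (n + 1)) (x (n + 1)) = (ρ (n + 1)).2 ∧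
            drawState L R p (ρ n) (y n) = (ρ (n + 1)).1 := by
      rw [Prod.ext_iff, playMap_snd, history_succ, history_congr h, playMap_succ_fst,
        h n n.lt_succ_self, and_comm]
      exact and_congr_left fun hs ↦ by rw [history_succ, hs]
    have cylinder_succ : playMap σ L R p sStar x y ∈ PiNat.cylinder ρ (n + 1 + 1) ↔
        playMap σ L R p sStar x y ∈ PiNat.cylinder ρ (n + 1) ∧
          playMap σ L R p sStar x y (n + 1) = ρ (n + 1) :=
      Nat.forall_lt_succ_right
    rw [cylinder_succ, and_congr_right next_eq_iff, ih]
    simp only [Nat.forall_lt_succ_right]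
    tauto

lemma preimage_playMap_cylinder (ρ : ℕ → S × Fin 2) (n : ℕ) :
    (fun q : (ℕ → ℝ) × (ℕ → ℝ) ↦ playMap σ L R p sStar q.1 q.2) ⁻¹' PiNat.cylinder ρ (n + 1) =
      {_q | (ρ 0).1 = sStar} ∩
        (Set.pi (Finset.range (n + 1)) fun i ↦ {u | drawAction σ (history ρ i) u = (ρ i).2}) ×ˢ
          (Set.pi (Finset.range n) fun i ↦ {u | drawState L R p (ρ i) u = (ρ (i + 1)).1}) := by
  ext ⟨x, y⟩
  simpa using playMap_mem_cylinder_iff σ L R p sStar ρ n x y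

lemma measurable_playMap [Countable S] [MeasurableSpace S] [DiscreteMeasurableSpace S] :
    Measurable fun q : (ℕ → ℝ) × (ℕ → ℝ) ↦ playMap σ L R p sStar q.1 q.2 := by
  rw [pi_eq_generateFrom_cylinder (α := fun _ ↦ S × Fin 2)]
  refine measurable_generateFrom ?_
  rintro _ ⟨ρ, _ | n, rfl⟩
  · simp
  · rw [preimage_playMap_cylinder]
    have action_box := MeasurableSet.pi (Finset.range (n + 1)).countable_toSet
      fun i _ ↦ measurableSet_drawAction_eq σ (history ρ i) (ρ i).2
    have state_box := MeasurableSet.pi (Finset.range n).countable_toSet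
      fun i _ ↦ measurableSet_drawState_eq L R p (ρ i) (ρ (i + 1)).1
    exact (MeasurableSet.const _).inter (action_box.prod state_box)

variable {L R p} {δ : S → Fin 2 → PMF S}

lemma infinitePi_prod_preimage_playMap_cylinder [DecidableEq S]
    (hp : ∀ s a, p s a ∈ Set.Icc (0 : ℝ) 1)
    (hbr : ∀ s a t, δ s a t =
      (if t = L s a then ENNReal.ofReal (p s a) else 0) +
        (if t = R s a then ENNReal.ofReal (1 - p s a) else 0))
    (ρ : ℕ → S × Fin 2) (n : ℕ) :
    ((Measure.infinitePi fun _ ↦ uniformUnit).prod (Measure.infinitePi fun _ ↦ uniformUnit))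
        ((fun q : (ℕ → ℝ) × (ℕ → ℝ) ↦ playMap σ L R p sStar q.1 q.2) ⁻¹'
          PiNat.cylinder ρ (n + 1)) =
      if (ρ 0).1 = sStar then
        (∏ i ∈ Finset.range (n + 1), σ (history ρ i) (ρ i).2) *
          ∏ i ∈ Finset.range n, δ (ρ i).1 (ρ i).2 (ρ (i + 1)).1
      else 0 := by
  rw [preimage_playMap_cylinder]
  split_ifs with h
  · have start_eq : {_q : (ℕ → ℝ) × (ℕ → ℝ) | (ρ 0).1 = sStar} = Set.univ := by simp [h]
    rw [start_eq, Set.univ_inter, Measure.prod_prod,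
      Measure.infinitePi_pi _ fun _ _ ↦ measurableSet_drawAction_eq _ _ _,
      Measure.infinitePi_pi _ fun _ _ ↦ measurableSet_drawState_eq _ _ _ _ _]
    simp only [uniformUnit_drawAction_eq, uniformUnit_drawState_eq hp hbr]
  · simp [h]

end Simulation

theorem stmt_9_general {S : Type} [Countable S] [DecidableEq S]
    [MeasurableSpace S] [DiscreteMeasurableSpace S]
    (δ : S → Fin 2 → PMF S) (L R : S → Fin 2 → S) (p : S → Fin 2 → ℝ)
    (hp : ∀ s a, p s a ∈ Set.Icc (0 : ℝ) 1)
    (hbr : ∀ s a t, δ s a t =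
      (if t = L s a then ENNReal.ofReal (p s a) else 0) +
        (if t = R s a then ENNReal.ofReal (1 - p s a) else 0))
    (sStar : S) (σ : List S → PMF (Fin 2))
    (ν : Measure (ℕ → ℝ)) (hν : IsCubeMeasure ν)
    (μ : Measure (ℕ → S × Fin 2)) (hμ : IsSALaw δ σ sStar μ) :
    Measurable (fun q : (ℕ → ℝ) × (ℕ → ℝ) => playMap σ L R p sStar q.1 q.2) ∧
    Measure.map (fun q : (ℕ → ℝ) × (ℕ → ℝ) => playMap σ L R p sStar q.1 q.2) (ν.prod ν) =
      μ := by
  obtain rfl := hν.eq_infinitePi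
  have := hμ.1
  have play_measurable := measurable_playMap σ L R p sStar
  have := Measure.isProbabilityMeasure_map (μ := (Measure.infinitePi fun _ : ℕ ↦ uniformUnit).prod
    (Measure.infinitePi fun _ : ℕ ↦ uniformUnit)) play_measurable.aemeasurable
  refine ⟨play_measurable, ext_of_cylinder (α := fun _ ↦ S × Fin 2) fun ρ n ↦ ?_⟩
  rcases n with _ | n
  · simp only [PiNat.cylinder_zero, measure_univ]
  · rw [Measure.map_apply play_measurable (measurableSet_cylinder ρ _),
      infinitePi_prod_preimage_playMap_cylinder σ sStar hp hbr, hμ.measure_cylinder]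

theorem stmt_9 {S O : Type} [Fintype S] [Nonempty S] [Fintype O] [DecidableEq S]
    [MeasurableSpace S] [DiscreteMeasurableSpace S]
    (δ : S → Fin 2 → PMF S) (obs : S → O)
    (L R : S → Fin 2 → S) (p : S → Fin 2 → ℝ)
    (hp : ∀ s a, p s a ∈ Set.Icc (0 : ℝ) 1)
    -- binary branching: `δ s a = p s a · Dirac (L s a) + (1 − p s a) · Dirac (R s a)`
    (hbr : ∀ s a t, δ s a t =
      (if t = L s a then ENNReal.ofReal (p s a) else 0) +
        (if t = R s a then ENNReal.ofReal (1 - p s a) else 0))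
    (sStar : S) (σ : List S → PMF (Fin 2))
    (ν : Measure (ℕ → ℝ)) (hν : IsCubeMeasure ν)
    (μ : Measure (ℕ → S × Fin 2)) (hμ : IsSALaw δ σ sStar μ) :
    Measurable (fun q : (ℕ → ℝ) × (ℕ → ℝ) => playMap σ L R p sStar q.1 q.2) ∧
    Measure.map (fun q : (ℕ → ℝ) × (ℕ → ℝ) => playMap σ L R p sStar q.1 q.2) (ν.prod ν) =
      μ := by
  exact stmt_9_general δ L R p hp hbr sStar σ ν hν μ hμ

end Stmt9
end

section
/- Let (S, A, δ, obs) be a POMDP, let s* be an initial state, and let φ ⊆ S^ω be a measurable objective. Then the supremum over all randomized observation-based strategies σ of Pr_{s*}^σ(φ) equals the supremum over all pure observation-based strategies σ of Pr_{s*}^σ(φ). -/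
open MeasureTheory
open scoped ENNReal

namespace Stmt11

variable {S A O : Type}

/-- The cylinder set of infinite plays extending the finite prefix `l`. -/
def Cyl (l : List S) : Set (ℕ → S) := {ρ | ∀ i : Fin l.length, ρ i.1 = l.get i}

/-- Probability of observing the successive states `rest` after the history `hist ++ [cur]`,
when actions are drawn according to the strategy `σ` and states according to `δ`. -/
noncomputable def listProb [Fintype A] (δ : S → A → PMF S) (σ : List S → PMF A) :
    List S → S → List S → ℝ≥0∞
  | _, _, [] => 1
  | hist, cur, s' :: rest =>
      (∑' a, σ (hist ++ [cur]) a * δ cur a s') * listProb δ σ (hist ++ [cur]) s' rest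

/-- `Pr` is the family of Ionescu–Tulcea play measures of the POMDP with transitions `δ`:
`Pr s σ` is a probability measure on `S^ω` (product σ-algebra, `S` discrete), and the
probability of the cylinder of plays starting with `s :: l` is the product of the
one-step transition probabilities under the strategy `σ`. -/
def IsPlayMeasure [Fintype A] [MeasurableSpace S] (δ : S → A → PMF S)
    (Pr : S → (List S → PMF A) → Measure (ℕ → S)) : Prop :=
  (∀ s σ, IsProbabilityMeasure (Pr s σ)) ∧
    ∀ s σ (l : List S), Pr s σ (Cyl (s :: l)) = listProb δ σ [] s l

/-- A strategy is observation-based if it only depends on the observation sequence. -/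
def ObsBased (obs : S → O) (σ : List S → PMF A) : Prop :=
  ∀ h h' : List S, h.map obs = h'.map obs → σ h = σ h'

/-- A strategy is pure if it always plays a Dirac distribution. -/
def IsPure (σ : List S → PMF A) : Prop := ∀ h, ∃ a, σ h = PMF.pure a

/-!
Kuhn's argument. An observation-based strategy is a map `τ : List O → PMF A` precomposed with
`List.map obs`. Instead of randomizing during the play, draw a whole choice function
`f : List O → A` beforehand from the product measure `⨂ w, τ w`, and play `f` deterministically.
Along a fixed play the observed prefixes have increasing lengths, hence are pairwise distinct, so
the successive choices of `f` are independent and every cylinder keeps its probability. The play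
measure of `τ` is therefore a mixture of play measures of pure strategies, and an average never
exceeds all of the averaged values.
-/

section ProductMeasure

lemma lintegral_prod_eval_infinitePi {ι κ : Type*} [Fintype κ] {X : ι → Type*}
    [∀ i, MeasurableSpace (X i)] (μ : ∀ i, Measure (X i)) [∀ i, IsProbabilityMeasure (μ i)]
    {e : κ → ι} (he : e.Injective) {g : ∀ k, X (e k) → ℝ≥0∞} (hg : ∀ k, Measurable (g k)) :
    ∫⁻ x, ∏ k, g k (x (e k)) ∂Measure.infinitePi μ = ∏ k, ∫⁻ y, g k y ∂μ (e k) := by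
  have hcoord : ProbabilityTheory.iIndepFun (fun i (x : ∀ i, X i) ↦ x i) (Measure.infinitePi μ) :=
    ProbabilityTheory.iIndepFun_infinitePi (X := fun _ y ↦ y) fun _ ↦ measurable_id
  refine (ProbabilityTheory.lintegral_prod_eq_prod_lintegral_of_indepFun _ _
    ((hcoord.precomp he).comp g hg) fun k ↦ (hg k).comp (measurable_pi_apply (e k))).trans ?_
  exact Finset.prod_congr rfl fun k _ ↦
    (measurePreserving_eval_infinitePi μ (e k)).lintegral_comp (hg k)

lemma lintegral_toMeasure_eq_bind_apply {α β : Type*} [Countable α] [MeasurableSpace α]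
    [MeasurableSingletonClass α] (p : PMF α) (q : α → PMF β) (b : β) :
    ∫⁻ a, q a b ∂p.toMeasure = p.bind q b := by
  rw [lintegral_countable', PMF.bind_apply]
  exact tsum_congr fun a ↦ by
    rw [p.toMeasure_apply_singleton a (measurableSet_singleton a), mul_comm]

end ProductMeasure

section Cylinders

lemma cyl_nil : Cyl ([] : List S) = Set.univ :=
  Set.eq_univ_of_forall fun _ i ↦ i.elim0

lemma cyl_subset_cyl_of_mem {l l' : List S} {ρ : ℕ → S} (hρ : ρ ∈ Cyl l) (hρ' : ρ ∈ Cyl l')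
    (hle : l.length ≤ l'.length) : Cyl l' ⊆ Cyl l := fun ρ₁ hρ₁ i ↦
  calc ρ₁ i = l'.get (i.castLE hle) := hρ₁ (i.castLE hle)
    _ = ρ i := (hρ' (i.castLE hle)).symm
    _ = l.get i := hρ i

lemma isPiSystem_range_cyl : IsPiSystem (Set.range (Cyl : List S → Set (ℕ → S))) := by
  rintro _ ⟨l, rfl⟩ _ ⟨l', rfl⟩ ⟨ρ, hρ, hρ'⟩
  rcases le_total l.length l'.length with hle | hle
  · exact ⟨l', (Set.inter_eq_right.2 (cyl_subset_cyl_of_mem hρ hρ' hle)).symm⟩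
  · exact ⟨l, (Set.inter_eq_left.2 (cyl_subset_cyl_of_mem hρ' hρ hle)).symm⟩

lemma preimage_eval_eq_iUnion_cyl (n : ℕ) (s : S) :
    (fun ρ : ℕ → S ↦ ρ n) ⁻¹' {s} = ⋃ l : {l : List S // l[n]? = some s}, Cyl l.1 := by
  ext ρ
  simp only [Set.mem_preimage, Set.mem_singleton_iff, Set.mem_iUnion]
  constructor
  · rintro rfl
    exact ⟨⟨List.ofFn fun i : Fin (n + 1) ↦ ρ i, by simp [-List.ofFn_succ]⟩,
      fun i ↦ by simp [-List.ofFn_succ]⟩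
  · rintro ⟨⟨l, hl⟩, hρ⟩
    obtain ⟨hn, rfl⟩ := List.getElem?_eq_some_iff.1 hl
    exact hρ ⟨n, hn⟩

variable [MeasurableSpace S]

lemma measurableSet_cyl [MeasurableSingletonClass S] (l : List S) : MeasurableSet (Cyl l) := by
  have hinter : Cyl l = ⋂ i : Fin l.length, (fun ρ : ℕ → S ↦ ρ i) ⁻¹' {l.get i} := by
    ext ρ
    simp [Cyl]
  rw [hinter]
  exact .iInter fun i ↦ measurable_pi_apply i.1 (measurableSet_singleton (l.get i))

variable [Countable S] [DiscreteMeasurableSpace S]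

lemma generateFrom_range_cyl :
    (MeasurableSpace.pi : MeasurableSpace (ℕ → S)) =
      MeasurableSpace.generateFrom (Set.range Cyl) := by
  refine le_antisymm (iSup_le fun n ↦ measurable_iff_comap_le.1 ?_)
    (MeasurableSpace.generateFrom_le (Set.forall_mem_range.2 measurableSet_cyl))
  refine @measurable_to_countable' _ _ _ _ (_) _ fun s ↦ ?_
  rw [preimage_eval_eq_iUnion_cyl]
  exact .iUnion fun l ↦ MeasurableSpace.measurableSet_generateFrom ⟨l.1, rfl⟩

lemma measure_ext_of_cyl {μ ν : Measure (ℕ → S)} [IsFiniteMeasure μ]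
    (h : ∀ l, μ (Cyl l) = ν (Cyl l)) : μ = ν :=
  ext_of_generate_finite _ generateFrom_range_cyl isPiSystem_range_cyl
    (Set.forall_mem_range.2 h) (by simpa only [cyl_nil] using h [])

end Cylinders

section Strategies

lemma ObsBased.exists_eq_comp {obs : S → O} {σ : List S → PMF A} (hσ : ObsBased obs σ) :
    ∃ τ : List O → PMF A, σ = τ ∘ List.map obs :=
  have : Nonempty (PMF A) := ⟨σ []⟩
  (Function.factorsThrough_iff σ).1 fun h h' ↦ hσ h h'

/-- The pure observation-based strategy that follows the choice function `f`. -/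
noncomputable def pureStrategy (obs : S → O) (f : List O → A) : List S → PMF A :=
  fun h ↦ PMF.pure (f (h.map obs))

lemma obsBased_pureStrategy (obs : S → O) (f : List O → A) : ObsBased obs (pureStrategy obs f) :=
  fun _ _ h ↦ congrArg (fun w ↦ PMF.pure (f w)) h

lemma isPure_pureStrategy (obs : S → O) (f : List O → A) : IsPure (pureStrategy obs f) :=
  fun _ ↦ ⟨_, rfl⟩

/-- The law of a choice function whose value at each observation sequence `w` is drawn
independently from `τ w`: the mixed strategy equivalent to the behavioural strategy `τ`. -/
noncomputable def choiceMeasure [MeasurableSpace A] (τ : List O → PMF A) :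
    Measure (List O → A) :=
  Measure.infinitePi fun w ↦ (τ w).toMeasure

instance [MeasurableSpace A] (τ : List O → PMF A) : IsProbabilityMeasure (choiceMeasure τ) :=
  inferInstanceAs (IsProbabilityMeasure (Measure.infinitePi _))

end Strategies

section CylinderProbabilities

variable [Fintype A] (δ : S → A → PMF S) (obs : S → O)

lemma listProb_eq_prod (σ : List S → PMF A) (hist : List S) (cur : S) (rest : List S) :
    listProb δ σ hist cur rest = ∏ i : Fin rest.length,
      (σ (hist ++ (cur :: rest).take (i + 1))).bind (δ ((cur :: rest).get i.castSucc))
        (rest.get i) := by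
  induction rest generalizing hist cur with
  | nil => rfl
  | cons next rest ih =>
    rw [listProb, ih]
    simp [Fin.prod_univ_succ, PMF.bind_apply]

lemma listProb_pureStrategy (f : List O → A) (s : S) (l : List S) :
    listProb δ (pureStrategy obs f) [] s l = ∏ i : Fin l.length,
      δ ((s :: l).get i.castSucc) (f (((s :: l).take (i + 1)).map obs)) (l.get i) := by
  simp only [listProb_eq_prod, pureStrategy, PMF.pure_bind, List.nil_append]

lemma injective_map_take_succ (s : S) (l : List S) :
    Function.Injective fun i : Fin l.length ↦ ((s :: l).take (i + 1)).map obs := by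
  intro i j hij
  have hlength := congrArg List.length hij
  simp only [List.length_map, List.length_take, List.length_cons] at hlength
  omega

variable [MeasurableSpace A] [DiscreteMeasurableSpace A]

lemma measurable_listProb_pureStrategy (s : S) (l : List S) :
    Measurable fun f : List O → A ↦ listProb δ (pureStrategy obs f) [] s l := by
  simp only [listProb_pureStrategy]
  exact Finset.measurable_fun_prod _ fun i _ ↦
    (Measurable.of_discrete (f := fun a ↦ δ _ a (l.get i))).comp (measurable_pi_apply _)

lemma lintegral_listProb_pureStrategy (τ : List O → PMF A) (s : S) (l : List S) :
    ∫⁻ f, listProb δ (pureStrategy obs f) [] s l ∂choiceMeasure τ =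
      listProb δ (τ ∘ List.map obs) [] s l := by
  simp only [listProb_pureStrategy]
  refine (lintegral_prod_eval_infinitePi (fun w ↦ (τ w).toMeasure)
    (injective_map_take_succ obs s l)
    (g := fun i a ↦ δ ((s :: l).get i.castSucc) a (l.get i)) fun _ ↦ .of_discrete).trans ?_
  simp only [lintegral_toMeasure_eq_bind_apply, listProb_eq_prod, Function.comp_apply,
    List.nil_append]

end CylinderProbabilities

namespace IsPlayMeasure

variable [Fintype A] [MeasurableSpace S] {δ : S → A → PMF S}
  {Pr : S → (List S → PMF A) → Measure (ℕ → S)}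

lemma apply_cyl_cons [MeasurableSingletonClass S] (hPr : IsPlayMeasure δ Pr) (s t : S)
    (σ : List S → PMF A) (l : List S) :
    Pr s σ (Cyl (t :: l)) = PMF.pure s t * listProb δ σ [] t l := by
  have := hPr.1 s σ
  rcases eq_or_ne t s with rfl | hts
  · rw [hPr.2, PMF.pure_apply_self, one_mul]
  · rw [PMF.pure_apply_of_ne s t hts, zero_mul]
    have hcompl : Pr s σ (Cyl [s])ᶜ = 0 :=
      (prob_compl_eq_zero_iff (measurableSet_cyl _)).2 (hPr.2 s σ [])
    refine measure_mono_null (Set.subset_compl_iff_disjoint_right.2 ?_) hcompl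
    exact Set.disjoint_left.2 fun ρ hρt hρs ↦
      hts ((hρt ⟨0, Nat.succ_pos _⟩).symm.trans (hρs ⟨0, Nat.succ_pos _⟩))

variable [Countable S] [DiscreteMeasurableSpace S]

section Mixture

variable [MeasurableSpace A] [DiscreteMeasurableSpace A] (obs : S → O)

lemma measurable_pureStrategy (hPr : IsPlayMeasure δ Pr) (s : S) :
    Measurable fun f : List O → A ↦ Pr s (pureStrategy obs f) := by
  have := hPr.1 s
  refine .measure_of_isPiSystem_of_isProbabilityMeasure generateFrom_range_cyl
    isPiSystem_range_cyl (Set.forall_mem_range.2 fun l ↦ ?_)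
  cases l with
  | nil => simp only [cyl_nil, measure_univ, measurable_const]
  | cons t l =>
    simp only [hPr.apply_cyl_cons]
    exact (measurable_listProb_pureStrategy δ obs t l).const_mul _

theorem eq_bind_pureStrategy (hPr : IsPlayMeasure δ Pr) (s : S) (τ : List O → PMF A) :
    Pr s (τ ∘ List.map obs) = (choiceMeasure τ).bind fun f ↦ Pr s (pureStrategy obs f) := by
  have := hPr.1 s
  refine measure_ext_of_cyl fun l ↦ ?_
  rw [Measure.bind_apply (measurableSet_cyl l) (hPr.measurable_pureStrategy obs s).aemeasurable]
  cases l with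
  | nil => simp only [cyl_nil, measure_univ, lintegral_const, mul_one]
  | cons t l =>
    simp only [hPr.apply_cyl_cons]
    rw [lintegral_const_mul _ (measurable_listProb_pureStrategy δ obs t l),
      lintegral_listProb_pureStrategy]

end Mixture

theorem exists_isPure_le {obs : S → O} {σ : List S → PMF A} {φ : Set (ℕ → S)}
    (hPr : IsPlayMeasure δ Pr) (s : S) (hσ : ObsBased obs σ) (hφ : MeasurableSet φ) :
    ∃ σ', (ObsBased obs σ' ∧ IsPure σ') ∧ Pr s σ φ ≤ Pr s σ' φ := by
  let _ : MeasurableSpace A := ⊤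
  have := hPr.1 s
  obtain ⟨τ, rfl⟩ := hσ.exists_eq_comp
  have hmeas := (hPr.measurable_pureStrategy obs s).aemeasurable (μ := choiceMeasure τ)
  have hmix : Pr s (τ ∘ List.map obs) φ =
      ∫⁻ f, Pr s (pureStrategy obs f) φ ∂choiceMeasure τ := by
    rw [hPr.eq_bind_pureStrategy obs s τ, Measure.bind_apply hφ hmeas]
  obtain ⟨f, hf⟩ := exists_lintegral_le (hmix ▸ measure_ne_top _ _)
  exact ⟨pureStrategy obs f, ⟨obsBased_pureStrategy obs f, isPure_pureStrategy obs f⟩,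
    hmix.trans_le hf⟩

end IsPlayMeasure

theorem stmt_11_general {S A O : Type} [Countable S] [Fintype A]
    [MeasurableSpace S] [DiscreteMeasurableSpace S]
    (δ : S → A → PMF S) (obs : S → O)
    (Pr : S → (List S → PMF A) → Measure (ℕ → S)) (hPr : IsPlayMeasure δ Pr)
    (sStar : S) (φ : Set (ℕ → S)) (hφ : MeasurableSet φ) :
    (⨆ σ : {σ : List S → PMF A // ObsBased obs σ}, Pr sStar σ.1 φ) =
      ⨆ σ : {σ : List S → PMF A // ObsBased obs σ ∧ IsPure σ}, Pr sStar σ.1 φ := by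
  refine le_antisymm (iSup_mono' fun ⟨σ, hσ⟩ ↦ ?_) (iSup_mono' fun ⟨σ, hσ, _⟩ ↦ ⟨⟨σ, hσ⟩, le_rfl⟩)
  obtain ⟨σ', hσ', hle⟩ := hPr.exists_isPure_le sStar hσ hφ
  exact ⟨⟨σ', hσ'⟩, hle⟩

theorem stmt_11 {S A O : Type} [Fintype S] [Nonempty S] [Fintype A] [Nonempty A] [Fintype O]
    [MeasurableSpace S] [DiscreteMeasurableSpace S]
    (δ : S → A → PMF S) (obs : S → O)
    (Pr : S → (List S → PMF A) → Measure (ℕ → S)) (hPr : IsPlayMeasure δ Pr)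
    (sStar : S) (φ : Set (ℕ → S)) (hφ : MeasurableSet φ) :
    (⨆ σ : {σ : List S → PMF A // ObsBased obs σ}, Pr sStar σ.1 φ) =
      ⨆ σ : {σ : List S → PMF A // ObsBased obs σ ∧ IsPure σ}, Pr sStar σ.1 φ :=
  stmt_11_general δ obs Pr hPr sStar φ hφ

end Stmt11
end
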